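/- arXiv:1107.0323 — 2 statements merged into one kernel-verified Lean document; each statement's English description precedes it below -/
import Mathlib

section
/- For every λ ∈ (0,1], if u : (0,∞) → ℝ is twice continuously differentiable, satisfies −u''(r) − (2/r)·u'(r) + (1 − λ − Q(r)²)·u(r) = 0 for all r > 0, u is bounded on (0,1], and the function r ↦ r·u(r) is bounded on [1,∞), then u is identically zero. (This expresses that the radial operator L₋ = −d²/dr² − (2/r)·d/dr + 1 − Q² has no eigenvalue and no threshold resonance in the interval (0,1].) -/
open Real Set Filter MeasureTheory

/-! Write `w = r u` and `v = r (Q - 1)`. In one dimension the equations read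
`w'' = (1 - λ - Q²) w` and, since `Q - Q³ = -Q (Q + 1) (Q - 1)`, also `v'' = -(Q² + Q) v`.
The potential of `v` is the more attractive one, so `v` is a Sturm comparison function for `w`,
and it is explicit: it vanishes exactly where `Q = 1`.

* `w` has a zero `r₁`: otherwise the Wronskian of `w` with the positive solution `r Q` of
  `P'' = (1 - Q²) P` is strictly monotone, which forces `w / (r Q)` to change sign
  (`IsSol.exists_nonpos`).
* The energy `Q'² / 2 - Q² / 2 + Q⁴ / 4` is nonincreasing and nonnegative, so a critical value of
  `Q` is at least `√2`. Hence `Q` decreases wherever `Q ≤ 1` (`GroundState.deriv_neg`), and `v` is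
  positive and then negative.
* With `X = v w' - v' w`, the function `F = w X / v` satisfies
  `F' = (X / v)² + (1 - λ + Q) w² ≥ 0` wherever `v ≠ 0`. If `Q r₁ > 1`, then `v > 0` on `(0, r₁]`
  and `F` vanishes at `0` and at `r₁`, so `w = 0` on `(0, r₁)`. If `Q r₁ ≤ 1`, then `v < 0` on
  `(r₁, ∞)` and `F ≥ 0` there, so `(w / v)²` is nondecreasing; it tends to `0` at infinity because
  `w` is bounded while `v ∼ -r`, so `w = 0` on `(r₁, ∞)`.

In both cases uniqueness for the linear equation gives `w = 0` everywhere. -/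

/-! ### Calculus and linear second order equations on the half-line -/

lemma monoOn_of_hasDerivAt {D : Set ℝ} (hD : Convex ℝ D) {f f' : ℝ → ℝ}
    (hf : ∀ x ∈ D, HasDerivAt f (f' x) x) (h0 : ∀ x ∈ D, 0 ≤ f' x) : MonotoneOn f D :=
  monotoneOn_of_hasDerivWithinAt_nonneg hD (fun x hx => (hf x hx).continuousAt.continuousWithinAt)
    (fun x hx => (hf x (interior_subset hx)).hasDerivWithinAt)
    (fun x hx => h0 x (interior_subset hx))

lemma antiOn_of_hasDerivAt {D : Set ℝ} (hD : Convex ℝ D) {f f' : ℝ → ℝ}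
    (hf : ∀ x ∈ D, HasDerivAt f (f' x) x) (h0 : ∀ x ∈ D, f' x ≤ 0) : AntitoneOn f D :=
  antitoneOn_of_hasDerivWithinAt_nonpos hD (fun x hx => (hf x hx).continuousAt.continuousWithinAt)
    (fun x hx => (hf x (interior_subset hx)).hasDerivWithinAt)
    (fun x hx => h0 x (interior_subset hx))

lemma le_of_monoOn_tendsto {F : ℝ → ℝ} {b a L : ℝ} (hba : b < a) (hF : MonotoneOn F (Ioc b a))
    (hL : Tendsto F (nhdsWithin b (Ioi b)) (nhds L)) : L ≤ F a := by
  refine le_of_tendsto hL ?_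
  filter_upwards [Ioc_mem_nhdsGT hba] with r hr
  exact hF hr ⟨hba, le_rfl⟩ hr.2

lemma le_of_antiOn_tendsto {F : ℝ → ℝ} {b a L : ℝ} (hba : b < a) (hF : AntitoneOn F (Ioc b a))
    (hL : Tendsto F (nhdsWithin b (Ioi b)) (nhds L)) : F a ≤ L := by
  refine ge_of_tendsto hL ?_
  filter_upwards [Ioc_mem_nhdsGT hba] with r hr
  exact hF hr ⟨hba, le_rfl⟩ hr.2

lemma tendsto_zero_of_abs_le {F : ℝ → ℝ} {C : ℝ} (h : ∀ r ∈ Ioc (0:ℝ) 1, |F r| ≤ C * r) :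
    Tendsto F (nhdsWithin 0 (Ioi 0)) (nhds 0) := by
  have h1 : Tendsto (fun r : ℝ => C * r) (nhdsWithin 0 (Ioi 0)) (nhds 0) := by
    have : Tendsto (fun r : ℝ => C * r) (nhds 0) (nhds (C * 0)) := by
      exact (continuous_const.mul continuous_id).tendsto 0
    rw [mul_zero] at this
    exact this.mono_left nhdsWithin_le_nhds
  refine squeeze_zero_norm' ?_ h1
  filter_upwards [Ioc_mem_nhdsGT (zero_lt_one (α := ℝ))] with r hr
  exact h r hr

/-- The pair `(w, w₁)` solves `w' = w₁`, `w₁' = q w` on `(0, ∞)`, i.e. `w'' = q w`. -/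
def IsSol (q w w₁ : ℝ → ℝ) : Prop :=
  ∀ r > (0:ℝ), HasDerivAt w (w₁ r) r ∧ HasDerivAt w₁ (q r * w r) r

/-- The substitution `w = r f` removes the first order term of a radial equation. -/
lemma isSol_of_radial {q f f₁ : ℝ → ℝ} (h1 : ∀ r > (0:ℝ), HasDerivAt f (f₁ r) r)
    (h2 : ∀ r > (0:ℝ), HasDerivAt f₁ (q r * f r - 2 / r * f₁ r) r) :
    IsSol q (fun r => r * f r) (fun r => f r + r * f₁ r) := by
  intro r hr
  constructor
  · refine ((hasDerivAt_id r).mul (h1 r hr)).congr_deriv ?_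
    simp
  · refine ((h1 r hr).add ((hasDerivAt_id r).mul (h2 r hr))).congr_deriv ?_
    simp only [id]
    field_simp
    ring

lemma hasDerivAt_pair_of_contDiffOn {f g : ℝ → ℝ} (hf : ContDiffOn ℝ 2 f (Ioi 0))
    (h : ∀ r > (0:ℝ), deriv (deriv f) r = g r) (r : ℝ) (hr : 0 < r) :
    HasDerivAt f (deriv f r) r ∧ HasDerivAt (deriv f) (g r) r := by
  have hn : Ioi (0:ℝ) ∈ nhds r := Ioi_mem_nhds hr
  constructor
  · exact ((hf.differentiableOn (by norm_num) r hr).differentiableAt hn).hasDerivAt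
  · have h1 : ContDiffOn ℝ 1 (deriv f) (Ioi 0) := hf.deriv_of_isOpen isOpen_Ioi (by norm_num)
    rw [← h r hr]
    exact ((h1.differentiableOn (by norm_num) r hr).differentiableAt hn).hasDerivAt

namespace IsSol

variable {q p w w₁ v v₁ : ℝ → ℝ}

lemma neg (h : IsSol q w w₁) : IsSol q (fun r => -w r) (fun r => -w₁ r) := by
  intro r hr
  refine ⟨(h r hr).1.neg, (h r hr).2.neg.congr_deriv ?_⟩
  ring

lemma wronskian (hv : IsSol p v v₁) (hw : IsSol q w w₁) {r : ℝ} (hr : 0 < r) :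
    HasDerivAt (fun r => v r * w₁ r - v₁ r * w r) ((q r - p r) * (v r * w r)) r := by
  refine (((hv r hr).1.mul (hw r hr).2).sub ((hv r hr).2.mul (hw r hr).1)).congr_deriv ?_
  ring

lemma bounds (hw : IsSol q w w₁) {K C : ℝ} (hq : ∀ r ∈ Ioc (0:ℝ) 1, |q r| ≤ K)
    (hC : ∀ r ∈ Ioc (0:ℝ) 1, |w r| ≤ C * r) :
    ∃ C' : ℝ, 0 ≤ C' ∧ ∀ r ∈ Ioc (0:ℝ) 1, |w r| ≤ C' * r ∧ |w₁ r| ≤ C' := by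
  have one : (1:ℝ) ∈ Ioc (0:ℝ) 1 := by norm_num
  have hC0 : 0 ≤ C := by have := hC 1 one; have := abs_nonneg (w 1); linarith
  have hK0 : 0 ≤ K := (abs_nonneg _).trans (hq 1 one)
  refine ⟨C + |w₁ 1| + K * C, by positivity, fun r hr => ⟨?_, ?_⟩⟩
  · refine (hC r hr).trans (mul_le_mul_of_nonneg_right ?_ hr.1.le)
    have : 0 ≤ |w₁ 1| + K * C := by positivity
    linarith
  · have key := Convex.norm_image_sub_le_of_norm_hasDerivWithin_le (f := w₁)
      (f' := fun r => q r * w r) (C := K * C) (s := Ioc (0:ℝ) 1) (x := 1) (y := r)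
      (fun x hx => (hw x hx.1).2.hasDerivWithinAt)
      (fun x hx => by
        rw [norm_mul, Real.norm_eq_abs, Real.norm_eq_abs]
        refine mul_le_mul (hq x hx) ((hC x hx).trans ?_) (abs_nonneg _) hK0
        nlinarith [hx.1, hx.2])
      (convex_Ioc 0 1) one hr
    rw [Real.norm_eq_abs, Real.norm_eq_abs] at key
    have h1 : |r - 1| ≤ 1 := by rw [abs_le]; constructor <;> linarith [hr.1, hr.2]
    have h2 : K * C * |r - 1| ≤ K * C := mul_le_of_le_one_right (by positivity) h1
    have h3 : |w₁ r| ≤ |w₁ r - w₁ 1| + |w₁ 1| := by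
      have := abs_add_le (w₁ r - w₁ 1) (w₁ 1)
      simpa using this
    linarith

lemma wronskian_tendsto (hv : IsSol p v v₁) (hw : IsSol q w w₁) {K C L D : ℝ}
    (hq : ∀ r ∈ Ioc (0:ℝ) 1, |q r| ≤ K) (hC : ∀ r ∈ Ioc (0:ℝ) 1, |w r| ≤ C * r)
    (hp : ∀ r ∈ Ioc (0:ℝ) 1, |p r| ≤ L) (hD : ∀ r ∈ Ioc (0:ℝ) 1, |v r| ≤ D * r) :
    Tendsto (fun r => v r * w₁ r - v₁ r * w r) (nhdsWithin 0 (Ioi 0)) (nhds 0) := by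
  obtain ⟨A, hA0, hA⟩ := hw.bounds hq hC
  obtain ⟨B, hB0, hB⟩ := hv.bounds hp hD
  refine tendsto_zero_of_abs_le (C := 2 * (A * B)) fun r hr => ?_
  obtain ⟨h1, h2⟩ := hA r hr
  obtain ⟨h3, h4⟩ := hB r hr
  have h5 : |v r * w₁ r| ≤ (B * r) * A := by
    rw [abs_mul]; exact mul_le_mul h3 h2 (abs_nonneg _) (by have := hr.1; positivity)
  have h6 : |v₁ r * w r| ≤ B * (A * r) := by
    rw [abs_mul]; exact mul_le_mul h4 h1 (abs_nonneg _) hB0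
  have := abs_sub (v r * w₁ r) (v₁ r * w r)
  linarith

lemma eq_zero_of_init (hw : IsSol q w w₁) (hq : ContinuousOn q (Ioi 0)) {a : ℝ} (ha : 0 < a)
    (h0 : w a = 0) (h1 : w₁ a = 0) : ∀ r > (0:ℝ), w r = 0 := by
  intro r hr
  obtain ⟨s, hs0, hsa, hsr⟩ : ∃ s : ℝ, 0 < s ∧ s < a ∧ s < r :=
    ⟨min a r / 2, by positivity, by have := min_le_left a r; linarith [lt_min ha hr],
      by have := min_le_right a r; linarith [lt_min ha hr]⟩
  obtain ⟨t, hta, htr⟩ : ∃ t : ℝ, a < t ∧ r < t :=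
    ⟨max a r + 1, by linarith [le_max_left a r], by linarith [le_max_right a r]⟩
  obtain ⟨M, hM⟩ := (isCompact_Icc (a := s) (b := t)).exists_bound_of_continuousOn
    (hq.mono fun x hx => lt_of_lt_of_le hs0 hx.1)
  have hM0 : 0 ≤ max 1 M := zero_le_one.trans (le_max_left _ _)
  have key := ODE_solution_unique_of_mem_Ioo (v := fun x (z : ℝ × ℝ) => (z.2, q x * z.1))
    (s := fun _ => univ) (K := ⟨max 1 M, hM0⟩) (a := s) (b := t) (t₀ := a)
    (f := fun x => (w x, w₁ x)) (g := fun _ => (0, 0))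
    (fun x hx => by
      refine LipschitzOnWith.of_dist_le_mul fun y _ z _ => ?_
      change _ ≤ max 1 M * _
      rw [Prod.dist_eq, Prod.dist_eq]
      refine max_le ?_ ?_
      · exact (le_max_right _ _).trans (le_mul_of_one_le_left (le_max_of_le_left dist_nonneg)
          (le_max_left _ _))
      · simp only [Real.dist_eq]
        rw [← mul_sub, abs_mul]
        refine mul_le_mul ((hM x ⟨hx.1.le, hx.2.le⟩).trans (le_max_right _ _)) (le_max_left _ _)
          (abs_nonneg _) hM0)
    ⟨hsa, hta⟩
    (fun x hx => ⟨(hw x (hs0.trans hx.1)).1.prodMk (hw x (hs0.trans hx.1)).2, mem_univ _⟩)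
    (fun x hx => ⟨(hasDerivAt_const x ((0:ℝ), (0:ℝ))).congr_deriv (by ext <;> simp), mem_univ _⟩)
    (by simp [h0, h1])
  have := key ⟨hsr, htr⟩
  exact (Prod.ext_iff.1 this).1

/-- The product of `w / v` with the Wronskian of `v` and `w`. In terms of `y = w / v` it is
`v² y y'`, and the derivative is `v² y'² + (q - p) v² y²`. -/
lemma hasDerivAt_flux (hv : IsSol p v v₁) (hw : IsSol q w w₁) {r : ℝ} (hr : 0 < r)
    (h0 : v r ≠ 0) :
    HasDerivAt (fun r => w r / v r * (v r * w₁ r - v₁ r * w r))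
      (((v r * w₁ r - v₁ r * w r) / v r) ^ 2 + (q r - p r) * w r ^ 2) r := by
  refine (((hw r hr).1.div (hv r hr).1 h0).mul (hv.wronskian hw hr)).congr_deriv ?_
  simp only [Pi.div_apply]
  field_simp

end IsSol

/-! ### The ground state -/

/-- A positive solution `Q`, with derivative `Q₁`, of `-Q'' - (2/r) Q' + Q - Q³ = 0` on `(0, ∞)`
which is bounded near `0` and tends to `0` at infinity. -/
structure GroundState (Q Q₁ : ℝ → ℝ) : Prop where
  pos : ∀ r > (0:ℝ), 0 < Q r
  d1 : ∀ r > (0:ℝ), HasDerivAt Q (Q₁ r) r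
  d2 : ∀ r > (0:ℝ), HasDerivAt Q₁ ((1 - Q r ^ 2) * Q r - 2 / r * Q₁ r) r
  bdd : ∃ C : ℝ, ∀ r ∈ Ioc (0:ℝ) 1, |Q r| ≤ C
  lim : Tendsto Q atTop (nhds 0)

namespace GroundState

variable {Q Q₁ : ℝ → ℝ}

lemma isSol (h : GroundState Q Q₁) :
    IsSol (fun r => 1 - Q r ^ 2) (fun r => r * Q r) (fun r => Q r + r * Q₁ r) :=
  isSol_of_radial h.d1 h.d2

/-- The comparison function: `r (Q - 1)` solves the equation with potential `-(Q² + Q)`. -/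
lemma isSol_sub_one (h : GroundState Q Q₁) :
    IsSol (fun r => -(Q r ^ 2 + Q r)) (fun r => r * (Q r - 1))
      (fun r => (Q r - 1) + r * Q₁ r) := by
  refine isSol_of_radial (f := fun r => Q r - 1) (fun r hr => (h.d1 r hr).sub_const 1)
    (fun r hr => (h.d2 r hr).congr_deriv ?_)
  ring

lemma exists_sq_le (h : GroundState Q Q₁) :
    ∃ C : ℝ, 0 ≤ C ∧ ∀ r ∈ Ioc (0:ℝ) 1, |Q r| ≤ C ∧ |1 - Q r ^ 2| ≤ 1 + C ^ 2 := by
  obtain ⟨C, hC⟩ := h.bdd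
  have hC0 : 0 ≤ C := (abs_nonneg _).trans (hC 1 (by norm_num))
  refine ⟨C, hC0, fun r hr => ⟨hC r hr, ?_⟩⟩
  have : Q r ^ 2 ≤ C ^ 2 := by
    rw [← sq_abs]; exact pow_le_pow_left₀ (abs_nonneg _) (hC r hr) 2
  rw [abs_le]; constructor <;> nlinarith [sq_nonneg (Q r), sq_nonneg C]

lemma tendsto_sq_mul_deriv (h : GroundState Q Q₁) :
    Tendsto (fun r => r ^ 2 * Q₁ r) (nhdsWithin 0 (Ioi 0)) (nhds 0) := by
  obtain ⟨C, hC0, hC⟩ := h.exists_sq_le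
  obtain ⟨A, hA0, hA⟩ := h.isSol.bounds (fun r hr => (hC r hr).2) (C := C) (fun r hr => by
    rw [abs_mul, abs_of_pos hr.1, mul_comm]
    exact mul_le_mul_of_nonneg_right (hC r hr).1 hr.1.le)
  refine tendsto_zero_of_abs_le (C := A + C) fun r hr => ?_
  have h1 : r ^ 2 * Q₁ r = ((Q r + r * Q₁ r) - Q r) * r := by ring
  rw [h1, abs_mul, abs_of_pos hr.1]
  refine mul_le_mul_of_nonneg_right ?_ hr.1.le
  exact (abs_sub _ _).trans (add_le_add (hA r hr).2 (hC r hr).1)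

lemma hasDerivAt_sq_mul_deriv (h : GroundState Q Q₁) {r : ℝ} (hr : 0 < r) :
    HasDerivAt (fun r => r ^ 2 * Q₁ r) (r ^ 2 * ((1 - Q r ^ 2) * Q r)) r := by
  refine ((hasDerivAt_pow 2 r).mul (h.d2 r hr)).congr_deriv ?_
  field_simp
  ring

/-- The energy is nonincreasing; a negative value would keep `Q` away from `0` at infinity. -/
lemma energy_nonneg (h : GroundState Q Q₁) {r : ℝ} (hr : 0 < r) :
    0 ≤ Q₁ r ^ 2 / 2 - Q r ^ 2 / 2 + Q r ^ 4 / 4 := by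
  have hanti : AntitoneOn (fun r => Q₁ r ^ 2 / 2 - Q r ^ 2 / 2 + Q r ^ 4 / 4) (Ioi 0) := by
    refine antiOn_of_hasDerivAt (f' := fun r => -(2 / r * Q₁ r ^ 2)) (convex_Ioi 0) ?_ ?_
    · intro x hx
      refine (((((h.d2 x hx).pow 2).div_const 2).sub (((h.d1 x hx).pow 2).div_const 2)).add
        (((h.d1 x hx).pow 4).div_const 4)).congr_deriv ?_
      simp only [Nat.cast_ofNat]
      ring
    · intro x hx
      have : (0:ℝ) < x := hx
      have : 0 ≤ 2 / x * Q₁ x ^ 2 := by positivity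
      simpa using this
  by_contra! hneg
  set δ := -(Q₁ r ^ 2 / 2 - Q r ^ 2 / 2 + Q r ^ 4 / 4) with hδ
  have hl : Tendsto (fun r => Q r ^ 2 / 2) atTop (nhds 0) := by
    simpa using (h.lim.pow 2).div_const 2
  have hge : δ ≤ 0 := by
    refine ge_of_tendsto hl ?_
    filter_upwards [eventually_ge_atTop r] with s hs
    have := hanti hr (hr.trans_le hs) hs
    simp only at this
    nlinarith [sq_nonneg (Q₁ s), sq_nonneg (Q s ^ 2)]
  linarith

lemma deriv_ne_zero (h : GroundState Q Q₁) {r : ℝ} (hr : 0 < r) (hQ : Q r ≤ 1) : Q₁ r ≠ 0 := by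
  intro h0
  have h1 := h.energy_nonneg hr
  have h2 := h.pos r hr
  rw [h0] at h1
  have h3 : Q r ^ 2 ≤ 1 := by nlinarith
  nlinarith [pow_pos h2 2]

/-- If `Q` were increasing at a point where `Q ≤ 1`, it would be so all the way down to `0`; there
`r² Q' → 0` yields `Q' ≤ (r/3) Q`, while nonnegativity of the energy requires `Q'² ≥ Q² / 2`. -/
lemma deriv_neg (h : GroundState Q Q₁) {a : ℝ} (ha : 0 < a) (hQ : Q a ≤ 1) : Q₁ a < 0 := by
  by_contra! hge
  have hpos : 0 < Q₁ a := lt_of_le_of_ne hge (h.deriv_ne_zero ha hQ).symm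
  have hle : ∀ s ∈ Ioc 0 a, Q s ≤ 1 := by
    intro s hs
    by_contra! hs1
    have hsa : s < a := lt_of_le_of_ne hs.2 (by rintro rfl; linarith)
    obtain ⟨m, hm, hmin⟩ := (isCompact_Icc (a := s) (b := a)).exists_isMinOn
      ⟨a, hsa.le, le_rfl⟩ (fun x hx => (h.d1 x (hs.1.trans_le hx.1)).continuousAt.continuousWithinAt)
    have hma : Q m ≤ Q a := hmin ⟨hsa.le, le_rfl⟩
    have hms : s < m := lt_of_le_of_ne hm.1 (by rintro rfl; linarith)
    rcases hm.2.lt_or_eq with hlt | rfl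
    · have : IsLocalMin Q m := hmin.isLocalMin (Icc_mem_nhds hms hlt)
      exact h.deriv_ne_zero (hs.1.trans hms) (hma.trans hQ)
        (this.hasDerivAt_eq_zero (h.d1 m (hs.1.trans hms)))
    · -- A minimum at the right endpoint is incompatible with `Q' > 0` there.
      have hsl := (hasDerivAt_iff_tendsto_slope_left_right.1 (h.d1 m ha)).1
      have : Q₁ m ≤ 0 := by
        refine le_of_tendsto hsl ?_
        filter_upwards [Ico_mem_nhdsLT hsa] with x hx
        rw [slope_def_field]
        have h1 : Q m ≤ Q x := hmin ⟨hx.1, hx.2.le⟩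
        exact div_nonpos_of_nonneg_of_nonpos (by linarith) (by linarith [hx.2])
      linarith
  have hincr : ∀ s ∈ Ioc 0 a, 0 < Q₁ s := by
    intro s hs
    by_contra! hs0
    have hc : ContinuousOn Q₁ (Icc s a) := fun x hx =>
      (h.d2 x (hs.1.trans_le hx.1)).continuousAt.continuousWithinAt
    obtain ⟨x, hx, hx0⟩ := intermediate_value_Icc hs.2 hc ⟨hs0, hpos.le⟩
    have hx' : x ∈ Ioc 0 a := ⟨hs.1.trans_le hx.1, hx.2⟩
    exact h.deriv_ne_zero hx'.1 (hle x hx') hx0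
  set b := min a 1 with hb
  have hb0 : 0 < b := lt_min ha one_pos
  have hba : b ≤ a := min_le_left _ _
  have hb1 : b ≤ 1 := min_le_right _ _
  have hanti : AntitoneOn (fun r => r ^ 2 * Q₁ r - r ^ 3 / 3 * Q r) (Ioc 0 b) := by
    refine antiOn_of_hasDerivAt
      (f' := fun r => r ^ 2 * ((1 - Q r ^ 2) * Q r) - (r ^ 2 * Q r + r ^ 3 / 3 * Q₁ r))
      (convex_Ioc 0 b) ?_ ?_
    · intro x hx
      refine ((h.hasDerivAt_sq_mul_deriv hx.1).sub
        (((hasDerivAt_pow 3 x).div_const 3).mul (h.d1 x hx.1))).congr_deriv ?_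
      simp only [Nat.cast_ofNat]
      ring
    · intro x hx
      have h1 := hincr x ⟨hx.1, hx.2.trans hba⟩
      have h2 := h.pos x hx.1
      have h3 := hx.1
      have h4 : 0 < x ^ 2 * Q x ^ 3 + x ^ 3 / 3 * Q₁ x := by positivity
      nlinarith
  have hlim : Tendsto (fun r => r ^ 2 * Q₁ r - r ^ 3 / 3 * Q r) (nhdsWithin 0 (Ioi 0))
      (nhds 0) := by
    have h2 : Tendsto (fun r => r ^ 3 / 3 * Q r) (nhdsWithin 0 (Ioi 0)) (nhds 0) := by
      obtain ⟨C, hC0, hC⟩ := h.exists_sq_le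
      refine tendsto_zero_of_abs_le (C := C) fun r hr => ?_
      have hr0 := hr.1
      rw [abs_mul, abs_of_nonneg (by positivity : 0 ≤ r ^ 3 / 3), mul_comm]
      refine mul_le_mul (hC r hr).1 ?_ (by positivity) hC0
      have : r ^ 2 ≤ 1 := pow_le_one₀ hr.1.le hr.2
      nlinarith [hr.1]
    simpa using h.tendsto_sq_mul_deriv.sub h2
  have h1 := le_of_antiOn_tendsto hb0 hanti hlim
  have h2 := hincr b ⟨hb0, hba⟩
  have h3 := h.pos b hb0
  have h4 := hle b ⟨hb0, hba⟩
  have h5 := h.energy_nonneg hb0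
  have h6 : Q₁ b ≤ Q b / 3 := by
    have : b ^ 2 * Q₁ b ≤ b ^ 2 * (b / 3 * Q b) := by nlinarith
    have := le_of_mul_le_mul_left this (by positivity)
    nlinarith
  have h7 : Q₁ b ^ 2 ≤ (Q b / 3) ^ 2 := pow_le_pow_left₀ h2.le h6 2
  have h8 : Q b ^ 2 ≤ 1 := pow_le_one₀ h3.le h4
  nlinarith [pow_pos h3 2]

lemma lt_one_of_le_one (h : GroundState Q Q₁) {a s : ℝ} (ha : 0 < a) (hQ : Q a ≤ 1)
    (has : a < s) : Q s < 1 := by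
  have hle : ∀ x ∈ Icc a s, Q x ≤ 1 := by
    intro x hx
    exact image_le_of_deriv_right_lt_deriv_boundary (f := Q) (f' := Q₁) (B := fun _ => 1)
      (B' := fun _ => 0)
      (fun x hx => (h.d1 x (ha.trans_le hx.1)).continuousAt.continuousWithinAt)
      (fun x hx => (h.d1 x (ha.trans_le hx.1)).hasDerivWithinAt) hQ
      (fun x => hasDerivAt_const x 1)
      (fun x hx h1 => h.deriv_neg (ha.trans_le hx.1) h1.le) hx
  have hanti : StrictAntiOn Q (Icc a s) := by
    refine strictAntiOn_of_hasDerivWithinAt_neg (f' := Q₁) (convex_Icc a s)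
      (fun x hx => (h.d1 x (ha.trans_le hx.1)).continuousAt.continuousWithinAt)
      (fun x hx => (h.d1 x (ha.trans_le (interior_subset hx).1)).hasDerivWithinAt)
      (fun x hx => h.deriv_neg (ha.trans_le (interior_subset hx).1) (hle x (interior_subset hx)))
  exact (hanti ⟨le_rfl, has.le⟩ ⟨has.le, le_rfl⟩ has).trans_le hQ

/-- `r Q` is eventually convex and it is `o(r)`, hence it is eventually nonincreasing. -/
lemma exists_bound (h : GroundState Q Q₁) :
    ∃ R M : ℝ, 1 ≤ R ∧ 0 < M ∧ ∀ r ≥ R, r * Q r ≤ M := by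
  obtain ⟨R, hR1, hR⟩ : ∃ R : ℝ, 1 ≤ R ∧ ∀ r ≥ R, Q r < 1 := by
    obtain ⟨R, hR⟩ := eventually_atTop.1 (h.lim.eventually_lt_const (zero_lt_one (α := ℝ)))
    exact ⟨max R 1, le_max_right _ _, fun r hr => hR r ((le_max_left _ _).trans hr)⟩
  have hpos : ∀ r ≥ R, 0 < r := fun r hr => by linarith
  have hmono : MonotoneOn (fun r => Q r + r * Q₁ r) (Ici R) := by
    refine monoOn_of_hasDerivAt (convex_Ici R) (fun x hx => (h.isSol x (hpos x hx)).2) ?_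
    intro x hx
    have h1 := h.pos x (hpos x hx)
    have h2 := hR x hx
    have h3 := hpos x hx
    have h4 : 0 ≤ 1 - Q x ^ 2 := by nlinarith
    positivity
  have hnonpos : ∀ s ≥ R, Q s + s * Q₁ s ≤ 0 := by
    intro s hs
    by_contra! hc
    set c := Q s + s * Q₁ s with hcdef
    have hm : MonotoneOn (fun r => r * Q r - c * r) (Ici s) := by
      refine monoOn_of_hasDerivAt (f' := fun r => Q r + r * Q₁ r - c) (convex_Ici s) ?_ ?_
      · intro x hx
        refine ((h.isSol x (hpos x (hs.trans hx))).1.sub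
          ((hasDerivAt_id x).const_mul c)).congr_deriv ?_
        simp
      · intro x hx
        have := hmono hs (hs.trans hx : R ≤ x) hx
        simp only at this ⊢
        linarith
    have hl : Tendsto (fun r => c + (s * Q s - c * s) * r⁻¹) atTop
        (nhds (c + (s * Q s - c * s) * 0)) :=
      (tendsto_inv_atTop_zero.const_mul _).const_add c
    have : c + (s * Q s - c * s) * 0 ≤ 0 := by
      refine le_of_tendsto_of_tendsto hl h.lim ?_
      filter_upwards [eventually_ge_atTop s] with r hr
      have h1 := hm (mem_Ici.2 le_rfl) (mem_Ici.2 hr) hr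
      have hr0 := hpos r (hs.trans hr)
      simp only at h1
      have h2 : c + (s * Q s - c * s) * r⁻¹ = (c * r + (s * Q s - c * s)) / r := by
        field_simp
      rw [h2, div_le_iff₀ hr0]
      linarith
    linarith
  have hanti : AntitoneOn (fun r => r * Q r) (Ici R) :=
    antiOn_of_hasDerivAt (convex_Ici R) (fun x hx => (h.isSol x (hpos x hx)).1) hnonpos
  exact ⟨R, R * Q R, hR1, mul_pos (hpos R le_rfl) (h.pos R (hpos R le_rfl)),
    fun r hr => hanti (mem_Ici.2 le_rfl) hr hr⟩

end GroundState

/-! ### Sturm comparison for the eigenvalue equation -/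

/-- A solution for `λ > 0` is not positive: its Wronskian with `r Q` vanishes at `0` and decreases,
so `(w / (r Q))'` is bounded above by a negative constant at infinity. -/
lemma IsSol.exists_nonpos {Q Q₁ w w₁ : ℝ → ℝ} {lam C : ℝ} (h : GroundState Q Q₁) (hlam : 0 < lam)
    (hw : IsSol (fun r => 1 - lam - Q r ^ 2) w w₁) (hC : ∀ r ∈ Ioc (0:ℝ) 1, |w r| ≤ C * r) :
    ∃ r > (0:ℝ), w r ≤ 0 := by
  by_contra! hpos
  obtain ⟨D, hD0, hD⟩ := h.exists_sq_le
  set W : ℝ → ℝ := fun r => r * Q r * w₁ r - (Q r + r * Q₁ r) * w r with hW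
  have hWlim : Tendsto W (nhdsWithin 0 (Ioi 0)) (nhds 0) := by
    refine h.isSol.wronskian_tendsto hw (K := 1 + D ^ 2 + lam) (L := 1 + D ^ 2) (D := D) ?_ hC
      (fun r hr => (hD r hr).2) ?_
    · intro r hr
      have h1 := abs_le.1 (hD r hr).2
      rw [abs_le]; constructor <;> linarith
    · intro r hr
      rw [abs_mul, abs_of_pos hr.1, mul_comm]
      exact mul_le_mul_of_nonneg_right (hD r hr).1 hr.1.le
  have hWd : ∀ r > (0:ℝ), HasDerivAt W (-(lam * (r * Q r * w r))) r := by
    intro r hr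
    refine (h.isSol.wronskian hw hr).congr_deriv ?_
    ring
  have hneg : ∀ r > (0:ℝ), -(lam * (r * Q r * w r)) < 0 := by
    intro r hr
    have h1 := hpos r hr
    have h2 := h.pos r hr
    have : 0 < lam * (r * Q r * w r) := by positivity
    linarith
  have hanti : StrictAntiOn W (Ioi 0) :=
    strictAntiOn_of_hasDerivWithinAt_neg (convex_Ioi 0)
      (fun x hx => (hWd x hx).continuousAt.continuousWithinAt)
      (fun x hx => (hWd x (interior_subset hx)).hasDerivWithinAt)
      (fun x hx => hneg x (interior_subset hx))
  have hW1 : W 1 < 0 := by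
    have h1 : W (1 / 2) ≤ 0 := by
      refine le_of_antiOn_tendsto (b := 0) (by norm_num) (hanti.antitoneOn.mono ?_) hWlim
      exact fun x hx => hx.1
    have h2 : W 1 < W (1 / 2) := hanti (by norm_num) (by norm_num) (by norm_num)
    linarith
  obtain ⟨R, M, hR1, hM, hPM⟩ := h.exists_bound
  set c := -W 1 / M ^ 2 with hc
  have hc0 : 0 < c := by have : 0 < -W 1 := by linarith
                         positivity
  have hy : AntitoneOn (fun r => w r / (r * Q r) + c * r) (Ici R) := by
    refine antiOn_of_hasDerivAt (f' := fun r => W r / (r * Q r) ^ 2 + c) (convex_Ici R) ?_ ?_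
    · intro x hx
      have hx0 : 0 < x := by have : R ≤ x := hx
                             linarith
      have hP : 0 < x * Q x := mul_pos hx0 (h.pos x hx0)
      refine (((hw x hx0).1.div (h.isSol x hx0).1 hP.ne').add
        ((hasDerivAt_id x).const_mul c)).congr_deriv ?_
      simp only [hW]
      ring
    · intro x hx
      have hxR : R ≤ x := hx
      have hx0 : 0 < x := by linarith
      have hP : 0 < x * Q x := mul_pos hx0 (h.pos x hx0)
      have h1 : W x ≤ W 1 := hanti.antitoneOn (by norm_num) hx0 (by linarith)
      have h2 : (x * Q x) ^ 2 ≤ M ^ 2 := pow_le_pow_left₀ hP.le (hPM x hx) 2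
      have h3 : c ≤ -W 1 / (x * Q x) ^ 2 :=
        div_le_div_of_nonneg_left (by linarith) (by positivity) h2
      have h4 : W x / (x * Q x) ^ 2 ≤ W 1 / (x * Q x) ^ 2 :=
        div_le_div_of_nonneg_right h1 (by positivity)
      rw [neg_div] at h3
      linarith
  set A := w R / (R * Q R) + c * R with hA
  have hR0 : 0 < R := by linarith
  have hA0 : 0 < A := by
    have := hpos R hR0
    have := h.pos R hR0
    positivity
  set s := R + A / c with hs
  have hRs : R ≤ s := by have : 0 < A / c := by positivity
                         linarith
  have hs0 : 0 < s := by linarith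
  have h1 := hy (mem_Ici.2 le_rfl) (mem_Ici.2 hRs) hRs
  have h2 : c * s = c * R + A := by rw [hs]; field_simp
  have h3 : 0 < w s / (s * Q s) := div_pos (hpos s hs0) (mul_pos hs0 (h.pos s hs0))
  have h4 : 0 < c * R := by positivity
  simp only at h1
  linarith

section Comparison

variable {Q Q₁ w w₁ : ℝ → ℝ} {lam C : ℝ}

/-- Comparison with `r (Q - 1)` on `(0, a]` when `Q a > 1`. -/
lemma IsSol.eq_zero_inside (h : GroundState Q Q₁) (hlam : lam ∈ Ioc (0:ℝ) 1)
    (hw : IsSol (fun r => 1 - lam - Q r ^ 2) w w₁) (hC : ∀ r ∈ Ioc (0:ℝ) 1, |w r| ≤ C * r)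
    {a : ℝ} (ha : 0 < a) (hwa : w a = 0) (hQa : 1 < Q a) :
    w (a / 2) = 0 ∧ w₁ (a / 2) = 0 := by
  have hQ1 : ∀ r ∈ Ioc 0 a, 1 < Q r := by
    intro r hr
    by_contra! hle
    rcases hr.2.lt_or_eq with hlt | rfl
    · exact absurd (h.lt_one_of_le_one hr.1 hle hlt) (by linarith)
    · linarith
  obtain ⟨D, hD0, hD⟩ := h.exists_sq_le
  set v : ℝ → ℝ := fun r => r * (Q r - 1) with hv
  set v₁ : ℝ → ℝ := fun r => (Q r - 1) + r * Q₁ r with hv₁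
  have hvS : IsSol (fun r => -(Q r ^ 2 + Q r)) v v₁ := h.isSol_sub_one
  have hvpos : ∀ r ∈ Ioc 0 a, 0 < v r := fun r hr => mul_pos hr.1 (by linarith [hQ1 r hr])
  set F : ℝ → ℝ := fun r => w r / v r * (v r * w₁ r - v₁ r * w r) with hF
  have hFd : ∀ r ∈ Ioc 0 a, HasDerivAt F
      (((v r * w₁ r - v₁ r * w r) / v r) ^ 2 + (1 - lam + Q r) * w r ^ 2) r := by
    intro r hr
    refine (hvS.hasDerivAt_flux hw hr.1 (hvpos r hr).ne').congr_deriv ?_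
    ring
  have hmono : MonotoneOn F (Ioc 0 a) := by
    refine monoOn_of_hasDerivAt (convex_Ioc 0 a) hFd fun r hr => ?_
    have := h.pos r hr.1
    have : 0 ≤ 1 - lam := by linarith [hlam.2]
    positivity
  have hXlim : Tendsto (fun r => v r * w₁ r - v₁ r * w r) (nhdsWithin 0 (Ioi 0)) (nhds 0) := by
    refine hvS.wronskian_tendsto hw (K := 1 + D ^ 2 + lam) (L := D ^ 2 + D) (D := D + 1) ?_ hC ?_ ?_
    · intro r hr
      have h1 := abs_le.1 (hD r hr).2
      have := hlam.1
      rw [abs_le]; constructor <;> linarith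
    · intro r hr
      have h1 := h.pos r hr.1
      have h2 := (abs_le.1 (hD r hr).1).2
      rw [abs_neg, abs_of_pos (by positivity)]
      nlinarith
    · intro r hr
      have h2 := abs_le.1 (hD r hr).1
      rw [hv, abs_mul, abs_of_pos hr.1, mul_comm]
      refine mul_le_mul_of_nonneg_right ?_ hr.1.le
      rw [abs_le]; constructor <;> linarith
  -- `Q` is nonincreasing on `(0, a]`, which keeps `Q - 1` away from `0` near the origin.
  have hQanti : AntitoneOn Q (Ioc 0 a) := by
    refine antiOn_of_hasDerivAt (convex_Ioc 0 a) (fun r hr => h.d1 r hr.1) fun r hr => ?_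
    have hG : AntitoneOn (fun r => r ^ 2 * Q₁ r) (Ioc 0 r) := by
      refine antiOn_of_hasDerivAt (convex_Ioc 0 r)
        (fun x hx => h.hasDerivAt_sq_mul_deriv hx.1) fun x hx => ?_
      have h1 := hQ1 x ⟨hx.1, hx.2.trans hr.2⟩
      have h3 := hx.1
      have h2 : 0 ≤ x ^ 2 * ((Q x ^ 2 - 1) * Q x) := by
        have : 0 ≤ Q x ^ 2 - 1 := by nlinarith
        positivity
      linarith
    have h1 := le_of_antiOn_tendsto hr.1 hG h.tendsto_sq_mul_deriv
    have h2 : 0 < r ^ 2 := pow_pos hr.1 2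
    by_contra! h3
    nlinarith [mul_pos h2 h3]
  have hC0 : 0 ≤ C := by have := hC 1 (by norm_num); have := abs_nonneg (w 1); linarith
  have hFlim : Tendsto F (nhdsWithin 0 (Ioi 0)) (nhds 0) := by
    have hg : Tendsto (fun r => C / (Q a - 1) * |v r * w₁ r - v₁ r * w r|)
        (nhdsWithin 0 (Ioi 0)) (nhds 0) := by
      simpa using hXlim.abs.const_mul (C / (Q a - 1))
    refine squeeze_zero_norm' ?_ hg
    filter_upwards [Ioc_mem_nhdsGT (lt_min ha one_pos)] with r hr
    have hra : r ∈ Ioc 0 a := ⟨hr.1, hr.2.trans (min_le_left _ _)⟩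
    have hr1 : r ∈ Ioc (0:ℝ) 1 := ⟨hr.1, hr.2.trans (min_le_right _ _)⟩
    rw [hF, norm_mul, Real.norm_eq_abs, Real.norm_eq_abs]
    refine mul_le_mul_of_nonneg_right ?_ (abs_nonneg _)
    rw [abs_div, abs_of_pos (hvpos r hra), div_le_div_iff₀ (hvpos r hra) (by linarith)]
    have h1 : Q a ≤ Q r := hQanti hra ⟨ha, le_rfl⟩ hra.2
    have h2 : C * r * (Q a - 1) ≤ C * r * (Q r - 1) :=
      mul_le_mul_of_nonneg_left (by linarith) (mul_nonneg hC0 hr.1.le)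
    have h3 : |w r| * (Q a - 1) ≤ C * r * (Q a - 1) :=
      mul_le_mul_of_nonneg_right (hC r hr1) (by linarith)
    simp only [hv]
    linarith
  have hF0 : ∀ r ∈ Ioc 0 a, F r = 0 := by
    intro r hr
    refine le_antisymm ?_ ?_
    · have := hmono hr ⟨ha, le_rfl⟩ hr.2
      simpa [hF, hwa] using this
    · exact le_of_monoOn_tendsto hr.1 (hmono.mono fun x hx => ⟨hx.1, hx.2.trans hr.2⟩) hFlim
  have ha2 : a / 2 ∈ Ioc 0 a := ⟨by linarith, by linarith⟩
  have hd := hFd _ ha2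
  have hd0 : HasDerivAt F 0 (a / 2) := by
    refine (hasDerivAt_const (a / 2) (0:ℝ)).congr_of_eventuallyEq ?_
    filter_upwards [Ioc_mem_nhds ha2.1 (by linarith : a / 2 < a)] with x hx using hF0 x hx
  have hz := hd.unique hd0
  have hQp := h.pos _ ha2.1
  have hl : 0 < 1 - lam + Q (a / 2) := by linarith [hlam.2]
  have hz1 := (add_eq_zero_iff_of_nonneg (sq_nonneg _)
    (mul_nonneg hl.le (sq_nonneg _))).1 hz
  have hw0 : w (a / 2) = 0 := by
    rcases mul_eq_zero.1 hz1.2 with h1 | h1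
    · exact absurd h1 hl.ne'
    · exact pow_eq_zero_iff (two_ne_zero) |>.1 h1
  refine ⟨hw0, ?_⟩
  have hvp := (hvpos _ ha2).ne'
  have := hz1.1
  rw [hw0] at this
  simpa [hvp] using this

/-- Comparison with `r (Q - 1)` on `(a, ∞)` when `Q a ≤ 1`. -/
lemma IsSol.eq_zero_outside (h : GroundState Q Q₁) (hlam : lam ∈ Ioc (0:ℝ) 1)
    (hw : IsSol (fun r => 1 - lam - Q r ^ 2) w w₁) (hC : ∀ r ∈ Ici (1:ℝ), |w r| ≤ C)
    {a : ℝ} (ha : 0 < a) (hwa : w a = 0) (hQa : Q a ≤ 1) :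
    ∀ r > a, w r = 0 := by
  have hQ1 : ∀ r > a, Q r < 1 := fun r hr => h.lt_one_of_le_one ha hQa hr
  set v : ℝ → ℝ := fun r => r * (Q r - 1) with hv
  set v₁ : ℝ → ℝ := fun r => (Q r - 1) + r * Q₁ r with hv₁
  have hvS : IsSol (fun r => -(Q r ^ 2 + Q r)) v v₁ := h.isSol_sub_one
  have hvneg : ∀ r > a, v r < 0 := fun r hr =>
    mul_neg_of_pos_of_neg (ha.trans hr) (by linarith [hQ1 r hr])
  set F : ℝ → ℝ := fun r => w r / v r * (v r * w₁ r - v₁ r * w r) with hF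
  have hmono : MonotoneOn F (Ioi a) := by
    refine monoOn_of_hasDerivAt (convex_Ioi a)
      (fun r hr => hvS.hasDerivAt_flux hw (ha.trans hr) (hvneg r hr).ne) fun r hr => ?_
    have := h.pos r (ha.trans hr)
    have h2 : 0 ≤ 1 - lam - Q r ^ 2 - -(Q r ^ 2 + Q r) := by linarith [hlam.2]
    positivity
  have hXc : Tendsto (fun r => v r * w₁ r - v₁ r * w r) (nhdsWithin a (Ioi a))
      (nhds (v a * w₁ a - v₁ a * w a)) :=
    (hvS.wronskian hw ha).continuousAt.tendsto.mono_left nhdsWithin_le_nhds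
  have hFlim : Tendsto F (nhdsWithin a (Ioi a)) (nhds 0) := by
    rcases hQa.lt_or_eq with hlt | heq
    · have hva : v a ≠ 0 := mul_ne_zero ha.ne' (by linarith)
      have h1 : Tendsto (fun r => w r / v r) (nhdsWithin a (Ioi a)) (nhds (w a / v a)) :=
        ((hw a ha).1.div (hvS a ha).1 hva).continuousAt.tendsto.mono_left nhdsWithin_le_nhds
      simpa [hwa] using h1.mul hXc
    · -- Here `v a = w a = 0`, and `w / v` tends to `w' a / v' a`.
      have hva : v a = 0 := by simp [hv, heq]
      have hv₁a : v₁ a ≠ 0 := by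
        have := h.deriv_neg ha hQa
        simp only [hv₁, heq, sub_self, zero_add]
        exact mul_ne_zero ha.ne' this.ne
      have hs1 := (hasDerivAt_iff_tendsto_slope_left_right.1 (hw a ha).1).2
      have hs2 := (hasDerivAt_iff_tendsto_slope_left_right.1 (hvS a ha).1).2
      have h1 : Tendsto (fun r => w r / v r) (nhdsWithin a (Ioi a)) (nhds (w₁ a / v₁ a)) := by
        refine (hs1.div hs2 hv₁a).congr' ?_
        filter_upwards [self_mem_nhdsWithin] with r hr
        have hra : r - a ≠ 0 := sub_ne_zero.2 (ne_of_gt hr)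
        simp only [Pi.div_apply, slope_def_field, hwa, hva, sub_zero]
        field_simp
      simpa [hwa, hva] using h1.mul hXc
  have hFnn : ∀ r > a, 0 ≤ F r := fun r hr =>
    le_of_monoOn_tendsto hr (hmono.mono fun x hx => hx.1) hFlim
  have hy : MonotoneOn (fun r => (w r / v r) ^ 2) (Ioi a) := by
    refine monoOn_of_hasDerivAt (f' := fun r => 2 * F r / v r ^ 2) (convex_Ioi a) ?_ ?_
    · intro r hr
      have hv0 := (hvneg r hr).ne
      refine (((hw r (ha.trans hr)).1.div (hvS r (ha.trans hr)).1 hv0).pow 2).congr_deriv ?_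
      simp only [hF, Pi.div_apply, Nat.cast_ofNat, Nat.reduceSub, pow_one]
      field_simp
    · intro r hr
      have := hFnn r hr
      positivity
  have hylim : Tendsto (fun r => w r / v r) atTop (nhds 0) := by
    have h1 : Tendsto (fun r : ℝ => C * (r⁻¹ * |(Q r - 1)⁻¹|)) atTop (nhds 0) := by
      have h2 := (h.lim.sub_const 1).inv₀ (by norm_num)
      simpa using (tendsto_inv_atTop_zero.mul h2.abs).const_mul C
    refine squeeze_zero_norm' ?_ h1
    filter_upwards [eventually_ge_atTop 1] with r hr
    have hr0 : 0 < r := by linarith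
    rw [hv, norm_div, div_eq_mul_inv, ← norm_inv, mul_inv, norm_mul, Real.norm_eq_abs,
      Real.norm_eq_abs, Real.norm_eq_abs, abs_of_pos (inv_pos.2 hr0)]
    exact mul_le_mul_of_nonneg_right (hC r hr) (by positivity)
  intro r hr
  have hle : (w r / v r) ^ 2 ≤ 0 := by
    have h0 : Tendsto (fun r => (w r / v r) ^ 2) atTop (nhds 0) := by simpa using hylim.pow 2
    refine ge_of_tendsto h0 ?_
    filter_upwards [eventually_ge_atTop r] with s hs
    exact hy hr (lt_of_lt_of_le hr hs) hs
  have h0 : w r / v r = 0 := pow_eq_zero_iff two_ne_zero |>.1 (le_antisymm hle (sq_nonneg _))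
  rcases div_eq_zero_iff.1 h0 with h1 | h1
  · exact h1
  · exact absurd h1 (hvneg r hr).ne

end Comparison

/-- The operator `L₋ = -d²/dr² - (2/r) d/dr + 1 - Q²` over the radial functions has no
eigenvalue and no threshold resonance in `(0,1]`: for `λ ∈ (0,1]`, any twice continuously
differentiable solution of `L₋ u = λ u` which is bounded near `0` and for which
`r ↦ r u(r)` is bounded at infinity vanishes identically. -/
theorem L_minus_no_eigenvalue_or_resonance
    (Q : ℝ → ℝ)
    (hQreg : ContDiffOn ℝ 2 Q (Set.Ioi 0))
    (hQpos : ∀ r > (0:ℝ), 0 < Q r)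
    (hQode : ∀ r > (0:ℝ), -(deriv (deriv Q) r) - (2 / r) * deriv Q r + Q r - (Q r) ^ 3 = 0)
    (hQbdd : ∃ C : ℝ, ∀ r ∈ Set.Ioc (0:ℝ) 1, |Q r| ≤ C)
    (hQlim : Filter.Tendsto Q Filter.atTop (nhds 0))
    (lam : ℝ) (hlam : lam ∈ Set.Ioc (0:ℝ) 1)
    (u : ℝ → ℝ)
    (hureg : ContDiffOn ℝ 2 u (Set.Ioi 0))
    (huode : ∀ r > (0:ℝ),
      -(deriv (deriv u) r) - (2 / r) * deriv u r + (1 - lam - (Q r) ^ 2) * u r = 0)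
    (hu0 : ∃ C : ℝ, ∀ r ∈ Set.Ioc (0:ℝ) 1, |u r| ≤ C)
    (huinf : ∃ C : ℝ, ∀ r ∈ Set.Ici (1:ℝ), |r * u r| ≤ C) :
    ∀ r > (0:ℝ), u r = 0 := by
  have hQd := hasDerivAt_pair_of_contDiffOn hQreg
    (g := fun r => (1 - Q r ^ 2) * Q r - 2 / r * deriv Q r)
    (fun r hr => by linear_combination -(hQode r hr))
  have h : GroundState Q (deriv Q) :=
    ⟨hQpos, fun r hr => (hQd r hr).1, fun r hr => (hQd r hr).2, hQbdd, hQlim⟩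
  have hud := hasDerivAt_pair_of_contDiffOn hureg
    (g := fun r => (1 - lam - Q r ^ 2) * u r - 2 / r * deriv u r)
    (fun r hr => by linear_combination -(huode r hr))
  set w : ℝ → ℝ := fun r => r * u r with hwdef
  set w₁ : ℝ → ℝ := fun r => u r + r * deriv u r with hw₁def
  have hw : IsSol (fun r => 1 - lam - Q r ^ 2) w w₁ :=
    isSol_of_radial (fun r hr => (hud r hr).1) (fun r hr => (hud r hr).2)
  have hqc : ContinuousOn (fun r => 1 - lam - Q r ^ 2) (Ioi 0) :=
    continuousOn_const.sub (hQreg.continuousOn.pow 2)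
  obtain ⟨C, hC⟩ := hu0
  obtain ⟨D, hD⟩ := huinf
  have hwC : ∀ r ∈ Ioc (0:ℝ) 1, |w r| ≤ C * r := fun r hr => by
    rw [hwdef, abs_mul, abs_of_pos hr.1, mul_comm]
    exact mul_le_mul_of_nonneg_right (hC r hr) hr.1.le
  obtain ⟨a, ha, hwa⟩ : ∃ a > (0:ℝ), w a = 0 := by
    obtain ⟨s, hs, hs0⟩ := IsSol.exists_nonpos h hlam.1 hw hwC
    obtain ⟨t, ht, ht0⟩ := IsSol.exists_nonpos h hlam.1 hw.neg (C := C)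
      (fun r hr => by rw [abs_neg]; exact hwC r hr)
    have hwc : ContinuousOn w (Ioi 0) := fun x hx => (hw x hx).1.continuousAt.continuousWithinAt
    obtain ⟨x, hx, hx0⟩ := isPreconnected_Ioi.intermediate_value hs ht hwc
      ⟨hs0, neg_nonpos.1 ht0⟩
    exact ⟨x, hx, hx0⟩
  have hw0 : ∀ r > (0:ℝ), w r = 0 := by
    rcases le_or_gt (Q a) 1 with hQa | hQa
    · have hout := IsSol.eq_zero_outside h hlam hw hD ha hwa hQa
      have hd : HasDerivAt w 0 (a + 1) := by
        refine (hasDerivAt_const (a + 1) (0:ℝ)).congr_of_eventuallyEq ?_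
        filter_upwards [Ioi_mem_nhds (by linarith : a < a + 1)] with x hx using hout x hx
      exact hw.eq_zero_of_init hqc (by linarith : 0 < a + 1) (hout _ (by linarith))
        ((hw _ (by linarith)).1.unique hd)
    · obtain ⟨h1, h2⟩ := IsSol.eq_zero_inside h hlam hw hwC ha hwa hQa
      exact hw.eq_zero_of_init hqc (half_pos ha) h1 h2
  intro r hr
  rcases mul_eq_zero.1 (hw0 r hr) with h1 | h1
  · exact absurd h1 hr.ne'
  · exact h1
end

section
/- Let λ ∈ (0,1] and σ := √(1−λ). Suppose y₁ : (0,∞) → ℝ is a twice continuously differentiable solution of −y'' − (2/r)·y' + (1 − λ − Q²)·y = 0 on (0,∞) which is bounded near r = 0 with lim_{r→0⁺} y₁(r) = 1, and y₂ : (0,∞) → ℝ is a twice continuously differentiable solution of the same equation with lim_{r→∞} r·e^{σr}·y₂(r) = 1. Then the Wronskian at r = 5/2 satisfies |y₁(5/2)·y₂'(5/2) − y₂(5/2)·y₁'(5/2)| ≥ (17/1000)·λ. In particular y₁ and y₂ are linearly independent for every λ ∈ (0,1]. -/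
/-!
Write `φ = r Q`, `y = -r Q' / Q`, `g = -φ' / φ = (y - 1) / r` and `ζ = r² (Q² - 1)`. All quantitative
information on `Q` has to come from the equation alone.

**The profile.** An energy argument gives `Q' < 0` (`Qd_neg`), and the decay of `Q` makes `g` increase
to `1` (`gv_deriv_pos`, `gv_tendsto`). Taken as functions of `y`, the pair `(ζ, -r²)` solves a
cooperative system, with the single free parameter `p = lim r² / y` at `r = 0`. Hence a pair of
functions satisfying strict differential inequalities stays on one side of the profile (`barrier`);
explicit polynomials serve as such pairs (`barrier_poly`), the signs of their residuals being
verified in rational arithmetic. On the other hand, `m = 1 - g` satisfies `m' = 2 m - m² - Q²` and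
`m → 0` at infinity, which bounds `m / Q²` above and below (`tail_upper`, `tail_lower`). Where
`y = 11 / 5` these bounds contradict the barriers unless `0.1645 ≤ p ≤ 0.1741` (`p_window`). It
follows that `Q(0) ≤ 4.387` (`a_le`), and there is good control up to the radius `R` at which
`y = 8 / 5` (`exists_R`).

**The Wronskian.** For a solution `u` of `L₋ u = λ u` let `v = u / Q` and `J = r² (u Q' - u' Q)`. Then
`J' = λ φ² v` and `v' = -J / φ²`, and the constant `r² (y₁ y₂' - y₂ y₁')` equals `v₂ J₁ - v₁ J₂`. At
`r = R` both terms are bounded below: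
* `J₁` is compared with `r φ² ψ(y)`, where `ψ` is a polynomial (`y₁_bounds`);
* `v₂` is bounded by comparing `r y₂` with `U = φ^(1+τ) e^(2τr)`, `τ = 1 - σ`, which is a supersolution
  because `4 m + 2 m² ≤ Q²` beyond `R` (`four_m_le`, `y₂_lower`), and `-J₂` by the mass of `φ²` on
  `[R, ∞)` (`y₂_flux`).

As `λ` grows, `v₁` decreases, but the bound for `v₂` grows at least as fast (`tau_bound`), so the
estimate reduces to the case `τ = 0` (`numeric_bound`) and yields the Wronskian bound, proportional
to `λ`.
-/

open Real Set Filter MeasureTheory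

namespace LMinus

/-! ### Polynomials with rational coefficients and certified positivity -/

/-- The value at `x` of the polynomial whose coefficients, in increasing degree, are listed. -/
noncomputable def pev : List ℚ → ℝ → ℝ
  | [], _ => 0
  | a :: l, x => (a : ℝ) + x * pev l x

/-- Sum of two coefficient lists. -/
def padd : List ℚ → List ℚ → List ℚ
  | [], l => l
  | a :: l, [] => a :: l
  | a :: l, b :: m => (a + b) :: padd l m

/-- Scalar multiple of a coefficient list. -/
def psm (c : ℚ) : List ℚ → List ℚ
  | [] => []
  | a :: l => (c * a) :: psm c l

/-- Product of two coefficient lists. -/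
def pmul : List ℚ → List ℚ → List ℚ
  | [], _ => []
  | a :: l, m => padd (psm a m) (0 :: pmul l m)

/-- Formal derivative, in the Horner form `(a + x * l)' = l + x * l'`. -/
def pder : List ℚ → List ℚ
  | [] => []
  | _ :: l => padd l (0 :: pder l)

/-- Coefficients of `s ↦ l (c + s)`. -/
def pshift (c : ℚ) : List ℚ → List ℚ
  | [] => []
  | a :: l => padd [a] (pmul [c, 1] (pshift c l))

/-- A lower bound for the polynomial on `[0, h]`, by Horner evaluation. -/
def plb (h : ℚ) : List ℚ → ℚ
  | [] => 0
  | a :: l => a + min 0 (h * plb h l)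

/-- Checks positivity on each of the `n` consecutive intervals of length `h` starting at `c`. -/
def pchk (l : List ℚ) (h : ℚ) : ℕ → ℚ → Bool
  | 0, _ => true
  | n + 1, c => decide (0 < plb h (pshift c l)) && pchk l h n (c + h)

lemma pev_padd (l m : List ℚ) (x : ℝ) : pev (padd l m) x = pev l x + pev m x := by
  induction l generalizing m with
  | nil => simp [padd, pev]
  | cons a l ih =>
    cases m with
    | nil => simp [padd, pev]
    | cons b m => simp only [padd, pev, ih]; push_cast; ring

lemma pev_psm (c : ℚ) (l : List ℚ) (x : ℝ) : pev (psm c l) x = c * pev l x := by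
  induction l with
  | nil => simp [psm, pev]
  | cons a l ih => simp only [psm, pev, ih]; push_cast; ring

lemma pev_pmul (l m : List ℚ) (x : ℝ) : pev (pmul l m) x = pev l x * pev m x := by
  induction l with
  | nil => simp [pmul, pev]
  | cons a l ih => simp only [pmul, pev, ih, pev_padd, pev_psm]; push_cast; ring

lemma hasDerivAt_pev (l : List ℚ) (x : ℝ) : HasDerivAt (pev l) (pev (pder l) x) x := by
  induction l with
  | nil => simpa [pder, pev] using hasDerivAt_const x (0 : ℝ)
  | cons a l ih =>
    have h := ((hasDerivAt_id x).mul ih).const_add (a : ℝ)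
    have e : pev (pder (a :: l)) x = 1 * pev l x + id x * pev (pder l) x := by
      simp only [pder, pev_padd, pev, id]; push_cast; ring
    rw [e]
    exact h

lemma pev_pshift (c : ℚ) (l : List ℚ) (x : ℝ) : pev (pshift c l) x = pev l (c + x) := by
  induction l with
  | nil => simp [pshift, pev]
  | cons a l ih => simp only [pshift, pev_padd, pev_pmul, pev, ih]; push_cast; ring

lemma plb_le (h : ℚ) (l : List ℚ) (x : ℝ) (h0 : 0 ≤ x) (h1 : x ≤ h) :
    (plb h l : ℝ) ≤ pev l x := by
  induction l with
  | nil => simp [plb, pev]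
  | cons a l ih =>
    simp only [plb, pev]
    push_cast
    have h3 : min 0 ((h : ℝ) * plb h l) ≤ x * pev l x := by
      rcases le_total 0 (plb h l : ℝ) with hp | hp
      · exact (min_le_left _ _).trans (mul_nonneg h0 (hp.trans ih))
      · refine (min_le_right _ _).trans ?_
        nlinarith
    linarith

/-- A successful check proves positivity on the whole interval. -/
lemma pev_pos_of_pchk {l : List ℚ} {h : ℚ} {n : ℕ} {c : ℚ} (hc : pchk l h n c = true)
    (hn : n ≠ 0) {x : ℝ} (h0 : (c : ℝ) ≤ x) (h1 : x ≤ c + n * h) : 0 < pev l x := by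
  induction n generalizing c with
  | zero => exact absurd rfl hn
  | succ n ih =>
    simp only [pchk, Bool.and_eq_true, decide_eq_true_eq] at hc
    by_cases hx : x ≤ c + h
    · have h2 := plb_le h (pshift c l) (x - c) (by linarith) (by linarith)
      rw [pev_pshift] at h2
      have h3 : (0 : ℝ) < plb h (pshift c l) := by exact_mod_cast hc.1
      have h4 : (c : ℝ) + (x - c) = x := by ring
      rw [h4] at h2
      linarith
    · push Not at hx
      push_cast at h1
      have hn' : n ≠ 0 := by
        rintro rfl
        norm_num at h1
        linarith
      exact ih hc.2 hn' (by push_cast; linarith) (by push_cast; linarith)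

/-- The factor `E` in `y² - y + Z = y E`, where `Z = 3 y - X y²`. -/
def pE (X : List ℚ) : List ℚ := padd [2, 1] (pmul [0, -1] X)

/-- First residual of a barrier pair, see `barrier`. -/
def pR1 (X P : List ℚ) : List ℚ :=
  padd [9] (padd (psm (-5) X) (padd (psm 2 P) (padd (pmul [0, -4] X)
    (padd (pmul [0, 2] (pmul X X)) (pmul [0, -1] (pmul (pder X) (pE X)))))))

/-- Second residual of a barrier pair, see `barrier`. -/
def pR2 (X P : List ℚ) : List ℚ :=
  padd (pmul P (padd X [-1])) (psm (-1) (pmul (pder P) (pE X)))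

/-- Residual for `ψ' y E + ψ (3 - 2 y) = 1`. -/
def pRψ (X S : List ℚ) : List ℚ :=
  padd (pmul (pder S) (pmul [0, 1] (pE X))) (padd (pmul S [3, -2]) [-1])

/-- `X` of the barrier pair used on `0 ≤ y ≤ 11 / 5` when `p > 0.1741`, see `barrier` for the roles of
`X` and `P`. These and the following coefficients
are rational fits to numerical solutions; only the sign of the residuals matters. -/
def XL : List ℚ := [1.86926, -0.04909, -0.01293, -0.01481, 0.01117, -0.00835, 0.00221]
/-- `P` of the barrier pair used on `0 ≤ y ≤ 11 / 5` when `p > 0.1741`. -/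
def PL : List ℚ := [0.1741, 0.07434, 0.03111, 0.01313, -0.00002, 0.00444, -0.00043]
/-- `X` of the barrier pair used on `0 ≤ y ≤ 11 / 5` when `p < 0.1645`. -/
def XU : List ℚ := [1.8662, -0.05061, -0.01973, -0.00228, -0.00362, -0.001, 0.00066]
/-- `P` of the barrier pair used on `0 ≤ y ≤ 11 / 5` when `p < 0.1645`. -/
def PU : List ℚ := [0.1645, 0.07151, 0.02761, 0.02263, -0.01758, 0.0165, -0.00372]
/-- `X` of the barrier pair bounding `ζ` above and `r²` below on `0 ≤ y ≤ 8 / 5`. -/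
def XA : List ℚ := [1.86537, -0.05177, -0.01703, -0.00987, 0.00378, -0.00447, 0.00121]
/-- `P` of the barrier pair bounding `ζ` above and `r²` below on `0 ≤ y ≤ 8 / 5`. -/
def PA : List ℚ := [0.1644, 0.0705, 0.02878, 0.01478, -0.00684, 0.01023, -0.00256]
/-- `X` of the barrier pair bounding `ζ` below and `r²` above on `0 ≤ y ≤ 8 / 5`. -/
def XB : List ℚ := [1.87009, -0.04795, -0.01416, -0.01055, 0.00715, -0.00638, 0.00195]
/-- `P` of the barrier pair bounding `ζ` below and `r²` above on `0 ≤ y ≤ 8 / 5`. -/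
def PB : List ℚ := [0.1742, 0.07586, 0.0317, 0.01411, -0.00177, 0.00591, -0.00061]
/-- Subsolution of `ψ' y E + ψ (3 - 2 y) = 1` on `0 ≤ y ≤ 8 / 5`, where `E` comes from `XA`. -/
def SA : List ℚ := [0.33266, 0.13311, 0.0545, 0.02088, 0.01132, -0.00085, 0.00326]
/-- Supersolution of `ψ' y E + ψ (3 - 2 y) = 1` on `0 ≤ y ≤ 8 / 5`, where `E` comes from `XB`. -/
def SB : List ℚ := [0.334, 0.13307, 0.06009, 0.00325, 0.03905, -0.02065, 0.00904]

lemma chkL1 : pchk (psm 1 (pR1 XL PL)) (11 / 40) 8 0 = true := by decide +kernel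
lemma chkL2 : pchk (psm 1 (pR2 XL PL)) (11 / 40) 8 0 = true := by decide +kernel
lemma chkL3 : pchk (pder (pmul [0, 1] PL)) (11 / 40) 8 0 = true := by decide +kernel
lemma chkU1 : pchk (psm (-1) (pR1 XU PU)) (1 / 10) 22 0 = true := by decide +kernel
lemma chkU2 : pchk (psm (-1) (pR2 XU PU)) (1 / 10) 22 0 = true := by decide +kernel
lemma chkU3 : pchk (pder (pmul [0, 1] PU)) (1 / 10) 22 0 = true := by decide +kernel
lemma chkA1 : pchk (psm 1 (pR1 XA PA)) (1 / 10) 16 0 = true := by decide +kernel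
lemma chkA2 : pchk (psm 1 (pR2 XA PA)) (1 / 10) 16 0 = true := by decide +kernel
lemma chkA3 : pchk (pder (pmul [0, 1] PA)) (1 / 10) 16 0 = true := by decide +kernel
lemma chkB1 : pchk (psm (-1) (pR1 XB PB)) (1 / 5) 8 0 = true := by decide +kernel
lemma chkB2 : pchk (psm (-1) (pR2 XB PB)) (1 / 5) 8 0 = true := by decide +kernel
lemma chkB3 : pchk (pder (pmul [0, 1] PB)) (1 / 5) 8 0 = true := by decide +kernel
lemma chkSA1 : pchk (psm (-1) (pRψ XA SA)) (1 / 5) 8 0 = true := by decide +kernel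
lemma chkSA2 : pchk SA (2 / 5) 4 0 = true := by decide +kernel
lemma chkSA3 : pchk (pder SA) (2 / 5) 4 0 = true := by decide +kernel
lemma chkSB1 : pchk (pRψ XB SB) (1 / 5) 8 0 = true := by decide +kernel
lemma chkSB2 : pchk SB (2 / 5) 4 0 = true := by decide +kernel
lemma chkSB3 : pchk (pder SB) (2 / 5) 4 0 = true := by decide +kernel

/-! ### One-variable comparison principles -/

lemma mono_of_deriv {f f' : ℝ → ℝ} {a b : ℝ} (hab : a ≤ b)
    (hf : ∀ x ∈ Icc a b, HasDerivAt f (f' x) x) (h : ∀ x ∈ Icc a b, 0 ≤ f' x) : f a ≤ f b := by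
  have hm : MonotoneOn f (Icc a b) := by
    apply monotoneOn_of_deriv_nonneg (convex_Icc a b)
    · exact fun x hx => (hf x hx).continuousAt.continuousWithinAt
    · intro x hx
      rw [interior_Icc] at hx
      exact (hf x (Ioo_subset_Icc_self hx)).differentiableAt.differentiableWithinAt
    · intro x hx
      rw [interior_Icc] at hx
      rw [(hf x (Ioo_subset_Icc_self hx)).deriv]
      exact h x (Ioo_subset_Icc_self hx)
  exact hm (left_mem_Icc.2 hab) (right_mem_Icc.2 hab) hab

lemma anti_of_deriv {f f' : ℝ → ℝ} {a b : ℝ} (hab : a ≤ b)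
    (hf : ∀ x ∈ Icc a b, HasDerivAt f (f' x) x) (h : ∀ x ∈ Icc a b, f' x ≤ 0) : f b ≤ f a := by
  have := mono_of_deriv (f := fun x => -f x) (f' := fun x => -f' x) hab
    (fun x hx => (hf x hx).neg) (fun x hx => by have := h x hx; linarith)
  linarith

lemma strictMono_of_deriv {f f' : ℝ → ℝ} {a b : ℝ} (hab : a < b)
    (hf : ∀ x ∈ Icc a b, HasDerivAt f (f' x) x) (h : ∀ x ∈ Icc a b, 0 < f' x) : f a < f b := by
  have hm : StrictMonoOn f (Icc a b) := by
    apply strictMonoOn_of_deriv_pos (convex_Icc a b)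
    · exact fun x hx => (hf x hx).continuousAt.continuousWithinAt
    · intro x hx
      rw [interior_Icc] at hx
      rw [(hf x (Ioo_subset_Icc_self hx)).deriv]
      exact h x (Ioo_subset_Icc_self hx)
  exact hm (left_mem_Icc.2 hab.le) (right_mem_Icc.2 hab.le) hab

/-- A function with nonnegative derivative on `(0, b]` dominates its limit at `0`. -/
lemma lim_zero_le {f f' : ℝ → ℝ} {b l : ℝ} (hb : 0 < b)
    (hf : ∀ x ∈ Ioc 0 b, HasDerivAt f (f' x) x) (h : ∀ x ∈ Ioc 0 b, 0 ≤ f' x)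
    (hl : Tendsto f (nhdsWithin 0 (Ioi 0)) (nhds l)) : l ≤ f b := by
  refine le_of_tendsto hl ?_
  filter_upwards [Ioc_mem_nhdsGT hb] with x hx
  exact mono_of_deriv hx.2 (fun y hy => hf y ⟨hx.1.trans_le hy.1, hy.2⟩)
    (fun y hy => h y ⟨hx.1.trans_le hy.1, hy.2⟩)

/-- A value that can only be crossed upwards is not crossed downwards. -/
lemma ge_of_crossing {f f' : ℝ → ℝ} {a b c : ℝ} (hab : a ≤ b)
    (hf : ∀ x ∈ Icc a b, HasDerivAt f (f' x) x) (ha : c ≤ f a)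
    (h : ∀ x ∈ Icc a b, f x = c → 0 < f' x) : c ≤ f b := by
  have := image_le_of_deriv_right_lt_deriv_boundary' (f := fun x => -f x) (f' := fun x => -f' x)
    (a := a) (b := b) (B := fun _ => -c) (B' := fun _ => 0)
    (fun x hx => (hf x hx).continuousAt.neg.continuousWithinAt)
    (fun x hx => (hf x ⟨hx.1, hx.2.le⟩).neg.hasDerivWithinAt) (by simpa using ha)
    continuousOn_const (fun x _ => hasDerivWithinAt_const _ _ _)
    (fun x hx hxc => by
      have := h x ⟨hx.1, hx.2.le⟩ (by linarith)
      linarith) (right_mem_Icc.2 hab)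
  linarith

/-- If `f` increases wherever it is positive and tends to `0`, it is nonpositive. -/
lemma nonpos_of_tendsto_zero {f f' : ℝ → ℝ} {r₀ : ℝ}
    (hf : ∀ x, r₀ ≤ x → HasDerivAt f (f' x) x) (h : ∀ x, r₀ ≤ x → 0 < f x → 0 < f' x)
    (hl : Tendsto f atTop (nhds 0)) : ∀ x, r₀ ≤ x → f x ≤ 0 := by
  intro x hx
  by_contra hpos
  push Not at hpos
  have hge : f x ≤ 0 := by
    refine ge_of_tendsto hl ?_
    filter_upwards [eventually_ge_atTop x] with z hz
    exact ge_of_crossing hz (fun w hw => hf w (hx.trans hw.1)) le_rfl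
      (fun w hw hw' => h w (hx.trans hw.1) (by linarith))
  linarith

/-- If each initial segment of positivity forces positivity at its right endpoint, a continuous
function that is positive near `0` stays positive. -/
lemma pos_of_step {f : ℝ → ℝ} {b : ℝ} (hc : ∀ x ∈ Ioc 0 b, ContinuousAt f x)
    (h0 : ∀ᶠ x in nhdsWithin (0 : ℝ) (Ioi 0), 0 < f x)
    (h : ∀ s ∈ Ioc 0 b, (∀ x ∈ Ioo 0 s, 0 < f x) → 0 < f s) : ∀ s ∈ Ioc 0 b, 0 < f s := by
  by_contra hcon
  push Not at hcon
  obtain ⟨t, ht, htf⟩ := hcon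
  set S : Set ℝ := {x | x ∈ Ioc 0 b ∧ f x ≤ 0} with hS
  have hne : S.Nonempty := ⟨t, ht, htf⟩
  have hbd : BddBelow S := ⟨0, fun x hx => hx.1.1.le⟩
  obtain ⟨e, he, hefs⟩ := mem_nhdsGT_iff_exists_Ioo_subset.1 h0
  have he0 : (0 : ℝ) < e := he
  have hge : e ≤ sInf S := by
    refine le_csInf hne fun x hx => ?_
    by_contra hxe
    push Not at hxe
    have : 0 < f x := hefs ⟨hx.1.1, hxe⟩
    linarith [hx.2]
  have hle : sInf S ≤ b := (csInf_le hbd ⟨ht, htf⟩).trans ht.2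
  have hmem : sInf S ∈ Ioc 0 b := ⟨he0.trans_le hge, hle⟩
  have hpos : 0 < f (sInf S) := by
    refine h _ hmem fun x hx => ?_
    by_contra hxf
    push Not at hxf
    have := csInf_le hbd ⟨⟨hx.1, hx.2.le.trans hle⟩, hxf⟩
    linarith [hx.2]
  have hev := (hc _ hmem).eventually (lt_mem_nhds hpos)
  have hcl := csInf_mem_closure hne hbd
  obtain ⟨x, hx1, hx2⟩ := (mem_closure_iff_frequently.1 hcl).and_eventually hev |>.exists
  linarith [hx1.2]

/-- Two functions, positive near `0`, such that neither can be the first one to vanish. -/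
lemma pos_pair {f f' g g' : ℝ → ℝ} {b : ℝ} (hf : ∀ x ∈ Ioc 0 b, HasDerivAt f (f' x) x)
    (hg : ∀ x ∈ Ioc 0 b, HasDerivAt g (g' x) x)
    (f0 : ∀ᶠ x in nhdsWithin (0 : ℝ) (Ioi 0), 0 < f x)
    (g0 : ∀ᶠ x in nhdsWithin (0 : ℝ) (Ioi 0), 0 < g x)
    (h1 : ∀ x ∈ Ioc 0 b, f x = 0 → 0 ≤ g x → 0 < f' x)
    (h2 : ∀ x ∈ Ioc 0 b, g x = 0 → 0 ≤ f x → 0 < g' x) :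
    ∀ x ∈ Ioc 0 b, 0 < f x ∧ 0 < g x := by
  -- A function positive on `(0, s)` that vanishes at `s` has nonpositive derivative there.
  have key : ∀ {F : ℝ → ℝ} {D s : ℝ}, 0 < s → HasDerivAt F D s → (∀ x ∈ Ioo 0 s, 0 < F x) →
      0 ≤ F s ∧ (F s = 0 → D ≤ 0) := by
    intro F D s hs hD hF
    have hnb : ∀ᶠ x in nhdsWithin s (Iio s), 0 < F x := by
      filter_upwards [Ioo_mem_nhdsLT hs] with x hx using hF x hx
    refine ⟨ge_of_tendsto hD.continuousAt.continuousWithinAt.tendsto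
      (hnb.mono fun x hx => hx.le), fun h0 => ?_⟩
    have hsl := hD.hasDerivWithinAt (s := Iio s)
    rw [hasDerivWithinAt_iff_tendsto_slope' (by simp)] at hsl
    refine le_of_tendsto hsl ?_
    filter_upwards [hnb, self_mem_nhdsWithin] with x hx hxs
    rw [slope_def_field, h0]
    exact div_nonpos_of_nonneg_of_nonpos (by linarith) (by simp at hxs; linarith)
  have := pos_of_step (f := fun x => min (f x) (g x)) (b := b)
    (fun x hx => (hf x hx).continuousAt.min (hg x hx).continuousAt)
    (by filter_upwards [f0, g0] with x hx hy using lt_min hx hy)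
    (by
      intro s hs hpos
      obtain ⟨hf1, hf2⟩ := key hs.1 (hf s hs) (fun x hx => (lt_min_iff.1 (hpos x hx)).1)
      obtain ⟨hg1, hg2⟩ := key hs.1 (hg s hs) (fun x hx => (lt_min_iff.1 (hpos x hx)).2)
      refine lt_min (lt_of_le_of_ne hf1 fun e => ?_) (lt_of_le_of_ne hg1 fun e => ?_)
      · linarith [hf2 e.symm, h1 s hs e.symm hg1]
      · linarith [hg2 e.symm, h2 s hs e.symm hf1])
  exact fun x hx => lt_min_iff.1 (this x hx)

/-- A derivative bounded below by `δ > 0` forces unbounded growth. -/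
lemma unbounded_of_deriv {f f' : ℝ → ℝ} {r₀ δ C : ℝ} (hδ : 0 < δ)
    (hf : ∀ x, r₀ ≤ x → HasDerivAt f (f' x) x) (h : ∀ x, r₀ ≤ x → δ ≤ f' x)
    (hC : ∀ᶠ x in atTop, f x ≤ C) : False := by
  have hev : ∀ᶠ x in atTop, f r₀ + δ * (x - r₀) ≤ C := by
    filter_upwards [hC, eventually_ge_atTop r₀] with x hx hx0
    have := mono_of_deriv (f := fun x => f x - δ * x) (f' := fun x => f' x - δ * 1) hx0
      (fun y hy => (hf y hy.1).sub ((hasDerivAt_id y).const_mul δ))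
      (fun y hy => by have := h y hy.1; linarith)
    linarith
  have ht : Tendsto (fun x : ℝ => f r₀ + δ * (x - r₀)) atTop atTop :=
    tendsto_atTop_add_const_left _ _ ((tendsto_atTop_add_const_right _ _ tendsto_id).const_mul_atTop hδ)
  obtain ⟨x, hx1, hx2⟩ := (hev.and (ht.eventually_gt_atTop C)).exists
  linarith

/-- One-sided estimate behind `flux_bound`. -/
lemma flux_le {f fd q : ℝ → ℝ} {δ K C : ℝ}
    (hf : ∀ r ∈ Ioc 0 δ, HasDerivAt f (fd r) r)
    (hq : ∀ r ∈ Ioc 0 δ, HasDerivAt (fun r => r ^ 2 * fd r) (r ^ 2 * q r) r)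
    (hK : ∀ r ∈ Ioc 0 δ, q r ≤ K) (hC : ∀ r ∈ Ioc 0 δ, |f r| ≤ C) :
    ∀ r ∈ Ioc 0 δ, fd r ≤ K / 3 * r := by
  intro r₁ hr₁
  by_contra hcon
  push Not at hcon
  set c := r₁ ^ 2 * fd r₁ - K * r₁ ^ 3 / 3 with hc
  have hcpos : 0 < c := by
    have : 0 < r₁ ^ 2 * (fd r₁ - K / 3 * r₁) := mul_pos (pow_pos hr₁.1 2) (by linarith)
    rw [hc]; linarith
  -- The flux stays above `c` towards the origin, so `f + c / r` is increasing there.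
  have hfl : ∀ r ∈ Ioc 0 r₁, c ≤ r ^ 2 * fd r - K * r ^ 3 / 3 := by
    intro r hr
    refine anti_of_deriv (f := fun r => r ^ 2 * fd r - K * r ^ 3 / 3)
      (f' := fun r => r ^ 2 * q r - K * (3 * r ^ 2) / 3) hr.2 (fun x hx => ?_) (fun x hx => ?_)
    · have h3 : HasDerivAt (fun r : ℝ => r ^ 3) (3 * x ^ 2) x := by simpa using hasDerivAt_pow 3 x
      exact (hq x ⟨hr.1.trans_le hx.1, hx.2.trans hr₁.2⟩).sub ((h3.const_mul K).div_const 3)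
    · have := hK x ⟨hr.1.trans_le hx.1, hx.2.trans hr₁.2⟩
      nlinarith [sq_nonneg x]
  have hK0 : ∀ r ∈ Ioc 0 r₁, c / r ^ 2 + K * r / 3 ≤ fd r := by
    intro r hr
    have h1 := hfl r hr
    have h2 : 0 < r ^ 2 := pow_pos hr.1 2
    have : c / r ^ 2 ≤ fd r - K * r / 3 := by
      rw [div_le_iff₀ h2]; linarith
    linarith
  have hbd : ∀ r ∈ Ioc 0 r₁, c / r ≤ 2 * C + c / r₁ + |K| * r₁ ^ 2 := by
    intro r hr
    have hm := mono_of_deriv (f := fun r => f r + c * r⁻¹ - K * r ^ 2 / 6)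
      (f' := fun r => fd r + c * (-(r ^ 2)⁻¹) - K * (2 * r) / 6) hr.2
      (fun x hx => by
        have h2 : HasDerivAt (fun r : ℝ => r ^ 2) (2 * x) x := by simpa using hasDerivAt_pow 2 x
        have hx0 : x ≠ 0 := (hr.1.trans_le hx.1).ne'
        exact ((hf x ⟨hr.1.trans_le hx.1, hx.2.trans hr₁.2⟩).add
          ((hasDerivAt_inv hx0).const_mul c)).sub ((h2.const_mul K).div_const 6))
      (fun x hx => by
        have := hK0 x ⟨hr.1.trans_le hx.1, hx.2⟩
        rw [div_eq_mul_inv] at this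
        linarith)
    have h1 := abs_le.1 (hC r ⟨hr.1, hr.2.trans hr₁.2⟩)
    have h2 := abs_le.1 (hC r₁ hr₁)
    rw [div_eq_mul_inv, div_eq_mul_inv]
    have h3 : r ^ 2 ≤ r₁ ^ 2 := pow_le_pow_left₀ hr.1.le hr.2 2
    have h4 : K * r ^ 2 ≤ |K| * r₁ ^ 2 :=
      mul_le_mul (le_abs_self K) h3 (sq_nonneg r) (abs_nonneg K)
    have h5 : -(K * r₁ ^ 2) ≤ |K| * r₁ ^ 2 := by
      have := mul_le_mul_of_nonneg_right (neg_le_abs K) (sq_nonneg r₁)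
      linarith
    have h6 : 0 ≤ |K| * r₁ ^ 2 := by positivity
    linarith
  have ht : Tendsto (fun r : ℝ => c / r) (nhdsWithin 0 (Ioi 0)) atTop :=
    tendsto_inv_nhdsGT_zero.const_mul_atTop hcpos
  have hev : ∀ᶠ r in nhdsWithin (0 : ℝ) (Ioi 0), r ∈ Ioc 0 r₁ := Ioc_mem_nhdsGT hr₁.1
  obtain ⟨r, hr1, hr2⟩ :=
    (hev.and (ht.eventually_gt_atTop (2 * C + c / r₁ + |K| * r₁ ^ 2))).exists
  linarith [hbd r hr1]

/-- A bounded solution of `(r² f')' = r² q` with `q` bounded has `f' = O(r)` at the origin: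
the singular mode `f' ~ c / r²` would make `f` unbounded. -/
lemma flux_bound {f fd q : ℝ → ℝ} {δ K C : ℝ}
    (hf : ∀ r ∈ Ioc 0 δ, HasDerivAt f (fd r) r)
    (hq : ∀ r ∈ Ioc 0 δ, HasDerivAt (fun r => r ^ 2 * fd r) (r ^ 2 * q r) r)
    (hK : ∀ r ∈ Ioc 0 δ, |q r| ≤ K) (hC : ∀ r ∈ Ioc 0 δ, |f r| ≤ C) :
    ∀ r ∈ Ioc 0 δ, |fd r| ≤ K / 3 * r := by
  intro r hr
  have h1 := flux_le hf hq (fun x hx => (abs_le.1 (hK x hx)).2) hC r hr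
  have h2 := flux_le (f := fun r => -f r) (fd := fun r => -fd r) (q := fun r => -q r) (K := K)
    (C := C) (fun x hx => (hf x hx).neg)
    (fun x hx => by
      have := (hq x hx).neg
      refine (this.congr_deriv (by ring)).congr_of_eventuallyEq (.of_forall fun y => ?_)
      simp) (fun x hx => by have := (abs_le.1 (hK x hx)).1; linarith)
    (fun x hx => by rw [abs_neg]; exact hC x hx) r hr
  exact abs_le.2 ⟨by linarith, h1⟩

/-! ### The ground state: monotonicity -/

/-- The data of the ground state: `Q` is positive, bounded near `0`, tends to `0` at infinity and
solves the ground state equation, `Qd` being its derivative. -/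
structure GS (Q Qd : ℝ → ℝ) : Prop where
  pos : ∀ r, 0 < r → 0 < Q r
  d1 : ∀ r, 0 < r → HasDerivAt Q (Qd r) r
  d2 : ∀ r, 0 < r → HasDerivAt Qd (-(2 / r) * Qd r + Q r - Q r ^ 3) r
  bdd : ∃ C : ℝ, ∀ r ∈ Ioc (0 : ℝ) 1, |Q r| ≤ C
  lim : Tendsto Q atTop (nhds 0)

/-- The logarithmic slope `y = -r Q' / Q`. -/
noncomputable def yv (Q Qd : ℝ → ℝ) (r : ℝ) : ℝ := -(r * Qd r) / Q r

/-- `g = -φ' / φ` for `φ = r Q`, in terms of `y`. -/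
noncomputable def gv (Q Qd : ℝ → ℝ) (r : ℝ) : ℝ := (yv Q Qd r - 1) / r

lemma gt_pow_two (x : ℝ) : HasDerivAt (fun r : ℝ => r ^ 2) (2 * x) x := by
  simpa using hasDerivAt_pow 2 x

/-- A function with bounded derivative on `(0, 1]` has a limit at `0`. -/
lemma exists_lim_zero {f fd : ℝ → ℝ} {K : ℝ} (hf : ∀ r ∈ Ioc (0 : ℝ) 1, HasDerivAt f (fd r) r)
    (hK : ∀ r ∈ Ioc (0 : ℝ) 1, |fd r| ≤ K) :
    ∃ a, Tendsto f (nhdsWithin 0 (Ioi 0)) (nhds a) := by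
  have hL : LipschitzOnWith K.toNNReal f (Ioc 0 1) := by
    refine Convex.lipschitzOnWith_of_nnnorm_hasDerivWithin_le (convex_Ioc 0 1)
      (fun x hx => (hf x hx).hasDerivWithinAt) (fun x hx => ?_)
    rw [← NNReal.coe_le_coe, coe_nnnorm, Real.norm_eq_abs]
    exact (hK x hx).trans (Real.le_coe_toNNReal K)
  obtain ⟨G, hG, hE⟩ := hL.extend_real
  refine ⟨G 0, ?_⟩
  have h1 : Tendsto G (nhdsWithin 0 (Ioi 0)) (nhds (G 0)) :=
    hG.continuous.continuousAt.continuousWithinAt.tendsto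
  refine h1.congr' ?_
  filter_upwards [Ioc_mem_nhdsGT (zero_lt_one' ℝ)] with x hx
  exact (hE hx).symm

variable {Q Qd : ℝ → ℝ}

lemma Qd_eq (h : GS Q Qd) {r : ℝ} (hr : 0 < r) : Qd r = -(Q r * (1 / r + gv Q Qd r)) := by
  have := (h.pos r hr).ne'
  unfold gv yv
  field_simp
  ring

lemma yv_eq {r : ℝ} (hr : 0 < r) : yv Q Qd r = 1 + r * gv Q Qd r := by
  unfold gv
  field_simp
  ring

lemma hasDerivAt_yv (h : GS Q Qd) {r : ℝ} (hr : 0 < r) : HasDerivAt (yv Q Qd)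
    ((yv Q Qd r ^ 2 - yv Q Qd r + r ^ 2 * (Q r ^ 2 - 1)) / r) r := by
  have hQ := (h.pos r hr).ne'
  have h1 := (((hasDerivAt_id r).mul (h.d2 r hr)).neg).div (h.d1 r hr) hQ
  refine h1.congr_deriv ?_
  simp only [yv, id, Pi.neg_apply, Pi.mul_apply]
  field_simp
  ring

lemma hasDerivAt_gv (h : GS Q Qd) {r : ℝ} (hr : 0 < r) : HasDerivAt (gv Q Qd)
    (Q r ^ 2 - 1 + gv Q Qd r ^ 2) r := by
  have h1 := ((hasDerivAt_yv h hr).sub_const 1).div (hasDerivAt_id r) hr.ne'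
  refine h1.congr_deriv ?_
  simp only [gv, id]
  field_simp
  ring

lemma hasDerivAt_Qsq (h : GS Q Qd) {r : ℝ} (hr : 0 < r) : HasDerivAt (fun r => Q r ^ 2)
    (-2 * Q r ^ 2 * (1 / r + gv Q Qd r)) r := by
  have h1 := (h.d1 r hr).pow 2
  refine h1.congr_deriv ?_
  rw [Qd_eq h hr]
  push_cast
  ring

lemma hasDerivAt_phi (h : GS Q Qd) {r : ℝ} (hr : 0 < r) : HasDerivAt (fun r => r * Q r)
    (-(gv Q Qd r * (r * Q r))) r := by
  refine ((hasDerivAt_id r).mul (h.d1 r hr)).congr_deriv ?_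
  rw [Qd_eq h hr]
  simp only [id]
  field_simp
  ring

/-- `φ' = -g φ` solves `φ'' = φ - φ Q²`. -/
lemma hasDerivAt_phid (h : GS Q Qd) {r : ℝ} (hr : 0 < r) :
    HasDerivAt (fun r => -(gv Q Qd r * (r * Q r))) (r * Q r * (1 - Q r ^ 2)) r := by
  refine ((hasDerivAt_gv h hr).mul (hasDerivAt_phi h hr)).neg.congr_deriv ?_
  ring

lemma hasDerivAt_flux (h : GS Q Qd) {r : ℝ} (hr : 0 < r) :
    HasDerivAt (fun r => r ^ 2 * Qd r) (r ^ 2 * (Q r - Q r ^ 3)) r := by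
  refine ((gt_pow_two r).mul (h.d2 r hr)).congr_deriv ?_
  field_simp
  ring

lemma origin_bound (h : GS Q Qd) : ∃ K : ℝ, 0 ≤ K ∧ ∀ r ∈ Ioc (0 : ℝ) 1, |Qd r| ≤ K * r := by
  obtain ⟨C, hC⟩ := h.bdd
  have hC0 : 0 ≤ C := (abs_nonneg _).trans (hC 1 ⟨one_pos, le_rfl⟩)
  refine ⟨(C + C ^ 3) / 3, by positivity, flux_bound (q := fun r => Q r - Q r ^ 3)
    (fun r hr => h.d1 r hr.1) (fun r hr => hasDerivAt_flux h hr.1) (fun r hr => ?_) hC⟩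
  have h1 := hC r hr
  have h2 : |Q r| ^ 3 ≤ C ^ 3 := pow_le_pow_left₀ (abs_nonneg _) h1 3
  calc |Q r - Q r ^ 3| ≤ |Q r| + |Q r ^ 3| := abs_sub _ _
    _ ≤ C + C ^ 3 := by rw [abs_pow]; linarith

/-- `φ' + φ > 0`: otherwise `φ` would follow the growing solution down to `-∞`. -/
lemma gv_lt_one (h : GS Q Qd) {r : ℝ} (hr : 0 < r) : gv Q Qd r < 1 := by
  by_contra hcon
  push Not at hcon
  set k : ℝ → ℝ := fun x => (-(gv Q Qd x * (x * Q x)) + x * Q x) * exp (-x) with hk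
  have hkd : ∀ x, 0 < x → HasDerivAt k (-((x * Q x) * Q x ^ 2 * exp (-x))) x := by
    intro x hx
    refine (((hasDerivAt_phid h hx).add (hasDerivAt_phi h hx)).mul
      (hasDerivAt_neg x).exp).congr_deriv ?_
    simp only [Pi.add_apply]
    ring
  have hk0 : k r ≤ 0 := by
    have : 0 < r * Q r := mul_pos hr (h.pos r hr)
    refine mul_nonpos_of_nonpos_of_nonneg ?_ (exp_pos _).le
    nlinarith
  have hneg : ∀ x, 0 < x → 0 < (x * Q x) * Q x ^ 2 * exp (-x) := fun x hx => by
    have := h.pos x hx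
    positivity
  have hk1 : k (r + 1) < 0 := by
    have := strictMono_of_deriv (f := fun x => -k x) (a := r) (b := r + 1) (by linarith)
      (fun x hx => (hkd x (hr.trans_le hx.1)).neg) (fun x hx => by
        have := hneg x (hr.trans_le hx.1)
        linarith)
    linarith
  refine unbounded_of_deriv (f := fun x => -((x * Q x) * exp x))
    (f' := fun x => -(-(gv Q Qd x * (x * Q x)) * exp x + (x * Q x) * exp x)) (r₀ := r + 1)
    (δ := -k (r + 1)) (C := 0) (by linarith)
    (fun x hx => ((hasDerivAt_phi h (by linarith)).mul (hasDerivAt_exp x)).neg)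
    (fun x hx => ?_) ?_
  · have hkx : k x ≤ k (r + 1) := anti_of_deriv hx
      (fun z hz => hkd z (by linarith [hz.1])) (fun z hz => by
        have := hneg z (by linarith [hz.1])
        linarith)
    have he : -(-(gv Q Qd x * (x * Q x)) * exp x + (x * Q x) * exp x)
        = -k x * (exp x * exp x) := by
      rw [hk]
      simp only
      have : exp (-x) * exp x = 1 := by rw [← exp_add]; simp
      linear_combination (-(exp x) * (-(gv Q Qd x * (x * Q x)) + x * Q x)) * -this
    rw [he]
    have h1 : 1 ≤ exp x := one_le_exp (by linarith)
    nlinarith [mul_le_mul h1 h1 zero_le_one (by linarith)]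
  · filter_upwards [eventually_gt_atTop 0] with x hx
    have := h.pos x hx
    have : 0 < (x * Q x) * exp x := by positivity
    linarith

/-- Far out `φ` is convex, so it must decrease: otherwise it would grow linearly. -/
lemma tail_gv_pos (h : GS Q Qd) : ∃ R₀, 1 ≤ R₀ ∧ ∀ r, R₀ ≤ r → 0 < gv Q Qd r := by
  obtain ⟨R₁, hR₁⟩ := eventually_atTop.1 (h.lim.eventually_lt_const (show (0 : ℝ) < 1 / 2 by norm_num))
  refine ⟨max R₁ 1, le_max_right _ _, fun r hr => ?_⟩
  by_contra hcon
  push Not at hcon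
  have hr1 : 1 ≤ r := (le_max_right _ _).trans hr
  have hrR : R₁ ≤ r := (le_max_left _ _).trans hr
  set k : ℝ → ℝ := fun x => -(gv Q Qd x * (x * Q x)) with hk
  have hpos : ∀ x, r ≤ x → 0 < x * Q x * (1 - Q x ^ 2) := by
    intro x hx
    have h1 := h.pos x (by linarith)
    have h2 := hR₁ x (hrR.trans hx)
    have : 0 < 1 - Q x ^ 2 := by nlinarith
    have : 0 < x := by linarith
    positivity
  have hk0 : 0 ≤ k r := by
    have : 0 < r * Q r := mul_pos (by linarith) (h.pos r (by linarith))
    simp only [hk]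
    nlinarith
  have hk1 : k r < k (r + 1) := strictMono_of_deriv (by linarith)
    (fun x hx => hasDerivAt_phid h (by linarith [hx.1])) (fun x hx => hpos x hx.1)
  have hδ : 0 < k (r + 1) := by linarith
  set δ := k (r + 1) with hδd
  have hge : ∀ x, r + 1 ≤ x → δ * (x - (r + 1)) ≤ x * Q x := by
    intro x hx
    have := mono_of_deriv (f := fun x => x * Q x - δ * x) (f' := fun x => k x - δ * 1) hx
      (fun z hz => (hasDerivAt_phi h (by linarith [hz.1])).sub ((hasDerivAt_id z).const_mul δ))
      (fun z hz => by
        have : δ ≤ k z := mono_of_deriv (f := k) hz.1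
          (fun w hw => hasDerivAt_phid h (by linarith [hw.1])) (fun w hw => (hpos w (by linarith [hw.1])).le)
        linarith)
    have h1 : 0 < (r + 1) * Q (r + 1) := mul_pos (by linarith) (h.pos _ (by linarith))
    linarith
  have hev := (h.lim.eventually_lt_const (show (0 : ℝ) < δ / 2 by linarith)).and
    (eventually_ge_atTop (2 * (r + 1)))
  obtain ⟨x, hx1, hx2⟩ := hev.exists
  have := hge x (by linarith)
  nlinarith

lemma Qd_tendsto_zero (h : GS Q Qd) : Tendsto Qd atTop (nhds 0) := by
  obtain ⟨R₀, hR, hg⟩ := tail_gv_pos h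
  have h2 : Tendsto (fun r => -(2 * Q r)) atTop (nhds 0) := by
    simpa using (h.lim.const_mul 2).neg
  refine tendsto_of_tendsto_of_tendsto_of_le_of_le' h2 tendsto_const_nhds ?_ ?_
  · filter_upwards [eventually_ge_atTop R₀] with r hr
    have hr0 : 0 < r := by linarith
    have h1 := gv_lt_one h hr0
    have h3 : 1 / r ≤ 1 := by rw [div_le_one hr0]; linarith
    have := h.pos r hr0
    rw [Qd_eq h hr0]
    nlinarith
  · filter_upwards [eventually_ge_atTop R₀] with r hr
    have hr0 : 0 < r := by linarith
    have := h.pos r hr0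
    have := hg r hr
    rw [Qd_eq h hr0]
    have : 0 < 1 / r := by positivity
    have : 0 < Q r * (1 / r + gv Q Qd r) := by positivity
    linarith

/-- The energy `Q'² / 2 + Q⁴ / 4 - Q² / 2`, which decreases to `0`. -/
noncomputable def en (Q Qd : ℝ → ℝ) (r : ℝ) : ℝ := Qd r ^ 2 / 2 + Q r ^ 4 / 4 - Q r ^ 2 / 2

lemma hasDerivAt_en (h : GS Q Qd) {r : ℝ} (hr : 0 < r) :
    HasDerivAt (en Q Qd) (-(2 / r * Qd r ^ 2)) r := by
  refine (((((h.d2 r hr).pow 2).div_const 2).add (((h.d1 r hr).pow 4).div_const 4)).sub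
    (((h.d1 r hr).pow 2).div_const 2)).congr_deriv ?_
  push_cast
  ring

lemma en_anti (h : GS Q Qd) {r s : ℝ} (hr : 0 < r) (hrs : r ≤ s) : en Q Qd s ≤ en Q Qd r :=
  anti_of_deriv hrs (fun x hx => hasDerivAt_en h (hr.trans_le hx.1)) (fun x hx => by
    have : 0 < x := hr.trans_le hx.1
    have : 0 ≤ 2 / x * Qd x ^ 2 := by positivity
    linarith)

lemma en_nonneg (h : GS Q Qd) {r : ℝ} (hr : 0 < r) : 0 ≤ en Q Qd r := by
  have hl : Tendsto (en Q Qd) atTop (nhds 0) := by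
    have := ((((Qd_tendsto_zero h).pow 2).div_const 2).add ((h.lim.pow 4).div_const 4)).sub
      ((h.lim.pow 2).div_const 2)
    norm_num at this
    exact this
  refine le_of_tendsto hl ?_
  filter_upwards [eventually_ge_atTop r] with x hx using en_anti h hr hx

/-- The energy is bounded below by a positive constant near the origin. -/
lemma en_pos (h : GS Q Qd) : ∃ ε > 0, ∀ r ∈ Ioc (0 : ℝ) 1, ε ≤ en Q Qd r := by
  obtain ⟨R₀, hR, hg⟩ := tail_gv_pos h
  refine ⟨en Q Qd R₀, ?_, fun r hr => en_anti h hr.1 (hr.2.trans hR)⟩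
  have h1 := en_nonneg h (show (0 : ℝ) < R₀ + 1 by linarith)
  have := strictMono_of_deriv (f := fun x => -en Q Qd x) (a := R₀) (b := R₀ + 1) (by linarith)
    (fun x hx => (hasDerivAt_en h (by linarith [hx.1])).neg) (fun x hx => by
      have hx0 : 0 < x := by linarith [hx.1]
      have h2 : Qd x < 0 := by
        rw [Qd_eq h hx0]
        have := h.pos x hx0
        have := hg x hx.1
        have : 0 < 1 / x := by positivity
        have : 0 < Q x * (1 / x + gv Q Qd x) := by positivity
        linarith
      have : 0 < Qd x ^ 2 := by nlinarith
      have : 0 < 2 / x * Qd x ^ 2 := by positivity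
      linarith)
  linarith

lemma origin_lim (h : GS Q Qd) :
    ∃ a, 0 < a ∧ 2 < a ^ 2 ∧ Tendsto Q (nhdsWithin 0 (Ioi 0)) (nhds a) := by
  obtain ⟨K, hK0, hK⟩ := origin_bound h
  obtain ⟨a, ha⟩ := exists_lim_zero (f := Q) (fd := Qd) (K := K) (fun r hr => h.d1 r hr.1)
    (fun r hr => (hK r hr).trans (by nlinarith [hr.1, hr.2]))
  have ha0 : 0 ≤ a := by
    refine ge_of_tendsto ha ?_
    filter_upwards [self_mem_nhdsWithin] with r hr using (h.pos r hr).le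
  have hQd : Tendsto Qd (nhdsWithin 0 (Ioi 0)) (nhds 0) := by
    have hz : Tendsto (fun r : ℝ => K * r) (nhdsWithin 0 (Ioi 0)) (nhds 0) := by
      have : Tendsto (fun r : ℝ => K * r) (nhds 0) (nhds (K * 0)) :=
        (continuous_const.mul continuous_id).tendsto 0
      rw [mul_zero] at this
      exact this.mono_left nhdsWithin_le_nhds
    refine squeeze_zero_norm' ?_ hz
    filter_upwards [Ioc_mem_nhdsGT (zero_lt_one' ℝ)] with r hr using hK r hr
  obtain ⟨ε, hε, hen⟩ := en_pos h
  have hl : Tendsto (en Q Qd) (nhdsWithin 0 (Ioi 0)) (nhds (0 ^ 2 / 2 + a ^ 4 / 4 - a ^ 2 / 2)) :=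
    ((((hQd.pow 2).div_const 2).add ((ha.pow 4).div_const 4)).sub ((ha.pow 2).div_const 2))
  have h1 : ε ≤ 0 ^ 2 / 2 + a ^ 4 / 4 - a ^ 2 / 2 := by
    refine ge_of_tendsto hl ?_
    filter_upwards [Ioc_mem_nhdsGT (zero_lt_one' ℝ)] with r hr using hen r hr
  have h2 : 2 < a ^ 2 := by nlinarith [sq_nonneg (a ^ 2)]
  exact ⟨a, lt_of_le_of_ne ha0 (by rintro rfl; norm_num at h2), h2, ha⟩

/-- `Q` is strictly decreasing: by the energy bound, every critical point has `Q² ≥ 2` and is thus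
a strict maximum, so `Q'` can only vanish by crossing from positive to negative, whereas `Q' < 0`
near the origin. -/
lemma Qd_neg (h : GS Q Qd) {r : ℝ} (hr : 0 < r) : Qd r < 0 := by
  obtain ⟨a, ha0, ha2, ha⟩ := origin_lim h
  obtain ⟨K, hK0, hK⟩ := origin_bound h
  have hnear : ∀ᶠ r in nhdsWithin (0 : ℝ) (Ioi 0), 0 < -Qd r := by
    have h1 : ∀ᶠ r in nhdsWithin (0 : ℝ) (Ioi 0), 2 < Q r ^ 2 :=
      (ha.pow 2).eventually_const_lt ha2
    obtain ⟨e, he, hes⟩ := mem_nhdsGT_iff_exists_Ioo_subset.1 h1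
    have he0 : (0 : ℝ) < e := he
    have hneg : ∀ x ∈ Ioo 0 e, 0 < -(x ^ 2 * (Q x - Q x ^ 3)) := by
      intro x hx
      have h2 : 2 < Q x ^ 2 := hes hx
      have h3 := h.pos x hx.1
      have h4 : 0 < x ^ 2 := pow_pos hx.1 2
      have h5 : 0 < Q x * (Q x ^ 2 - 1) := mul_pos h3 (by linarith)
      nlinarith
    filter_upwards [Ioo_mem_nhdsGT he0] with s hs
    have hl : Tendsto (fun r => -(r ^ 2 * Qd r)) (nhdsWithin 0 (Ioi 0)) (nhds 0) := by
      have hz : Tendsto (fun r : ℝ => K * r ^ 3) (nhdsWithin 0 (Ioi 0)) (nhds 0) := by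
        have : Tendsto (fun r : ℝ => K * r ^ 3) (nhds 0) (nhds (K * 0 ^ 3)) :=
          (continuous_const.mul (continuous_pow 3)).tendsto 0
        simp only [ne_eq, OfNat.ofNat_ne_zero, not_false_eq_true, zero_pow, mul_zero] at this
        exact this.mono_left nhdsWithin_le_nhds
      refine squeeze_zero_norm' ?_ hz
      filter_upwards [Ioc_mem_nhdsGT (zero_lt_one' ℝ)] with r hr
      rw [Real.norm_eq_abs, abs_neg, abs_mul, abs_of_nonneg (sq_nonneg r)]
      nlinarith [hK r hr, sq_nonneg r]
    have h6 : 0 ≤ -((s / 2) ^ 2 * Qd (s / 2)) := lim_zero_le (b := s / 2)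
      (by linarith [hs.1]) (fun x hx => (hasDerivAt_flux h hx.1).neg)
      (fun x hx => (hneg x ⟨hx.1, by linarith [hx.2, hs.1, hs.2]⟩).le) hl
    have h7 : -((s / 2) ^ 2 * Qd (s / 2)) < -(s ^ 2 * Qd s) :=
      strictMono_of_deriv (f := fun s => -(s ^ 2 * Qd s)) (by linarith [hs.1])
      (fun x hx => (hasDerivAt_flux h (by linarith [hx.1, hs.1])).neg)
      (fun x hx => hneg x ⟨by linarith [hx.1, hs.1], by linarith [hx.2, hs.2]⟩)
    have h8 : 0 < s ^ 2 * -Qd s := by linarith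
    exact (pos_iff_pos_of_mul_pos h8).1 (pow_pos hs.1 2)
  have := pos_pair (f := fun r => -Qd r) (f' := fun r => -(-(2 / r) * Qd r + Q r - Q r ^ 3))
    (g := fun _ => 1) (g' := fun _ => 0) (b := r) (fun x hx => (h.d2 x hx.1).neg)
    (fun x _ => hasDerivAt_const x 1) hnear (.of_forall fun _ => one_pos)
    (fun x hx h0 _ => by
      have hd : Qd x = 0 := by linarith
      have he := en_nonneg h hx.1
      have hp := h.pos x hx.1
      rw [en, hd] at he
      have hp2 : 0 < Q x ^ 2 := pow_pos hp 2
      have : 2 ≤ Q x ^ 2 := by nlinarith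
      rw [hd]
      nlinarith)
    (fun x _ h1 _ => absurd h1 one_ne_zero) r ⟨hr, le_rfl⟩
  linarith [this.1]

lemma yv_pos (h : GS Q Qd) {r : ℝ} (hr : 0 < r) : 0 < yv Q Qd r := by
  unfold yv
  have := Qd_neg h hr
  exact div_pos (by nlinarith) (h.pos r hr)

/-- `g' = Q² - 1 + g² > 0` everywhere: once this quantity fails to be positive it stays negative,
since `Q` decreases, and then `g → -∞`. -/
lemma gv_deriv_pos (h : GS Q Qd) {r : ℝ} (hr : 0 < r) : 0 < Q r ^ 2 - 1 + gv Q Qd r ^ 2 := by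
  by_contra hcon
  push Not at hcon
  obtain ⟨R₀, hR, hg⟩ := tail_gv_pos h
  set G : ℝ → ℝ := fun x => Q x ^ 2 - 1 + gv Q Qd x ^ 2 with hG
  have hGd : ∀ x, 0 < x → HasDerivAt G
      (-2 * Q x ^ 2 * (1 / x + gv Q Qd x) + 2 * gv Q Qd x * G x) x := by
    intro x hx
    refine (((hasDerivAt_Qsq h hx).sub_const 1).add ((hasDerivAt_gv h hx).pow 2)).congr_deriv ?_
    simp only [hG]
    push_cast
    ring
  have hQd : ∀ x, 0 < x → 0 < 2 * Q x ^ 2 * (1 / x + gv Q Qd x) := by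
    intro x hx
    have h1 := Qd_neg h hx
    rw [Qd_eq h hx] at h1
    have h2 := h.pos x hx
    have h3 : 0 < Q x * (1 / x + gv Q Qd x) := by linarith
    nlinarith
  have hle : ∀ x, r ≤ x → G x ≤ 0 := by
    intro x hx
    have := ge_of_crossing (f := fun x => -G x) (c := 0) hx
      (fun z hz => (hGd z (hr.trans_le hz.1)).neg) (by linarith) (fun z hz h0 => by
        have h1 := hQd z (hr.trans_le hz.1)
        have h2 : G z = 0 := by linarith
        rw [h2]
        linarith)
    linarith
  set r₁ := max r R₀ with hr₁
  have hr₁r : r ≤ r₁ := le_max_left _ _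
  have hr₁R : R₀ ≤ r₁ := le_max_right _ _
  have hg1 := gv_lt_one h (show 0 < r₁ by linarith)
  have hg0 := hg r₁ hr₁R
  have hgle : ∀ x, r₁ ≤ x → gv Q Qd x ≤ gv Q Qd r₁ := fun x hx =>
    anti_of_deriv hx (fun z hz => hasDerivAt_gv h (by linarith [hz.1]))
      (fun z hz => hle z (hr₁r.trans hz.1))
  have hδ : 0 < 1 - gv Q Qd r₁ ^ 2 := by nlinarith
  set δ := (1 - gv Q Qd r₁ ^ 2) / 2 with hδd
  obtain ⟨R₂, hR₂⟩ := eventually_atTop.1 ((h.lim.pow 2).eventually_lt_const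
    (show (0 : ℝ) ^ 2 < δ by rw [hδd]; linarith))
  refine unbounded_of_deriv (f := fun x => -gv Q Qd x)
    (f' := fun x => -(Q x ^ 2 - 1 + gv Q Qd x ^ 2)) (r₀ := max r₁ R₂) (δ := δ) (C := 0)
    (by linarith) (fun x hx => (hasDerivAt_gv h ?_).neg) (fun x hx => ?_) ?_
  · linarith [le_max_left r₁ R₂]
  · have h1 := hR₂ x ((le_max_right _ _).trans hx)
    have hx1 : r₁ ≤ x := (le_max_left _ _).trans hx
    have h2 := hgle x hx1
    have h3 := hg x (hr₁R.trans hx1)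
    have h4 : gv Q Qd x ^ 2 ≤ gv Q Qd r₁ ^ 2 := pow_le_pow_left₀ h3.le h2 2
    linarith
  · filter_upwards [eventually_ge_atTop R₀] with x hx
    have := hg x hx
    linarith

lemma gv_mono (h : GS Q Qd) {r s : ℝ} (hr : 0 < r) (hrs : r ≤ s) : gv Q Qd r ≤ gv Q Qd s :=
  mono_of_deriv hrs (fun x hx => hasDerivAt_gv h (hr.trans_le hx.1))
    (fun x hx => (gv_deriv_pos h (hr.trans_le hx.1)).le)

/-- `φ' / φ → -1` at infinity. -/
lemma gv_tendsto (h : GS Q Qd) : Tendsto (fun r => 1 - gv Q Qd r) atTop (nhds 0) := by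
  obtain ⟨R₀, hR, hg⟩ := tail_gv_pos h
  have h2 : Tendsto (fun r => Q r ^ 2) atTop (nhds 0) := by simpa using h.lim.pow 2
  refine tendsto_of_tendsto_of_tendsto_of_le_of_le' tendsto_const_nhds h2 ?_ ?_
  · filter_upwards [eventually_gt_atTop 0] with r hr
    linarith [gv_lt_one h hr]
  · filter_upwards [eventually_ge_atTop R₀] with r hr
    have hr0 : 0 < r := by linarith
    nlinarith [gv_lt_one h hr0, gv_deriv_pos h hr0, hg r hr]

/-! ### Behaviour at the origin and polynomial barriers in the variable `y` -/

/-- The behaviour of `r²` and of `ζ = r² (Q² - 1)` as functions of `y` at the origin, with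
`p = lim r² / y` and `Q(0)² = 1 + 3 / p`. -/
structure Origin (Q Qd : ℝ → ℝ) (a p : ℝ) : Prop where
  a_pos : 0 < a
  p_pos : 0 < p
  ap : a ^ 2 = 1 + 3 / p
  limQ : Tendsto Q (nhdsWithin 0 (Ioi 0)) (nhds a)
  limy : Tendsto (yv Q Qd) (nhdsWithin 0 (Ioi 0)) (nhds 0)
  limp : Tendsto (fun r => r ^ 2 / yv Q Qd r) (nhdsWithin 0 (Ioi 0)) (nhds p)
  limz : Tendsto (fun r => (3 * yv Q Qd r - r ^ 2 * (Q r ^ 2 - 1)) / yv Q Qd r ^ 2)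
    (nhdsWithin 0 (Ioi 0)) (nhds ((9 + 2 * p) / 5))

lemma tendsto_zero_of_le {f : ℝ → ℝ} {C : ℝ} {n : ℕ} (hn : n ≠ 0)
    (hf : ∀ r ∈ Ioc (0 : ℝ) 1, |f r| ≤ C * r ^ n) :
    Tendsto f (nhdsWithin 0 (Ioi 0)) (nhds 0) := by
  have hz : Tendsto (fun r : ℝ => C * r ^ n) (nhdsWithin 0 (Ioi 0)) (nhds 0) := by
    have : Tendsto (fun r : ℝ => C * r ^ n) (nhds 0) (nhds (C * 0 ^ n)) :=
      (continuous_const.mul (continuous_pow n)).tendsto 0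
    rw [zero_pow hn, mul_zero] at this
    exact this.mono_left nhdsWithin_le_nhds
  refine squeeze_zero_norm' ?_ hz
  filter_upwards [Ioc_mem_nhdsGT (zero_lt_one' ℝ)] with r hr using hf r hr

/-- L'Hôpital's rule against a monomial. -/
lemma lhopital_pow {f q : ℝ → ℝ} {n : ℕ} {l : ℝ}
    (hf : ∀ r, 0 < r → HasDerivAt f (r ^ n * q r) r)
    (hf0 : Tendsto f (nhdsWithin 0 (Ioi 0)) (nhds 0))
    (hq : Tendsto q (nhdsWithin 0 (Ioi 0)) (nhds l)) :
    Tendsto (fun r => f r / r ^ (n + 1)) (nhdsWithin 0 (Ioi 0)) (nhds (l / (n + 1))) := by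
  have hn : ((n : ℝ) + 1) ≠ 0 := by positivity
  refine HasDerivAt.lhopital_zero_nhdsGT (f' := fun r => r ^ n * q r)
    (g' := fun r => ((n : ℝ) + 1) * r ^ n) ?_ ?_ ?_ hf0 ?_ ?_
  · filter_upwards [self_mem_nhdsWithin] with r hr using hf r hr
  · refine .of_forall fun r => ?_
    simpa using hasDerivAt_pow (n + 1) r
  · filter_upwards [self_mem_nhdsWithin] with r hr
    have : (r : ℝ) ≠ 0 := ne_of_gt hr
    positivity
  · have : Tendsto (fun r : ℝ => r ^ (n + 1)) (nhds 0) (nhds (0 ^ (n + 1))) :=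
      (continuous_pow (n + 1)).tendsto 0
    rw [zero_pow (Nat.succ_ne_zero n)] at this
    exact this.mono_left nhdsWithin_le_nhds
  · refine (hq.div_const ((n : ℝ) + 1)).congr' ?_
    filter_upwards [self_mem_nhdsWithin] with r hr
    have : (r : ℝ) ≠ 0 := ne_of_gt hr
    field_simp

lemma exists_origin (h : GS Q Qd) : ∃ a p, Origin Q Qd a p := by
  obtain ⟨a, ha0, ha2, ha⟩ := origin_lim h
  obtain ⟨K, hK0, hK⟩ := origin_bound h
  have hβ : 0 < a ^ 2 - 1 := by linarith
  -- `Q' / r → -(a³ - a) / 3`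
  have hd : Tendsto (fun r => r ^ 2 * Qd r / r ^ (2 + 1)) (nhdsWithin 0 (Ioi 0))
      (nhds ((a - a ^ 3) / ((2 : ℕ) + 1))) :=
    lhopital_pow (q := fun r => Q r - Q r ^ 3) (fun r hr => hasDerivAt_flux h hr)
      (tendsto_zero_of_le (C := K) (n := 3) (by norm_num) (fun r hr => by
        rw [abs_mul, abs_of_nonneg (sq_nonneg r)]
        nlinarith [hK r hr, sq_nonneg r])) (ha.sub (ha.pow 3))
  have hyr : Tendsto (fun r => yv Q Qd r / r ^ 2) (nhdsWithin 0 (Ioi 0))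
      (nhds ((a ^ 2 - 1) / 3)) := by
    have h1 := (hd.div ha ha0.ne').neg
    have e : -((a - a ^ 3) / ((2 : ℕ) + 1) / a) = (a ^ 2 - 1) / 3 := by
      push_cast
      field_simp
      ring
    rw [e] at h1
    refine h1.congr' ?_
    filter_upwards [self_mem_nhdsWithin] with r hr
    have hr0 : r ≠ 0 := ne_of_gt hr
    have := (h.pos r hr).ne'
    simp only [yv, Pi.div_apply]
    field_simp
    ring
  have hr2 : Tendsto (fun r : ℝ => r ^ 2) (nhdsWithin 0 (Ioi 0)) (nhds 0) :=
    tendsto_zero_of_le (C := 1) (n := 2) (by norm_num) (fun r _ => by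
      rw [abs_of_nonneg (sq_nonneg r)]; linarith)
  -- the next order comes from `(r (3 y - ζ) Q)' = r² (3 Q² - 1) Q y`
  have hN : Tendsto (fun r => (-3 * (r ^ 2 * Qd r) - r ^ 3 * (Q r ^ 3 - Q r)) / r ^ (4 + 1))
      (nhdsWithin 0 (Ioi 0))
      (nhds ((3 * a ^ 2 - 1) * a * ((a ^ 2 - 1) / 3) / ((4 : ℕ) + 1))) := by
    refine lhopital_pow (q := fun r => (3 * Q r ^ 2 - 1) * Q r * (yv Q Qd r / r ^ 2)) ?_ ?_ ?_
    · intro r hr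
      have hQ := (h.pos r hr).ne'
      refine (((hasDerivAt_flux h hr).const_mul (-3)).sub (((hasDerivAt_pow 3 r)).mul
        (((h.d1 r hr).pow 3).sub (h.d1 r hr)))).congr_deriv ?_
      simp only [yv, Pi.sub_apply, Pi.pow_apply]
      push_cast
      field_simp
      ring
    · have hr3 : Tendsto (fun r : ℝ => r ^ 3) (nhdsWithin 0 (Ioi 0)) (nhds 0) :=
        tendsto_zero_of_le (C := 1) (n := 3) (by norm_num) (fun r hr => by
          rw [abs_of_nonneg (pow_nonneg hr.1.le 3)]; linarith)
      have h1 : Tendsto (fun r => r ^ 2 * Qd r) (nhdsWithin 0 (Ioi 0)) (nhds 0) :=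
        tendsto_zero_of_le (C := K) (n := 3) (by norm_num) (fun r hr => by
          rw [abs_mul, abs_of_nonneg (sq_nonneg r)]
          nlinarith [hK r hr, sq_nonneg r])
      simpa using (h1.const_mul (-3)).sub (hr3.mul ((ha.pow 3).sub ha))
    · exact (((ha.pow 2).const_mul 3).sub_const 1).mul ha |>.mul hyr
  refine ⟨a, 3 / (a ^ 2 - 1), ha0, by positivity, by field_simp; ring, ha, ?_, ?_, ?_⟩
  · have := hyr.mul hr2
    rw [mul_zero] at this
    refine this.congr' ?_
    filter_upwards [self_mem_nhdsWithin] with r hr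
    have hr0 : r ≠ 0 := ne_of_gt hr
    field_simp
  · have := hyr.inv₀ (by positivity)
    rw [inv_div] at this
    refine this.congr' ?_
    filter_upwards [self_mem_nhdsWithin] with r hr
    exact inv_div _ _
  · have h1 := (hN.div ha ha0.ne').div (hyr.pow 2) (by positivity)
    have e : (3 * a ^ 2 - 1) * a * ((a ^ 2 - 1) / 3) / ((4 : ℕ) + 1) / a / ((a ^ 2 - 1) / 3) ^ 2
        = (9 + 2 * (3 / (a ^ 2 - 1))) / 5 := by
      push_cast
      field_simp
      ring
    rw [e] at h1
    refine h1.congr' ?_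
    filter_upwards [self_mem_nhdsWithin] with r hr
    have hr0 : r ≠ 0 := ne_of_gt hr
    have hQ := (h.pos r hr).ne'
    have hy := (yv_pos h hr).ne'
    have hyd : Qd r = -(yv Q Qd r * Q r / r) := by
      unfold yv
      field_simp
    simp only [Pi.div_apply]
    rw [hyd]
    field_simp
    ring

/-- Comparison of `ζ = r² (Q² - 1)` and `r²`, as functions of `y`, with a barrier pair
`Z(y) = 3 y - X(y) y²`, `y P(y)`. With `y` as time the pair `(ζ, -r²)` solves a cooperative system,
so a pair of strict differential inequalities that hold with the same sign `s`, together with the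
corresponding order at the origin, are propagated. -/
lemma barrier (h : GS Q Qd) {a p : ℝ} (ho : Origin Q Qd a p) {X X' P P' : ℝ → ℝ} {s Y b : ℝ}
    (hY : 0 ≤ Y)
    (hX : ∀ y, HasDerivAt X (X' y) y) (hP : ∀ y, HasDerivAt P (P' y) y)
    (hb : ∀ r ∈ Ioc 0 b, yv Q Qd r ≤ Y)
    (hR1 : ∀ y ∈ Icc 0 Y, 0 < s * (9 - 5 * X y + 2 * P y - 4 * y * X y + 2 * y * X y ^ 2
      - y * X' y * (2 + y - y * X y)))
    (hR2 : ∀ y ∈ Icc 0 Y, 0 < s * (P y * (X y - 1) - P' y * (2 + y - y * X y)))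
    (hP' : ∀ y ∈ Icc 0 Y, 0 ≤ P y + y * P' y) (hp : 0 < s * (p - P 0)) :
    ∀ r ∈ Ioc 0 b, 0 < s * (3 * yv Q Qd r - X (yv Q Qd r) * yv Q Qd r ^ 2
        - r ^ 2 * (Q r ^ 2 - 1)) ∧ 0 < s * (r ^ 2 - yv Q Qd r * P (yv Q Qd r)) := by
  set y := yv Q Qd with hy
  have hyd : ∀ r, 0 < r → HasDerivAt y ((y r ^ 2 - y r + r ^ 2 * (Q r ^ 2 - 1)) / r) r :=
    fun r hr => hasDerivAt_yv h hr
  have hXl : Tendsto (fun r => X (y r)) (nhdsWithin 0 (Ioi 0)) (nhds (X 0)) :=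
    (hX 0).continuousAt.tendsto.comp ho.limy
  have hPl : Tendsto (fun r => P (y r)) (nhdsWithin 0 (Ioi 0)) (nhds (P 0)) :=
    (hP 0).continuousAt.tendsto.comp ho.limy
  refine pos_pair (f' := fun r => s * ((3 - X' (y r) * y r ^ 2 - 2 * X (y r) * y r)
        * ((y r ^ 2 - y r + r ^ 2 * (Q r ^ 2 - 1)) / r)
        - (2 * (r ^ 2 * (Q r ^ 2 - 1)) * (1 - y r) - 2 * r ^ 2 * y r) / r))
    (g' := fun r => s * (2 * r - (P (y r) + y r * P' (y r))
        * ((y r ^ 2 - y r + r ^ 2 * (Q r ^ 2 - 1)) / r)))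
    (fun r hr => ?_) (fun r hr => ?_) ?_ ?_ (fun r hr h1 h2 => ?_) (fun r hr h1 h2 => ?_)
  · have hc := (hX (y r)).comp r (hyd r hr.1)
    have hz := (gt_pow_two r).mul ((hasDerivAt_Qsq h hr.1).sub_const 1)
    refine ((((hyd r hr.1).const_mul 3).sub (hc.mul ((hyd r hr.1).pow 2))).sub
      hz).const_mul s |>.congr_deriv ?_
    have hr0 := hr.1.ne'
    have e : gv Q Qd r = (y r - 1) / r := rfl
    rw [e]
    simp only [Function.comp, Pi.pow_apply]
    push_cast
    field_simp
    ring
  · have hc := (hP (y r)).comp r (hyd r hr.1)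
    refine ((gt_pow_two r).sub ((hyd r hr.1).mul hc)).const_mul s |>.congr_deriv ?_
    simp only [Function.comp]
    ring
  · have h0 : 0 < s * ((9 + 2 * p) / 5 - X 0) := by
      have := hR1 0 ⟨le_rfl, hY⟩
      linarith
    filter_upwards [((ho.limz.sub hXl).const_mul s).eventually_const_lt h0,
      self_mem_nhdsWithin] with r hr hr0
    have hyne : y r ≠ 0 := (yv_pos h hr0).ne'
    have hyp : 0 < y r ^ 2 := pow_pos (yv_pos h hr0) 2
    have := mul_pos hr hyp
    have e : s * ((3 * yv Q Qd r - r ^ 2 * (Q r ^ 2 - 1)) / yv Q Qd r ^ 2 - X (y r)) * y r ^ 2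
        = s * (3 * y r - X (y r) * y r ^ 2 - r ^ 2 * (Q r ^ 2 - 1)) := by
      rw [← hy]
      field_simp
      ring
    linarith
  · filter_upwards [((ho.limp.sub hPl).const_mul s).eventually_const_lt hp,
      self_mem_nhdsWithin] with r hr hr0
    have hyp : 0 < y r := yv_pos h hr0
    have := mul_pos hr hyp
    have e : s * (r ^ 2 / yv Q Qd r - P (y r)) * y r = s * (r ^ 2 - y r * P (y r)) := by
      rw [← hy]
      field_simp
    linarith
  · have hyp : 0 < y r := yv_pos h hr.1
    have hR := hR1 (y r) ⟨hyp.le, hb r hr⟩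
    have hs : s ≠ 0 := by rintro rfl; simp at hp
    have hz : r ^ 2 * (Q r ^ 2 - 1) = 3 * y r - X (y r) * y r ^ 2 := by
      have := (mul_eq_zero.1 h1).resolve_left hs
      linarith
    have h3 : 0 < y r ^ 2 * (s * (9 - 5 * X (y r) + 2 * P (y r) - 4 * y r * X (y r)
        + 2 * y r * X (y r) ^ 2 - y r * X' (y r) * (2 + y r - y r * X (y r))))
        + 2 * y r * (s * (r ^ 2 - y r * P (y r))) := by positivity
    rw [hz]
    have h4 := div_pos h3 hr.1
    refine h4.trans_eq ?_
    have hr0 := hr.1.ne'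
    field_simp
    ring
  · have hyp : 0 < y r := yv_pos h hr.1
    have hR := hR2 (y r) ⟨hyp.le, hb r hr⟩
    have hPn := hP' (y r) ⟨hyp.le, hb r hr⟩
    have hs : s ≠ 0 := by rintro rfl; simp at hp
    have hz : r ^ 2 = y r * P (y r) := by
      have := (mul_eq_zero.1 h1).resolve_left hs
      linarith
    have h3 : 0 < y r ^ 2 * (s * (P (y r) * (X (y r) - 1) - P' (y r) * (2 + y r - y r * X (y r))))
        + (P (y r) + y r * P' (y r)) * (s * (3 * y r - X (y r) * y r ^ 2
        - r ^ 2 * (Q r ^ 2 - 1))) := by positivity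
    have h4 := div_pos h3 hr.1
    refine h4.trans_eq ?_
    have hr0 := hr.1.ne'
    have e : 2 * r = 2 * (y r * P (y r)) / r := by
      rw [← hz]
      field_simp
    rw [e]
    field_simp
    ring

/-- The comparison for a pair of polynomials. -/
lemma barrier_poly (h : GS Q Qd) {a p : ℝ} (ho : Origin Q Qd a p) {X P : List ℚ} {s Y : ℚ} {b : ℝ}
    (hY : 0 ≤ Y) (hb : ∀ r ∈ Ioc 0 b, yv Q Qd r ≤ Y)
    {d : ℚ} {n : ℕ} (hn : n ≠ 0) (hd : n * d = Y)
    (h1 : pchk (psm s (pR1 X P)) d n 0 = true) (h2 : pchk (psm s (pR2 X P)) d n 0 = true)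
    (h3 : pchk (pder (pmul [0, 1] P)) d n 0 = true) (hp : 0 < (s : ℝ) * (p - pev P 0)) :
    ∀ r ∈ Ioc 0 b, 0 < (s : ℝ) * (3 * yv Q Qd r - pev X (yv Q Qd r) * yv Q Qd r ^ 2
        - r ^ 2 * (Q r ^ 2 - 1)) ∧ 0 < (s : ℝ) * (r ^ 2 - yv Q Qd r * pev P (yv Q Qd r)) := by
  have hYd : (Y : ℝ) = n * d := by rw [← hd]; push_cast; ring
  refine barrier h ho (Y := Y) (by exact_mod_cast hY) (hasDerivAt_pev X) (hasDerivAt_pev P) hb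
    (fun y hy => ?_) (fun y hy => ?_) (fun y hy => ?_) hp
  · have := pev_pos_of_pchk h1 hn (x := y) (by simpa using hy.1) (by simpa [← hYd] using hy.2)
    refine this.trans_eq ?_
    simp only [pR1, pE, pev_psm, pev_padd, pev_pmul, pev]
    push_cast
    ring
  · have := pev_pos_of_pchk h2 hn (x := y) (by simpa using hy.1) (by simpa [← hYd] using hy.2)
    refine this.trans_eq ?_
    simp only [pR2, pE, pev_psm, pev_padd, pev_pmul, pev]
    push_cast
    ring
  · have := pev_pos_of_pchk h3 hn (x := y) (by simpa using hy.1) (by simpa [← hYd] using hy.2)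
    refine (this.trans_eq ?_).le
    have e1 := (hasDerivAt_pev (pmul [0, 1] P) y).unique
      (((hasDerivAt_id y).mul (hasDerivAt_pev P y)).congr_of_eventuallyEq
        (.of_forall fun z => by simp [pev_pmul, pev]))
    rw [e1]
    simp only [id]
    ring

/-! ### Tail estimates and the window for `Q(0)` -/

/-- Every value above `1` is reached by `y`, and `y` stays below it before. -/
lemma exists_yv_eq (h : GS Q Qd) {a p : ℝ} (ho : Origin Q Qd a p) {Y : ℝ} (hY : 1 < Y) :
    ∃ R, 0 < R ∧ yv Q Qd R = Y ∧ ∀ r ∈ Ioc 0 R, yv Q Qd r ≤ Y := by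
  obtain ⟨R₁, hR₁⟩ := eventually_atTop.1
    ((gv_tendsto h).eventually_lt_const (show (0 : ℝ) < 1 / 2 by norm_num))
  set r₁ := max R₁ (2 * Y) with hr₁
  have h1 : Y ≤ yv Q Qd r₁ := by
    have h2 := hR₁ r₁ (le_max_left _ _)
    have h3 : 2 * Y ≤ r₁ := le_max_right _ _
    rw [yv_eq (by linarith)]
    nlinarith
  have hr₁p : 0 < r₁ := by
    have h3 : 2 * Y ≤ r₁ := le_max_right _ _
    linarith
  obtain ⟨r₀, hr₀, hr₀'⟩ := ((ho.limy.eventually_lt_const (show (0 : ℝ) < Y by linarith)).and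
    (Ioo_mem_nhdsGT hr₁p)).exists
  have hc : ContinuousOn (yv Q Qd) (Icc r₀ r₁) := fun x hx =>
    (hasDerivAt_yv h (hr₀'.1.trans_le hx.1)).continuousAt.continuousWithinAt
  obtain ⟨R, hR, hRY⟩ := intermediate_value_Icc hr₀'.2.le hc ⟨hr₀.le, h1⟩
  have hRp : 0 < R := hr₀'.1.trans_le hR.1
  refine ⟨R, hRp, hRY, fun r hr => ?_⟩
  by_contra hcon
  push Not at hcon
  have hgm := gv_mono h hr.1 hr.2
  rw [yv_eq hr.1] at hcon
  rw [yv_eq hRp] at hRY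
  have hg0 : 0 < gv Q Qd r := by
    by_contra hg
    push Not at hg
    nlinarith [hr.1]
  nlinarith [hr.2, hr.1]

/-- With `m = 1 - g`, so that `m' = 2 m - m² - Q²`, the quotient `m / Q²` is at most
`1 / (1 + 3 g(r₀))` on `[r₀, ∞)`. -/
lemma tail_upper (h : GS Q Qd) {r₀ : ℝ} (hr₀ : 0 < r₀) (hg : 0 < gv Q Qd r₀) :
    ∀ r, r₀ ≤ r → (1 - gv Q Qd r) * (1 + 3 * gv Q Qd r₀) ≤ Q r ^ 2 := by
  set g₀ := gv Q Qd r₀ with hg₀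
  have hk : 0 < 1 + 3 * g₀ := by linarith
  have key := nonpos_of_tendsto_zero
    (f := fun r => (1 - gv Q Qd r) * (1 + 3 * g₀) - Q r ^ 2)
    (f' := fun r => -(Q r ^ 2 - 1 + gv Q Qd r ^ 2) * (1 + 3 * g₀)
      - -2 * Q r ^ 2 * (1 / r + gv Q Qd r)) (r₀ := r₀) ?_ ?_ ?_
  · intro r hr
    have := key r hr
    linarith
  · intro r hr
    have hr0 := hr₀.trans_le hr
    exact (((hasDerivAt_gv h hr0).const_sub 1).mul_const _).sub (hasDerivAt_Qsq h hr0)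
  · intro r hr hf
    have hr0 := hr₀.trans_le hr
    have hm1 := gv_lt_one h hr0
    have hgm := gv_mono h hr₀ hr
    have hQ := pow_pos (h.pos r hr0) 2
    rw [← hg₀] at hgm
    set g := gv Q Qd r
    set q := Q r ^ 2
    have hrp : 0 < 1 / r := by positivity
    set i := 1 / r
    rcases le_total (1 + 3 * g₀ - 2 * (i + g)) 0 with hb | hb
    · have : 0 < (1 - g ^ 2) * (1 + 3 * g₀) := mul_pos (by nlinarith) hk
      nlinarith [mul_nonneg hQ.le (sub_nonneg.2 hb)]
    · have h1 : 0 ≤ ((1 - g) * (1 + 3 * g₀) - q) * (1 + 3 * g₀ - 2 * (i + g)) :=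
        mul_nonneg hf.le hb
      have h2 : 0 < (1 - g) * (1 + 3 * g₀) * (3 * (g - g₀) + 2 * i) :=
        mul_pos (mul_pos (by linarith) hk) (by linarith)
      nlinarith
  · have := ((gv_tendsto h).mul_const (1 + 3 * g₀)).sub (h.lim.pow 2)
    simpa using this

/-- In the other direction `m / Q²` is at least `1 / (4 + 2 / r₀)` on `[r₀, ∞)`. -/
lemma tail_lower (h : GS Q Qd) {r₀ : ℝ} (hr₀ : 0 < r₀) :
    ∀ r, r₀ ≤ r → Q r ^ 2 ≤ (1 - gv Q Qd r) * (4 + 2 / r₀) := by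
  have key := nonpos_of_tendsto_zero
    (f := fun r => Q r ^ 2 - (1 - gv Q Qd r) * (4 + 2 / r₀))
    (f' := fun r => -2 * Q r ^ 2 * (1 / r + gv Q Qd r)
      - -(Q r ^ 2 - 1 + gv Q Qd r ^ 2) * (4 + 2 / r₀)) (r₀ := r₀) ?_ ?_ ?_
  · intro r hr
    have := key r hr
    linarith
  · intro r hr
    have hr0 := hr₀.trans_le hr
    exact (hasDerivAt_Qsq h hr0).sub (((hasDerivAt_gv h hr0).const_sub 1).mul_const _)
  · intro r hr hf
    have hr0 := hr₀.trans_le hr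
    have hm1 := gv_lt_one h hr0
    have hi : 1 / r ≤ 1 / r₀ := one_div_le_one_div_of_le hr₀ hr
    have hrp : 0 < 1 / r := by positivity
    have e : 2 / r₀ = 2 * (1 / r₀) := by ring
    rw [e] at hf ⊢
    set g := gv Q Qd r
    set q := Q r ^ 2
    set i := 1 / r
    set j := 1 / r₀
    have h1 : 0 < (q - (1 - g) * (4 + 2 * j)) * (4 + 2 * j - 2 * (i + g)) :=
      mul_pos hf (by linarith)
    have h2 : 0 ≤ (1 - g) * (4 + 2 * j) * (2 * (j - i) + 3 * (1 - g)) :=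
      mul_nonneg (mul_nonneg (by linarith) (by linarith)) (by linarith)
    nlinarith
  · have := (h.lim.pow 2).sub ((gv_tendsto h).mul_const (4 + 2 / r₀))
    simpa using this

/-- The tail estimates at a point where `y = 1 + d`, in terms of `ζ = r² (Q² - 1)`. -/
lemma tail_zeta (h : GS Q Qd) {r d : ℝ} (hr : 0 < r) (hd : 0 < d) (hy : yv Q Qd r = 1 + d) :
    2 * r * d - 3 * d ^ 2 ≤ r ^ 2 * (Q r ^ 2 - 1) ∧
      r ^ 2 * (Q r ^ 2 - 1) ≤ 3 * r ^ 2 + 2 * r - 4 * r * d - 2 * d := by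
  have hg : gv Q Qd r = d / r := by rw [gv, hy]; ring
  have h1 := tail_upper h hr (by rw [hg]; positivity) r le_rfl
  have h2 := tail_lower h hr r le_rfl
  rw [hg] at h1 h2
  have hr2 : 0 < r ^ 2 := by positivity
  have e1 : r ^ 2 * ((1 - d / r) * (1 + 3 * (d / r))) = (r - d) * (r + 3 * d) := by
    field_simp
  have e2 : r ^ 2 * ((1 - d / r) * (4 + 2 / r)) = (r - d) * (4 * r + 2) := by
    field_simp
  have h3 := mul_le_mul_of_nonneg_left h1 hr2.le
  have h4 := mul_le_mul_of_nonneg_left h2 hr2.le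
  rw [e1] at h3
  rw [e2] at h4
  constructor <;> nlinarith

lemma pev_zero_PL : pev PL 0 = 0.1741 := by norm_num [PL, pev]
lemma pev_zero_PU : pev PU 0 = 0.1645 := by norm_num [PU, pev]
lemma pev_zero_PA : pev PA 0 = 0.1644 := by norm_num [PA, pev]
lemma pev_zero_PB : pev PB 0 = 0.1742 := by norm_num [PB, pev]

/-- Outside of this window the profile would violate a tail estimate where `y = 11 / 5`. -/
lemma p_window (h : GS Q Qd) {a p : ℝ} (ho : Origin Q Qd a p) : 0.1645 ≤ p ∧ p ≤ 0.1741 := by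
  obtain ⟨R, hR, hRY, hb⟩ := exists_yv_eq h ho (Y := 11 / 5) (by norm_num)
  obtain ⟨t1, t2⟩ := tail_zeta h hR (d := 6 / 5) (by norm_num) (by rw [hRY]; norm_num)
  have hb' : ∀ r ∈ Ioc 0 R, yv Q Qd r ≤ ((11 / 5 : ℚ) : ℝ) := by
    intro r hr
    have := hb r hr
    push_cast
    exact this
  constructor
  · by_contra hcon
    push Not at hcon
    obtain ⟨h1, h2⟩ := barrier_poly h ho (s := -1) (Y := 11 / 5) (by norm_num) hb'
      (d := 1 / 10) (n := 22) (by norm_num) (by norm_num) chkU1 chkU2 chkU3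
      (by rw [pev_zero_PU]; push_cast; linarith) R ⟨hR, le_rfl⟩
    rw [hRY] at h1 h2
    norm_num [pev, XU] at h1
    norm_num [pev, PU] at h2
    nlinarith
  · by_contra hcon
    push Not at hcon
    obtain ⟨h1, h2⟩ := barrier_poly h ho (s := 1) (Y := 11 / 5) (by norm_num) hb'
      (d := 11 / 40) (n := 8) (by norm_num) (by norm_num) chkL1 chkL2 chkL3
      (by rw [pev_zero_PL]; push_cast; linarith) R ⟨hR, le_rfl⟩
    rw [hRY] at h1 h2
    norm_num [pev, XL] at h1
    norm_num [pev, PL] at h2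
    nlinarith

lemma a_le (h : GS Q Qd) {a p : ℝ} (ho : Origin Q Qd a p) : a ≤ 4.387 := by
  have h1 := (p_window h ho).1
  have h2 := ho.ap
  have h3 : 3 / p ≤ 3 / 0.1645 := div_le_div_of_nonneg_left (by norm_num) (by norm_num) h1
  have h4 : (3 : ℝ) / 0.1645 ≤ 18.237084 := by norm_num
  nlinarith [ho.a_pos]

/-- Bounds for the profile up to the point `R` where `y = 8 / 5`. -/
lemma exists_R (h : GS Q Qd) {a p : ℝ} (ho : Origin Q Qd a p) :
    ∃ R, 0 < R ∧ yv Q Qd R = 8 / 5 ∧ (∀ r ∈ Ioc 0 R, yv Q Qd r ≤ 8 / 5) ∧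
      (∀ r ∈ Ioc 0 R, r ^ 2 * (Q r ^ 2 - 1) + yv Q Qd r ^ 2 - yv Q Qd r
        ≤ yv Q Qd r * pev (pE XA) (yv Q Qd r)) ∧
      (∀ r ∈ Ioc 0 R, yv Q Qd r * pev (pE XB) (yv Q Qd r)
        ≤ r ^ 2 * (Q r ^ 2 - 1) + yv Q Qd r ^ 2 - yv Q Qd r) ∧
      0.3799 ≤ R ^ 2 * (Q R ^ 2 - 1) ∧ R ^ 2 * (Q R ^ 2 - 1) ≤ 0.4565 ∧
      0.83 ≤ R ∧ R ≤ 0.8715 := by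
  obtain ⟨R, hR, hRY, hb⟩ := exists_yv_eq h ho (Y := 8 / 5) (by norm_num)
  obtain ⟨hp1, hp2⟩ := p_window h ho
  have hb' : ∀ r ∈ Ioc 0 R, yv Q Qd r ≤ ((8 / 5 : ℚ) : ℝ) := by
    intro r hr
    have := hb r hr
    push_cast
    exact this
  have hA := barrier_poly h ho (s := 1) (Y := 8 / 5) (by norm_num) hb'
      (d := 1 / 10) (n := 16) (by norm_num) (by norm_num) chkA1 chkA2 chkA3
      (by rw [pev_zero_PA]; push_cast; linarith)
  have hB := barrier_poly h ho (s := -1) (Y := 8 / 5) (by norm_num) hb'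
      (d := 1 / 5) (n := 8) (by norm_num) (by norm_num) chkB1 chkB2 chkB3
      (by rw [pev_zero_PB]; push_cast; linarith)
  refine ⟨R, hR, hRY, hb, fun r hr => ?_, fun r hr => ?_, ?_⟩
  · have h1 := (hA r hr).1
    simp only [pE, pev_padd, pev_pmul, pev]
    push_cast at h1 ⊢
    nlinarith
  · have h1 := (hB r hr).1
    simp only [pE, pev_padd, pev_pmul, pev]
    push_cast at h1 ⊢
    nlinarith
  · obtain ⟨h1, h2⟩ := hA R ⟨hR, le_rfl⟩
    obtain ⟨h3, h4⟩ := hB R ⟨hR, le_rfl⟩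
    rw [hRY] at h1 h2 h3 h4
    norm_num [pev, XA] at h1
    norm_num [pev, PA] at h2
    norm_num [pev, XB] at h3
    norm_num [pev, PB] at h4
    refine ⟨by linarith, by linarith, ?_, ?_⟩ <;> nlinarith

/-! ### Refined tail estimates beyond the point where `y = 8 / 5` -/

lemma gv_R {R : ℝ} (hRY : yv Q Qd R = 8 / 5) : gv Q Qd R = 0.6 / R := by
  rw [gv, hRY]; norm_num

lemma gv_pos_of_ge (h : GS Q Qd) {R r : ℝ} (hR : 0 < R) (hRY : yv Q Qd R = 8 / 5) (hr : R ≤ r) :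
    0 < gv Q Qd r := by
  have h1 := gv_mono h hR hr
  have h2 : 0 < gv Q Qd R := by rw [gv_R hRY]; positivity
  linarith

lemma rm_le (h : GS Q Qd) {R : ℝ} (hR : 0.83 ≤ R) (hR' : R ≤ 0.8715)
    (hRY : yv Q Qd R = 8 / 5) : ∀ r, R ≤ r → r * (1 - gv Q Qd r) ≤ 0.3 := by
  intro r hr
  have hR0 : 0 < R := by linarith
  have hgR := gv_R (Q := Q) (Qd := Qd) hRY
  have key := ge_of_crossing (f := fun x => 0.3 - x * (1 - gv Q Qd x))
    (f' := fun x => -(1 * (1 - gv Q Qd x) + x * -(Q x ^ 2 - 1 + gv Q Qd x ^ 2)))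
    (c := 0) hr (fun x hx => ?_) ?_ (fun x hx hfx => ?_)
  · linarith
  · have hx0 : 0 < x := hR0.trans_le hx.1
    exact ((hasDerivAt_id x).mul ((hasDerivAt_gv h hx0).const_sub 1)).const_sub 0.3
  · have : R * (1 - gv Q Qd R) = R - 0.6 := by rw [hgR]; field_simp
    linarith
  · have hx0 : 0 < x := hR0.trans_le hx.1
    have hu := tail_upper h hR0 (gv_pos_of_ge h hR0 hRY le_rfl) x hx.1
    rw [hgR] at hu
    have hm0 := gv_lt_one h hx0
    have hq : 0.6 ≤ 0.6 / R := by rw [le_div_iff₀ hR0]; linarith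
    have hm : 1 - gv Q Qd x ≤ 0.3 / R := by
      have e : 1 - gv Q Qd x = 0.3 / x := by field_simp; linarith
      rw [e]
      exact div_le_div_of_nonneg_left (by norm_num) hR0 hx.1
    have e3 : 0.3 / R = 0.5 * (0.6 / R) := by ring
    rw [e3] at hm
    have hu' := mul_le_mul_of_nonneg_left hu hx0.le
    have hg2 : x * (1 - gv Q Qd x) = 0.3 := by linarith
    have hu2 : 0.3 * (1 + 3 * (0.6 / R)) ≤ x * Q x ^ 2 := by
      calc 0.3 * (1 + 3 * (0.6 / R)) = x * ((1 - gv Q Qd x) * (1 + 3 * (0.6 / R))) := by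
            rw [← mul_assoc, hg2]
        _ ≤ _ := hu'
    have hg3 : x * (1 - gv Q Qd x ^ 2) = 0.3 * (2 - (1 - gv Q Qd x)) := by
      rw [← hg2]; ring
    have hq1 : 0.6 / R ≤ 0.723 := by rw [div_le_iff₀ hR0]; linarith
    have hq2 : 0.688 ≤ 0.6 / R := by rw [le_div_iff₀ hR0]; linarith
    nlinarith

/-- With `m = 1 - g`, the bound `4 m + 2 m² ≤ Q²`. This is what makes `φ^(1+τ) e^(2τr)` a
supersolution in `y₂_step`. -/
lemma four_m_le (h : GS Q Qd) {R : ℝ} (hR : 0.83 ≤ R) (hR' : R ≤ 0.8715)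
    (hRY : yv Q Qd R = 8 / 5) :
    ∀ r, R ≤ r → 4 * (1 - gv Q Qd r) + 2 * (1 - gv Q Qd r) ^ 2 ≤ Q r ^ 2 := by
  have hR0 : 0 < R := by linarith
  have key := nonpos_of_tendsto_zero
    (f := fun r => 4 * (1 - gv Q Qd r) + 2 * (1 - gv Q Qd r) ^ 2 - Q r ^ 2)
    (f' := fun r => 4 * -(Q r ^ 2 - 1 + gv Q Qd r ^ 2)
      + 2 * (2 * (1 - gv Q Qd r) * -(Q r ^ 2 - 1 + gv Q Qd r ^ 2))
      - -2 * Q r ^ 2 * (1 / r + gv Q Qd r)) (r₀ := R) ?_ ?_ ?_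
  · intro r hr
    have := key r hr
    linarith
  · intro r hr
    have hr0 := hR0.trans_le hr
    have h1 := (hasDerivAt_gv h hr0).const_sub 1
    refine ((h1.const_mul 4).add ((h1.pow 2).const_mul 2)).sub
      (hasDerivAt_Qsq h hr0) |>.congr_deriv ?_
    push_cast
    ring
  · intro r hr hf
    have hr0 := hR0.trans_le hr
    have hm1 := gv_lt_one h hr0
    have hg := gv_pos_of_ge h hR0 hRY hr
    have hrm := rm_le h hR hR' hRY r hr
    have hQ := pow_pos (h.pos r hr0) 2
    have hm : 1 - gv Q Qd r ≤ 0.3 * (1 / r) := by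
      rw [mul_one_div, le_div_iff₀ hr0]; linarith
    have hi : 0 < 1 / r := by positivity
    set i := 1 / r
    obtain ⟨m, hmd⟩ : ∃ m, m = 1 - gv Q Qd r := ⟨_, rfl⟩
    have hgd : gv Q Qd r = 1 - m := by linarith
    rw [← hmd] at hm hf
    rw [hgd] at hm1 hg ⊢
    set q := Q r ^ 2
    have hm0 : 0 < m := by linarith
    have e : 4 * -(q - 1 + (1 - m) ^ 2) + 2 * (2 * (1 - (1 - m)) * -(q - 1 + (1 - m) ^ 2))
      - -2 * q * (i + (1 - m)) = (4 + 4 * m) * (2 * m - m ^ 2) - q * (2 + 6 * m - 2 * i) := by ring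
    rw [e]
    have h0 : 0 < (4 + 4 * m) * (2 * m - m ^ 2) := mul_pos (by linarith) (by nlinarith)
    rcases le_total (2 + 6 * m - 2 * i) 0 with hb | hb
    · nlinarith [mul_nonneg hQ.le (sub_nonneg.2 hb)]
    · have h1 : 0 ≤ (4 * m + 2 * m ^ 2 - q) * (2 + 6 * m - 2 * i) := mul_nonneg hf.le hb
      have h2 : 0 < m * ((8 + 4 * m) * i - 24 * m - 16 * m ^ 2) := by
        apply mul_pos hm0
        nlinarith
      nlinarith
  · have h1 := gv_tendsto h
    have := ((h1.const_mul 4).add ((h1.pow 2).const_mul 2)).sub (h.lim.pow 2)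
    simpa using this

/-- `log (φ eʳ)` and its bounds for `r ≥ R`. -/
lemma logB_bounds (h : GS Q Qd) {R : ℝ} (hR : 0.83 ≤ R) (hR' : R ≤ 0.8715)
    (hRY : yv Q Qd R = 8 / 5) : ∀ r, R ≤ r →
      log (R * Q R) + R ≤ log (r * Q r) + r ∧
      log (r * Q r) + r ≤ log (R * Q R) + R + (1 - gv Q Qd R) / 2 := by
  have hR0 : 0 < R := by linarith
  have hd : ∀ x, R ≤ x → HasDerivAt (fun r => log (r * Q r) + r) (1 - gv Q Qd x) x := by
    intro x hx
    have hx0 := hR0.trans_le hx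
    have hp : 0 < x * Q x := mul_pos hx0 (h.pos x hx0)
    have hQ := (h.pos x hx0).ne'
    refine (((hasDerivAt_phi h hx0).log hp.ne').add (hasDerivAt_id x)).congr_deriv ?_
    field_simp
    ring
  intro r hr
  constructor
  · exact mono_of_deriv (f := fun r => log (r * Q r) + r) hr (fun x hx => hd x hx.1)
      (fun x hx => by linarith [gv_lt_one h (hR0.trans_le hx.1)])
  · have h1 := anti_of_deriv (f := fun r => log (r * Q r) + r + (1 - gv Q Qd r) / 2)
      (f' := fun x => 1 - gv Q Qd x + -(Q x ^ 2 - 1 + gv Q Qd x ^ 2) / 2) hr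
      (fun x hx => (hd x hx.1).add
        (((hasDerivAt_gv h (hR0.trans_le hx.1)).const_sub 1).div_const 2))
      (fun x hx => by
        have := four_m_le h hR hR' hRY x hx.1
        nlinarith [sq_nonneg (1 - gv Q Qd x)])
    have := gv_lt_one h (hR0.trans_le hr)
    linarith

/-! ### The regular solution -/

/-- A solution `y` (with derivative `yd`) of the radial equation `L₋ y = λ y`. -/
structure ES (Q : ℝ → ℝ) (lam : ℝ) (y yd : ℝ → ℝ) : Prop where
  d1 : ∀ r, 0 < r → HasDerivAt y (yd r) r
  d2 : ∀ r, 0 < r → HasDerivAt yd (-(2 / r) * yd r + (1 - lam - Q r ^ 2) * y r) r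

lemma ES.flux {lam : ℝ} {y yd : ℝ → ℝ} (e : ES Q lam y yd) {r : ℝ} (hr : 0 < r) :
    HasDerivAt (fun r => r ^ 2 * yd r) (r ^ 2 * ((1 - lam - Q r ^ 2) * y r)) r := by
  refine ((gt_pow_two r).mul (e.d2 r hr)).congr_deriv ?_
  field_simp
  ring

/-- The Wronskian flux `J` of `y` and `Q` satisfies `J' = λ φ² v` for `v = y / Q`. -/
lemma ES.hasDerivAt_J {lam : ℝ} {y yd : ℝ → ℝ} (h : GS Q Qd) (e : ES Q lam y yd) {r : ℝ}
    (hr : 0 < r) : HasDerivAt (fun r => r ^ 2 * (y r * Qd r - yd r * Q r))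
      (lam * (r * Q r) ^ 2 * (y r / Q r)) r := by
  have h1 := ((e.d1 r hr).mul (hasDerivAt_flux h hr)).sub ((e.flux hr).mul (h.d1 r hr))
  have hQ := (h.pos r hr).ne'
  refine (h1.congr_of_eventuallyEq (.of_forall fun x => ?_)).congr_deriv ?_
  · simp only [Pi.sub_apply, Pi.mul_apply]
    ring
  · field_simp
    ring

lemma ES.hasDerivAt_v {lam : ℝ} {y yd : ℝ → ℝ} (h : GS Q Qd) (e : ES Q lam y yd) {r : ℝ}
    (hr : 0 < r) : HasDerivAt (fun r => y r / Q r)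
      (-(r ^ 2 * (y r * Qd r - yd r * Q r)) / (r * Q r) ^ 2) r := by
  have hQ := (h.pos r hr).ne'
  refine ((e.d1 r hr).div (h.d1 r hr) hQ).congr_deriv ?_
  field_simp
  ring

lemma J_tendsto (h : GS Q Qd) {lam : ℝ} {y yd : ℝ → ℝ} (e : ES Q lam y yd)
    (hb : ∃ C : ℝ, ∀ r ∈ Ioc (0 : ℝ) 1, |y r| ≤ C) :
    Tendsto (fun r => r ^ 2 * (y r * Qd r - yd r * Q r)) (nhdsWithin 0 (Ioi 0)) (nhds 0) := by
  obtain ⟨C, hC⟩ := hb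
  obtain ⟨D, hD⟩ := h.bdd
  obtain ⟨K, hK0, hK⟩ := origin_bound h
  have hC0 : 0 ≤ C := (abs_nonneg _).trans (hC 1 ⟨one_pos, le_rfl⟩)
  have hD0 : 0 ≤ D := (abs_nonneg _).trans (hD 1 ⟨one_pos, le_rfl⟩)
  have hq : ∀ r ∈ Ioc (0 : ℝ) 1, |(1 - lam - Q r ^ 2) * y r| ≤ (|1 - lam| + D ^ 2) * C := by
    intro r hr
    rw [abs_mul]
    refine mul_le_mul ?_ (hC r hr) (abs_nonneg _) (by positivity)
    refine (abs_sub _ _).trans ?_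
    rw [abs_pow]
    have := pow_le_pow_left₀ (abs_nonneg _) (hD r hr) 2
    linarith
  have hyd := flux_bound (fun r hr => e.d1 r hr.1) (fun r hr => e.flux hr.1) hq hC
  set M := (|1 - lam| + D ^ 2) * C
  have hM0 : 0 ≤ M := by positivity
  refine tendsto_zero_of_le (C := C * K + M / 3 * D) (n := 3) (by norm_num) (fun r hr => ?_)
  have hr0 : 0 ≤ r := hr.1.le
  have h1 : |y r * Qd r| ≤ C * (K * r) := by
    rw [abs_mul]
    exact mul_le_mul (hC r hr) (hK r hr) (abs_nonneg _) hC0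
  have h2 : |yd r * Q r| ≤ M / 3 * r * D := by
    rw [abs_mul]
    exact mul_le_mul (hyd r hr) (hD r hr) (abs_nonneg _) (by positivity)
  rw [abs_mul, abs_of_nonneg (sq_nonneg r)]
  calc r ^ 2 * |y r * Qd r - yd r * Q r| ≤ r ^ 2 * (C * (K * r) + M / 3 * r * D) := by
        refine mul_le_mul_of_nonneg_left ?_ (sq_nonneg r)
        exact (abs_sub _ _).trans (add_le_add h1 h2)
    _ = _ := by ring

/-- Derivative of `r φ² ψ(y)`, the comparison function for the flux. -/
lemma hasDerivAt_cmp (h : GS Q Qd) (S : List ℚ) {r : ℝ} (hr : 0 < r) :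
    HasDerivAt (fun r => r * (r * Q r) ^ 2 * pev S (yv Q Qd r))
      ((r * Q r) ^ 2 * (pev S (yv Q Qd r) * (3 - 2 * yv Q Qd r) + pev (pder S) (yv Q Qd r)
        * (r ^ 2 * (Q r ^ 2 - 1) + yv Q Qd r ^ 2 - yv Q Qd r))) r := by
  have h1 := (hasDerivAt_pev S (yv Q Qd r)).comp r (hasDerivAt_yv h hr)
  refine (((hasDerivAt_id r).mul ((hasDerivAt_phi h hr).pow 2)).mul h1).congr_deriv ?_
  have e : gv Q Qd r = (yv Q Qd r - 1) / r := rfl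
  simp only [Function.comp, id, Pi.mul_apply, Pi.pow_apply]
  rw [e]
  push_cast
  field_simp
  ring

lemma cmp_tendsto {a p : ℝ} (ho : Origin Q Qd a p) (S : List ℚ) :
    Tendsto (fun r => r * (r * Q r) ^ 2 * pev S (yv Q Qd r)) (nhdsWithin 0 (Ioi 0)) (nhds 0) := by
  have h1 : Tendsto (fun r : ℝ => r) (nhdsWithin 0 (Ioi 0)) (nhds 0) :=
    tendsto_id.mono_left nhdsWithin_le_nhds
  have h2 := (hasDerivAt_pev S 0).continuousAt.tendsto.comp ho.limy
  have := (h1.mul ((h1.mul ho.limQ).pow 2)).mul h2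
  simpa using this

lemma pev_SA_pos {y : ℝ} (h0 : 0 ≤ y) (h1 : y ≤ 8 / 5) : 0 < pev SA y :=
  pev_pos_of_pchk chkSA2 (by norm_num) (by simpa using h0) (by push_cast; linarith)

lemma pev_SB_le {y : ℝ} (h0 : 0 ≤ y) (h1 : y ≤ 8 / 5) : pev SB y ≤ 0.9052 := by
  have hm := mono_of_deriv (f := pev SB) (f' := pev (pder SB)) h1
    (fun x _ => hasDerivAt_pev SB x) (fun x hx => (pev_pos_of_pchk chkSB3 (by norm_num)
      (by push_cast; linarith [hx.1]) (by push_cast; linarith [hx.2])).le)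
  have : pev SB (8 / 5) ≤ 0.9052 := by norm_num [pev, SB]
  linarith

/-- Bounds on the regular solution at a point `s` up to which it is nonnegative. Here `v = y / Q`
and `J = -φ² v'`; both are monotone, and `J` is compared with `r φ² ψ(y)`, where `ψ` is `SA`
from below and `SB` from above. -/
lemma y₁_step (h : GS Q Qd) {a p : ℝ} (ho : Origin Q Qd a p) {lam : ℝ} (hl : 0 < lam)
    {y yd : ℝ → ℝ} (e : ES Q lam y yd)
    (hb : ∃ C : ℝ, ∀ r ∈ Ioc (0 : ℝ) 1, |y r| ≤ C)
    (hlim : Tendsto y (nhdsWithin 0 (Ioi 0)) (nhds 1)) {s : ℝ} (hs : 0 < s)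
    (hY : ∀ r ∈ Ioc 0 s, yv Q Qd r ≤ 8 / 5)
    (hA : ∀ r ∈ Ioc 0 s, r ^ 2 * (Q r ^ 2 - 1) + yv Q Qd r ^ 2 - yv Q Qd r
        ≤ yv Q Qd r * pev (pE XA) (yv Q Qd r))
    (hB : ∀ r ∈ Ioc 0 s, yv Q Qd r * pev (pE XB) (yv Q Qd r)
        ≤ r ^ 2 * (Q r ^ 2 - 1) + yv Q Qd r ^ 2 - yv Q Qd r)
    (hy : ∀ r ∈ Ioc 0 s, 0 ≤ y r) :
    (1 - lam * (0.9052 * s ^ 2 / 2)) / a ≤ y s / Q s ∧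
      lam * (y s / Q s) * (s * (s * Q s) ^ 2 * pev SA (yv Q Qd s))
        ≤ s ^ 2 * (y s * Qd s - yd s * Q s) := by
  have ha := ho.a_pos
  have hJ0 := J_tendsto h e hb
  have hv0 : Tendsto (fun r => y r / Q r) (nhdsWithin 0 (Ioi 0)) (nhds (1 / a)) :=
    hlim.div ho.limQ ha.ne'
  set J : ℝ → ℝ := fun r => r ^ 2 * (y r * Qd r - yd r * Q r) with hJ
  set v : ℝ → ℝ := fun r => y r / Q r with hv
  have hJd : ∀ r, 0 < r → HasDerivAt J (lam * (r * Q r) ^ 2 * v r) r :=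
    fun r hr => e.hasDerivAt_J h hr
  have hvd : ∀ r, 0 < r → HasDerivAt v (-J r / (r * Q r) ^ 2) r :=
    fun r hr => e.hasDerivAt_v h hr
  have hφ : ∀ r, 0 < r → 0 < (r * Q r) ^ 2 := fun r hr => pow_pos (mul_pos hr (h.pos r hr)) 2
  have hvn : ∀ r ∈ Ioc 0 s, 0 ≤ v r := fun r hr => div_nonneg (hy r hr) (h.pos r hr.1).le
  have hJn : ∀ r ∈ Ioc 0 s, 0 ≤ J r := by
    intro r hr
    refine lim_zero_le hr.1 (fun x hx => hJd x hx.1) (fun x hx => ?_) hJ0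
    have := hvn x ⟨hx.1, hx.2.trans hr.2⟩
    have := hφ x hx.1
    positivity
  have hva : ∀ r ∈ Ioc 0 s, v r ≤ 1 / a := by
    intro r hr
    have := lim_zero_le (f := fun x => -v x) hr.1 (fun x hx => (hvd x hx.1).neg) (fun x hx => by
      have h1 := hJn x ⟨hx.1, hx.2.trans hr.2⟩
      have := hφ x hx.1
      rw [← neg_div, neg_neg]
      positivity) hv0.neg
    linarith
  have hJB : ∀ r ∈ Ioc 0 s, J r ≤ lam / a * (r * (r * Q r) ^ 2 * pev SB (yv Q Qd r)) := by
    intro r hr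
    have h1 := ((cmp_tendsto ho SB).const_mul (lam / a)).sub hJ0
    rw [mul_zero, sub_zero] at h1
    have := lim_zero_le hr.1 (fun x hx => ((hasDerivAt_cmp h SB hx.1).const_mul (lam / a)).sub
      (hJd x hx.1)) (fun x hx => ?_) h1
    · simp only [Pi.sub_apply] at this
      linarith
    · have hx' : x ∈ Ioc 0 s := ⟨hx.1, hx.2.trans hr.2⟩
      have hyp := yv_pos h hx.1
      have c1 := pev_pos_of_pchk chkSB1 (x := yv Q Qd x) (by norm_num) (by push_cast; linarith)
        (by push_cast; linarith [hY x hx'])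
      have c3 := pev_pos_of_pchk chkSB3 (x := yv Q Qd x) (by norm_num) (by push_cast; linarith)
        (by push_cast; linarith [hY x hx'])
      have hc := mul_le_mul_of_nonneg_left (hB x hx') c3.le
      simp only [pRψ, pev_padd, pev_pmul, pev] at c1
      push_cast at c1
      have h2 : 1 ≤ pev SB (yv Q Qd x) * (3 - 2 * yv Q Qd x) + pev (pder SB) (yv Q Qd x)
        * (x ^ 2 * (Q x ^ 2 - 1) + yv Q Qd x ^ 2 - yv Q Qd x) := by nlinarith
      have hz := hφ x hx.1
      have hvx := hva x hx'
      have h3 : lam * (x * Q x) ^ 2 * v x ≤ lam * (x * Q x) ^ 2 * (1 / a) :=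
        mul_le_mul_of_nonneg_left hvx (by positivity)
      have h4 : lam / a * ((x * Q x) ^ 2 * 1) ≤ lam / a * ((x * Q x) ^ 2 *
          (pev SB (yv Q Qd x) * (3 - 2 * yv Q Qd x) + pev (pder SB) (yv Q Qd x)
        * (x ^ 2 * (Q x ^ 2 - 1) + yv Q Qd x ^ 2 - yv Q Qd x))) :=
        mul_le_mul_of_nonneg_left (mul_le_mul_of_nonneg_left h2 hz.le) (by positivity)
      have h5 : lam / a * ((x * Q x) ^ 2 * 1) = lam * (x * Q x) ^ 2 * (1 / a) := by ring
      linarith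
  constructor
  · have hl0 : Tendsto (fun r : ℝ => lam * 0.9052 / (2 * a) * r ^ 2) (nhdsWithin 0 (Ioi 0))
        (nhds 0) := by
      have : Tendsto (fun r : ℝ => lam * 0.9052 / (2 * a) * r ^ 2) (nhds 0)
          (nhds (lam * 0.9052 / (2 * a) * 0 ^ 2)) :=
        (continuous_const.mul (continuous_pow 2)).tendsto 0
      rw [zero_pow two_ne_zero, mul_zero] at this
      exact this.mono_left nhdsWithin_le_nhds
    have h1 := hv0.add hl0
    rw [add_zero] at h1
    have := lim_zero_le hs (fun x hx => (hvd x hx.1).add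
      ((gt_pow_two x).const_mul (lam * 0.9052 / (2 * a)))) (fun x hx => ?_) h1
    · have e1 : (1 - lam * (0.9052 * s ^ 2 / 2)) / a = 1 / a - lam * 0.9052 / (2 * a) * s ^ 2 := by
        field_simp
      rw [e1]
      simp only [Pi.add_apply, hv] at this
      linarith
    · have hyp := yv_pos h hx.1
      have hθ := pev_SB_le hyp.le (hY x hx)
      have hx0 : 0 < x := hx.1
      have hz := hφ x hx.1
      have h2 : J x / (x * Q x) ^ 2 ≤ lam / a * (x * 0.9052) := by
        rw [div_le_iff₀ hz]
        refine (hJB x hx).trans ?_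
        have : lam / a * (x * (x * Q x) ^ 2 * pev SB (yv Q Qd x))
            ≤ lam / a * (x * (x * Q x) ^ 2 * 0.9052) := by gcongr
        linarith
      have e2 : lam * 0.9052 / (2 * a) * (2 * x) = lam / a * (x * 0.9052) := by
        field_simp
      rw [e2, neg_div]
      linarith
  · have h1 := hJ0.sub ((cmp_tendsto ho SA).const_mul (lam * v s))
    rw [mul_zero, sub_zero] at h1
    have := lim_zero_le hs (fun x hx => (hJd x hx.1).sub
      ((hasDerivAt_cmp h SA hx.1).const_mul (lam * v s))) (fun x hx => ?_) h1
    · simp only [Pi.sub_apply, hJ, hv] at this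
      linarith
    · have hyp := yv_pos h hx.1
      have c1 := pev_pos_of_pchk chkSA1 (x := yv Q Qd x) (by norm_num) (by push_cast; linarith)
        (by push_cast; linarith [hY x hx])
      have c3 := pev_pos_of_pchk chkSA3 (x := yv Q Qd x) (by norm_num) (by push_cast; linarith)
        (by push_cast; linarith [hY x hx])
      have hc := mul_le_mul_of_nonneg_left (hA x hx) c3.le
      simp only [pRψ, pev_padd, pev_pmul, pev_psm, pev] at c1
      push_cast at c1
      have h2 : pev SA (yv Q Qd x) * (3 - 2 * yv Q Qd x) + pev (pder SA) (yv Q Qd x)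
        * (x ^ 2 * (Q x ^ 2 - 1) + yv Q Qd x ^ 2 - yv Q Qd x) ≤ 1 := by nlinarith
      have hz := hφ x hx.1
      have hvs : v s ≤ v x := anti_of_deriv hx.2
        (fun t ht => hvd t (hx.1.trans_le ht.1)) (fun t ht => by
          have ht0 := hx.1.trans_le ht.1
          have := hJn t ⟨ht0, ht.2⟩
          have := hφ t ht0
          rw [neg_div]
          have : 0 ≤ J t / (t * Q t) ^ 2 := by positivity
          linarith)
      have hvs0 := hvn s ⟨hs, le_rfl⟩
      have h3 : lam * v s * ((x * Q x) ^ 2 * (pev SA (yv Q Qd x) * (3 - 2 * yv Q Qd x)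
          + pev (pder SA) (yv Q Qd x)
          * (x ^ 2 * (Q x ^ 2 - 1) + yv Q Qd x ^ 2 - yv Q Qd x))) ≤ lam * v s * ((x * Q x) ^ 2 * 1) :=
        mul_le_mul_of_nonneg_left (mul_le_mul_of_nonneg_left h2 hz.le) (by positivity)
      have h4 : lam * (x * Q x) ^ 2 * v s ≤ lam * (x * Q x) ^ 2 * v x :=
        mul_le_mul_of_nonneg_left hvs (by positivity)
      linarith

/-- The bounds of `y₁_step` hold on `(0, R]`: the first of them keeps `y` positive. -/
lemma y₁_bounds (h : GS Q Qd) {a p : ℝ} (ho : Origin Q Qd a p) {lam : ℝ} (hl : 0 < lam)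
    (hl1 : lam ≤ 1) {y yd : ℝ → ℝ} (e : ES Q lam y yd)
    (hb : ∃ C : ℝ, ∀ r ∈ Ioc (0 : ℝ) 1, |y r| ≤ C)
    (hlim : Tendsto y (nhdsWithin 0 (Ioi 0)) (nhds 1)) {R : ℝ} (hR : 0 < R) (hR1 : R ≤ 1)
    (hY : ∀ r ∈ Ioc 0 R, yv Q Qd r ≤ 8 / 5)
    (hA : ∀ r ∈ Ioc 0 R, r ^ 2 * (Q r ^ 2 - 1) + yv Q Qd r ^ 2 - yv Q Qd r
        ≤ yv Q Qd r * pev (pE XA) (yv Q Qd r))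
    (hB : ∀ r ∈ Ioc 0 R, yv Q Qd r * pev (pE XB) (yv Q Qd r)
        ≤ r ^ 2 * (Q r ^ 2 - 1) + yv Q Qd r ^ 2 - yv Q Qd r) :
    (1 - lam * (0.9052 * R ^ 2 / 2)) / a ≤ y R / Q R ∧
      lam * (y R / Q R) * (R * (R * Q R) ^ 2 * pev SA (yv Q Qd R))
        ≤ R ^ 2 * (y R * Qd R - yd R * Q R) := by
  have hsub : ∀ s ∈ Ioc 0 R, (∀ r ∈ Ioc 0 s, 0 ≤ y r) → _ := fun s hs hys =>
    y₁_step h ho hl e hb hlim hs.1 (fun r hr => hY r ⟨hr.1, hr.2.trans hs.2⟩)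
      (fun r hr => hA r ⟨hr.1, hr.2.trans hs.2⟩) (fun r hr => hB r ⟨hr.1, hr.2.trans hs.2⟩) hys
  have hpos : ∀ s ∈ Ioc 0 R, 0 < y s := by
    refine pos_of_step (fun x hx => (e.d1 x hx.1).continuousAt)
      (hlim.eventually_const_lt one_pos) (fun s hs hys => ?_)
    have hs0 : 0 ≤ y s := by
      refine ge_of_tendsto ((e.d1 s hs.1).continuousAt.tendsto.mono_left
        (nhdsWithin_le_nhds (s := Iio s))) ?_
      filter_upwards [Ioo_mem_nhdsLT hs.1] with x hx using (hys x hx).le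
    have h1 := (hsub s hs (fun r hr => by
      rcases hr.2.lt_or_eq with hlt | heq
      · exact (hys r ⟨hr.1, hlt⟩).le
      · rw [heq]; exact hs0)).1
    have h2 : 0 < (1 - lam * (0.9052 * s ^ 2 / 2)) / a := by
      refine div_pos ?_ ho.a_pos
      have : s ^ 2 ≤ 1 := pow_le_one₀ hs.1.le (hs.2.trans hR1)
      nlinarith [sq_nonneg s]
    have h3 := h2.trans_le h1
    exact (div_pos_iff_of_pos_right (h.pos s hs.1)).1 h3
  exact hsub R ⟨hR, le_rfl⟩ (fun r hr => (hpos r hr).le)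

/-! ### The decaying solution -/

/-- The logarithm of `U = φ^(1+τ) e^(2τr)`, where `τ = 1 - σ`. Beyond `R` this `U` satisfies
`U'' ≤ (σ² - Q²) U`, and it decays like `e^(-σr)`. -/
noncomputable def lU (Q : ℝ → ℝ) (τ r : ℝ) : ℝ := (1 + τ) * log (r * Q r) + 2 * τ * r

lemma hasDerivAt_lU (h : GS Q Qd) (τ : ℝ) {r : ℝ} (hr : 0 < r) :
    HasDerivAt (lU Q τ) (-(1 - τ) + (1 + τ) * (1 - gv Q Qd r)) r := by
  have hp : 0 < r * Q r := mul_pos hr (h.pos r hr)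
  have hQ := (h.pos r hr).ne'
  refine ((((hasDerivAt_phi h hr).log hp.ne').const_mul (1 + τ)).add
    ((hasDerivAt_id r).const_mul (2 * τ))).congr_deriv ?_
  field_simp
  ring

/-- If `y` is nonnegative on `[s, ∞)`, comparison with `U` bounds it from below at `s`. -/
lemma y₂_step (h : GS Q Qd) {R : ℝ} (hR : 0.83 ≤ R) (hR' : R ≤ 0.8715)
    (hRY : yv Q Qd R = 8 / 5) {lam τ : ℝ} (hτ0 : 0 ≤ τ) (hτ1 : τ ≤ 1) (hlam : lam = 2 * τ - τ ^ 2)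
    {y yd : ℝ → ℝ} (e : ES Q lam y yd)
    (hlim : Tendsto (fun r => r * exp ((1 - τ) * r) * y r) atTop (nhds 1)) {s : ℝ} (hs : R ≤ s)
    (hy : ∀ r, s ≤ r → 0 ≤ y r) :
    exp (lU Q τ s - (1 + τ) * (log (R * Q R) + R + (1 - gv Q Qd R) / 2)) ≤ s * y s := by
  have hR0 : 0 < R := by linarith
  have hpos : ∀ r, s ≤ r → 0 < r := fun r hr => by linarith
  set α := log (R * Q R) + R + (1 - gv Q Qd R) / 2 with hα
  set β := log (R * Q R) + R with hβ
  have hlogB : ∀ r, R ≤ r → β ≤ log (r * Q r) + r ∧ log (r * Q r) + r ≤ α :=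
    logB_bounds h hR hR' hRY
  set ℓ : ℝ → ℝ := fun r => -(1 - τ) + (1 + τ) * (1 - gv Q Qd r) with hℓ
  -- the Wronskian of `u = r y` and `U`, divided by `U`
  set W : ℝ → ℝ := fun r => r * y r * ℓ r - (y r + r * yd r) with hW
  have hud : ∀ r, 0 < r → HasDerivAt (fun r => r * y r) (y r + r * yd r) r := fun r hr =>
    ((hasDerivAt_id r).mul (e.d1 r hr)).congr_deriv (by simp only [id]; ring)
  have hudd : ∀ r, 0 < r → HasDerivAt (fun r => y r + r * yd r)
      ((1 - lam - Q r ^ 2) * (r * y r)) r := fun r hr =>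
    ((e.d1 r hr).add ((hasDerivAt_id r).mul (e.d2 r hr))).congr_deriv (by
      simp only [id]; field_simp; ring)
  have hℓd : ∀ r, 0 < r → HasDerivAt ℓ ((1 + τ) * -(Q r ^ 2 - 1 + gv Q Qd r ^ 2)) r := fun r hr =>
    (((hasDerivAt_gv h hr).const_sub 1).const_mul (1 + τ)).const_add (-(1 - τ))
  have hWd : ∀ r, 0 < r → HasDerivAt (fun r => W r * exp (lU Q τ r))
      (r * y r * ((1 + τ) * -(Q r ^ 2 - 1 + gv Q Qd r ^ 2) + ℓ r ^ 2 - (1 - lam - Q r ^ 2))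
        * exp (lU Q τ r)) r := fun r hr => by
    refine (((((hud r hr).mul (hℓd r hr)).sub (hudd r hr)).mul
      (hasDerivAt_lU h τ hr).exp)).congr_deriv ?_
    simp only [hℓ, Pi.sub_apply, Pi.mul_apply]
    ring
  have hWanti : ∀ a b, s ≤ a → a ≤ b → W b * exp (lU Q τ b) ≤ W a * exp (lU Q τ a) := by
    intro a b ha hab
    refine anti_of_deriv (f := fun r => W r * exp (lU Q τ r)) hab
      (fun x hx => hWd x (hpos x (ha.trans hx.1))) (fun x hx => ?_)
    have hx0 := hpos x (ha.trans hx.1)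
    have hyx := hy x (ha.trans hx.1)
    have h4 := four_m_le h hR hR' hRY x (hs.trans (ha.trans hx.1))
    have hm := gv_lt_one h hx0
    have hneg : (1 + τ) * -(Q x ^ 2 - 1 + gv Q Qd x ^ 2) + ℓ x ^ 2 - (1 - lam - Q x ^ 2) ≤ 0 := by
      obtain ⟨m, hmd⟩ : ∃ m, m = 1 - gv Q Qd x := ⟨_, rfl⟩
      have hg : gv Q Qd x = 1 - m := by linarith
      simp only [hℓ]
      rw [← hmd] at h4 ⊢
      rw [hg] at hm ⊢
      rw [hlam]
      have hm0 : 0 < m := by linarith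
      have e1 : (1 + τ) * -(Q x ^ 2 - 1 + (1 - m) ^ 2) + (-(1 - τ) + (1 + τ) * m) ^ 2
          - (1 - (2 * τ - τ ^ 2) - Q x ^ 2)
          = -(τ * (Q x ^ 2 - (4 * m + 2 * m ^ 2) + (1 - τ) * (2 * m + m ^ 2))) := by ring
      rw [e1]
      have : 0 ≤ τ * (Q x ^ 2 - (4 * m + 2 * m ^ 2) + (1 - τ) * (2 * m + m ^ 2)) :=
        mul_nonneg hτ0 (add_nonneg (by linarith) (mul_nonneg (by linarith) (by positivity)))
      linarith
    have h5 : 0 ≤ x * y x := mul_nonneg hx0.le hyx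
    exact mul_nonpos_of_nonpos_of_nonneg (mul_nonpos_of_nonneg_of_nonpos h5 hneg) (exp_pos _).le
  have hqd : ∀ r, 0 < r → HasDerivAt (fun r => r * y r * exp (-lU Q τ r))
      (-(W r * exp (-lU Q τ r))) r := fun r hr => by
    refine ((hud r hr).mul (hasDerivAt_lU h τ hr).neg.exp).congr_deriv ?_
    simp only [hW, hℓ, Pi.neg_apply]
    ring
  have hlU : ∀ r, lU Q τ r = (1 + τ) * (log (r * Q r) + r) - (1 - τ) * r := fun r => by
    unfold lU; ring
  have hWn : ∀ t, s ≤ t → 0 ≤ W t := by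
    intro t ht
    by_contra hcon
    push Not at hcon
    set ε := -(W t * exp (lU Q τ t)) with hε
    have hε0 : 0 < ε := by
      have := mul_pos (neg_pos.2 hcon) (exp_pos (lU Q τ t))
      linarith
    refine unbounded_of_deriv (f := fun r => r * y r * exp (-lU Q τ r)) (r₀ := t)
      (δ := ε * exp (-(2 * ((1 + τ) * α)))) (C := 2 * exp (-((1 + τ) * β)))
      (mul_pos hε0 (exp_pos _)) (fun x hx => hqd x (hpos x (ht.trans hx))) (fun x hx => ?_) ?_
    · have h1 := hWanti t x ht hx
      have h2 := (hlogB x (hs.trans (ht.trans hx))).2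
      have h3 : lU Q τ x ≤ (1 + τ) * α := by
        rw [hlU]
        have := mul_le_mul_of_nonneg_left h2 (show 0 ≤ 1 + τ by linarith)
        have := mul_nonneg (show 0 ≤ 1 - τ by linarith) (hpos x (ht.trans hx)).le
        linarith
      have h4 : -(W x * exp (-lU Q τ x)) = -(W x * exp (lU Q τ x)) * exp (-(2 * lU Q τ x)) := by
        rw [neg_mul, mul_assoc, ← exp_add]
        congr 3
        ring
      rw [h4]
      refine mul_le_mul (by linarith) (exp_le_exp.2 (by linarith)) (exp_pos _).le (by linarith)
    · filter_upwards [hlim.eventually_le_const (show (1 : ℝ) < 2 by norm_num),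
        eventually_ge_atTop s] with x hx hxs
      have h2 := (hlogB x (hs.trans hxs)).1
      have h3 : exp (-lU Q τ x) = exp ((1 - τ) * x) * exp (-((1 + τ) * (log (x * Q x) + x))) := by
        rw [hlU, ← exp_add]
        congr 1
        ring
      have h4 : exp (-((1 + τ) * (log (x * Q x) + x))) ≤ exp (-((1 + τ) * β)) := by
        apply exp_le_exp.2
        have := mul_le_mul_of_nonneg_left h2 (show 0 ≤ 1 + τ by linarith)
        linarith
      calc x * y x * exp (-lU Q τ x)
          = x * exp ((1 - τ) * x) * y x * exp (-((1 + τ) * (log (x * Q x) + x))) := by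
            rw [h3]; ring
        _ ≤ 2 * exp (-((1 + τ) * β)) := mul_le_mul hx h4 (exp_pos _).le (by norm_num)
  have hge : exp (-((1 + τ) * α)) ≤ s * y s * exp (-lU Q τ s) := by
    have hl := hlim.mul_const (exp (-((1 + τ) * α)))
    rw [one_mul] at hl
    refine le_of_tendsto hl ?_
    filter_upwards [eventually_ge_atTop s] with x hx
    have h1 := anti_of_deriv (f := fun r => r * y r * exp (-lU Q τ r)) hx
      (fun t ht => hqd t (hpos t ht.1)) (fun t ht => by
        have := mul_nonneg (hWn t ht.1) (exp_pos (-lU Q τ t)).le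
        linarith)
    refine le_trans ?_ h1
    have h2 := (hlogB x (hs.trans hx)).2
    have h3 : exp (-lU Q τ x) = exp ((1 - τ) * x) * exp (-((1 + τ) * (log (x * Q x) + x))) := by
      rw [hlU, ← exp_add]
      congr 1
      ring
    have h4 : exp (-((1 + τ) * α)) ≤ exp (-((1 + τ) * (log (x * Q x) + x))) := by
      apply exp_le_exp.2
      have := mul_le_mul_of_nonneg_left h2 (show 0 ≤ 1 + τ by linarith)
      linarith
    have hx0 := hpos x hx
    have h5 : 0 ≤ x * exp ((1 - τ) * x) * y x :=
      mul_nonneg (mul_nonneg hx0.le (exp_pos _).le) (hy x hx)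
    calc _ ≤ x * exp ((1 - τ) * x) * y x * exp (-((1 + τ) * (log (x * Q x) + x))) :=
          mul_le_mul_of_nonneg_left h4 h5
      _ = _ := by rw [h3]; ring
  have h1 := mul_le_mul_of_nonneg_right hge (exp_pos (lU Q τ s)).le
  rw [mul_assoc, ← exp_add, ← exp_add] at h1
  simpa [sub_eq_add_neg, add_comm] using h1

/-- The lower bound of `y₂_step` holds on all of `[R, ∞)`: it prevents a last zero of `y`. -/
lemma y₂_lower (h : GS Q Qd) {R : ℝ} (hR : 0.83 ≤ R) (hR' : R ≤ 0.8715)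
    (hRY : yv Q Qd R = 8 / 5) {lam τ : ℝ} (hτ0 : 0 ≤ τ) (hτ1 : τ ≤ 1) (hlam : lam = 2 * τ - τ ^ 2)
    {y yd : ℝ → ℝ} (e : ES Q lam y yd)
    (hlim : Tendsto (fun r => r * exp ((1 - τ) * r) * y r) atTop (nhds 1)) :
    ∀ s, R ≤ s →
      exp (lU Q τ s - (1 + τ) * (log (R * Q R) + R + (1 - gv Q Qd R) / 2)) ≤ s * y s := by
  obtain ⟨T, hT⟩ := eventually_atTop.1 (hlim.eventually_const_lt one_pos)
  have hR0 : 0 < R := by linarith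
  set T' := max T (R + 1) with hT'
  have hTR : R < T' := by
    have := le_max_right T (R + 1)
    linarith
  have hyT : ∀ r, T' ≤ r → 0 < y r := fun r hr => by
    have h1 := hT r ((le_max_left _ _).trans hr)
    have h2 : 0 < r := by linarith
    exact pos_of_mul_pos_right h1 (mul_nonneg h2.le (exp_pos _).le)
  have hstep := fun s hs => y₂_step h hR hR' hRY hτ0 hτ1 hlam e hlim (s := s) hs
  have hall : ∀ x ∈ Ioc 0 (T' - R), 0 < y (T' - x) := by
    have hc : ∀ x ∈ Ico 0 (T' - R + 0.1), ContinuousAt (fun x => y (T' - x)) x := fun x hx =>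
      ContinuousAt.comp (f := fun x => T' - x) (g := y)
        (e.d1 (T' - x) (by linarith [hx.2])).continuousAt (by fun_prop)
    refine pos_of_step (f := fun x => y (T' - x)) (fun x hx => hc x ⟨hx.1.le, by linarith [hx.2]⟩)
      ?_ (fun s hs hys => ?_)
    · have h1 := (hc 0 ⟨le_rfl, by linarith⟩).tendsto
      rw [sub_zero] at h1
      exact (h1.eventually_const_lt (hyT T' le_rfl)).filter_mono nhdsWithin_le_nhds
    · have hs0 : 0 ≤ y (T' - s) := by
        refine ge_of_tendsto ((hc s ⟨hs.1.le, by linarith [hs.2]⟩).tendsto.mono_left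
          (nhdsWithin_le_nhds (s := Iio s))) ?_
        filter_upwards [Ioo_mem_nhdsLT hs.1] with x hx using (hys x hx).le
      have h1 := hstep (T' - s) (by linarith [hs.2]) (fun r hr => by
        rcases hr.lt_or_eq with hlt | heq
        · rcases lt_or_ge r T' with h2 | h2
          · have := hys (T' - r) ⟨by linarith, by linarith⟩
            rw [sub_sub_cancel] at this
            exact this.le
          · exact (hyT r h2).le
        · rw [← heq]; exact hs0)
      have h2 := (exp_pos _).trans_le h1
      have h3 : 0 < T' - s := by linarith [hs.2]
      exact pos_of_mul_pos_right h2 h3.le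
  intro s hs
  refine hstep s hs (fun r hr => ?_)
  rcases lt_or_ge r T' with h2 | h2
  · have := hall (T' - r) ⟨by linarith, by linarith⟩
    rw [sub_sub_cancel] at this
    exact this.le
  · exact (hyT r h2).le

/-- A lower bound for the flux `φ² (y / Q)'` at `R` of a solution nonnegative beyond `R`. It reflects
`∫_R^∞ φ² ≥ φ(R)² / 2`, which holds since `φ' ≥ -φ`. -/
lemma y₂_flux (h : GS Q Qd) {R : ℝ} (hR : 0.83 ≤ R) (hR' : R ≤ 0.8715)
    (hRY : yv Q Qd R = 8 / 5) {lam : ℝ} (hl : 0 < lam)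
    {y yd : ℝ → ℝ} (e : ES Q lam y yd) (hy : ∀ r, R ≤ r → 0 ≤ y r) :
    lam * (y R / Q R) * ((R * Q R) ^ 2 / 2) ≤ -(R ^ 2 * (y R * Qd R - yd R * Q R)) := by
  have hR0 : 0 < R := by linarith
  have hpos : ∀ r, R ≤ r → 0 < r := fun r hr => by linarith
  set J : ℝ → ℝ := fun r => r ^ 2 * (y r * Qd r - yd r * Q r) with hJ
  set v : ℝ → ℝ := fun r => y r / Q r with hv
  have hJd : ∀ r, 0 < r → HasDerivAt J (lam * (r * Q r) ^ 2 * v r) r :=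
    fun r hr => e.hasDerivAt_J h hr
  have hvd : ∀ r, 0 < r → HasDerivAt v (-J r / (r * Q r) ^ 2) r :=
    fun r hr => e.hasDerivAt_v h hr
  have hφ : ∀ r, 0 < r → 0 < (r * Q r) ^ 2 := fun r hr => pow_pos (mul_pos hr (h.pos r hr)) 2
  have hvn : ∀ r, R ≤ r → 0 ≤ v r := fun r hr => div_nonneg (hy r hr) (h.pos r (hpos r hr)).le
  set α := log (R * Q R) + R + (1 - gv Q Qd R) / 2
  have hφle : ∀ r, R ≤ r → r * Q r ≤ exp (α - r) := fun r hr => by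
    have h1 : log (r * Q r) + r ≤ α := (logB_bounds h hR hR' hRY r hr).2
    rw [← log_le_iff_le_exp (mul_pos (hpos r hr) (h.pos r (hpos r hr)))]
    linarith
  have hJmono : ∀ a b, R ≤ a → a ≤ b → J a ≤ J b := fun a b ha hab =>
    mono_of_deriv hab (fun x hx => hJd x (hpos x (ha.trans hx.1))) (fun x hx => by
      have := hvn x (ha.trans hx.1)
      have := hφ x (hpos x (ha.trans hx.1))
      positivity)
  have hJn : ∀ t, R ≤ t → J t ≤ 0 := by
    intro t ht
    by_contra hcon
    push Not at hcon
    refine unbounded_of_deriv (f := fun r => -v r) (r₀ := t)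
      (δ := J t / exp α ^ 2) (C := 0) (by positivity)
      (fun x hx => (hvd x (hpos x (ht.trans hx))).neg) (fun x hx => ?_) ?_
    · have hx0 := hpos x (ht.trans hx)
      rw [← neg_div, neg_neg]
      have h1 := hJmono t x ht hx
      have h2 : (x * Q x) ^ 2 ≤ exp α ^ 2 := by
        refine pow_le_pow_left₀ (mul_pos hx0 (h.pos x hx0)).le ?_ 2
        exact (hφle x (ht.trans hx)).trans (exp_le_exp.2 (by linarith))
      exact div_le_div₀ (by linarith) h1 (hφ x hx0) h2
    · filter_upwards [eventually_ge_atTop R] with x hx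
      linarith [hvn x hx]
  have hvmono : ∀ r, R ≤ r → v R ≤ v r := fun r hr =>
    mono_of_deriv hr (fun x hx => hvd x (hpos x hx.1)) (fun x hx =>
      div_nonneg (by linarith [hJn x hx.1]) (hφ x (hpos x hx.1)).le)
  have hφ0 : Tendsto (fun r => r * Q r) atTop (nhds 0) := by
    have h1 : Tendsto (fun r => exp (α - r)) atTop (nhds 0) :=
      tendsto_exp_atBot.comp (tendsto_const_nhds.add_atBot tendsto_neg_atTop_atBot)
    refine tendsto_of_tendsto_of_tendsto_of_le_of_le' tendsto_const_nhds h1 ?_ ?_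
    · filter_upwards [eventually_ge_atTop R] with r hr
      exact (mul_pos (hpos r hr) (h.pos r (hpos r hr))).le
    · filter_upwards [eventually_ge_atTop R] with r hr using hφle r hr
  have hlim : Tendsto (fun r => lam * v R / 2 * (r * Q r) ^ 2) atTop (nhds 0) := by
    simpa using (hφ0.pow 2).const_mul (lam * v R / 2)
  have hfin : 0 ≤ -J R - lam * v R / 2 * (R * Q R) ^ 2 := by
    have h1 := hlim.neg
    rw [neg_zero] at h1
    refine le_of_tendsto h1 ?_
    filter_upwards [eventually_ge_atTop R] with r hr
    have h2 := mono_of_deriv (f := fun r => J r + lam * v R / 2 * (r * Q r) ^ 2) hr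
      (fun x hx => (hJd x (hpos x hx.1)).add
        (((hasDerivAt_phi h (hpos x hx.1)).pow 2).const_mul (lam * v R / 2))) (fun x hx => by
        have hx0 := hpos x hx.1
        have h3 := hvmono x hx.1
        have h4 := gv_lt_one h hx0
        have h5 := hvn R le_rfl
        have h6 := hφ x hx0
        have h7 : 0 ≤ lam * (x * Q x) ^ 2 * (v x - v R * gv Q Qd x) :=
          mul_nonneg (by positivity) (by nlinarith)
        refine h7.trans_eq ?_
        push_cast
        ring)
    have := hJn r hr
    linarith
  have e1 : lam * (y R / Q R) * ((R * Q R) ^ 2 / 2) = lam * v R / 2 * (R * Q R) ^ 2 := by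
    simp only [hv]; ring
  rw [e1]
  linarith

/-! ### The Wronskian -/

/-- The size of the Wronskian when `τ = 0`, up to the factor `1 / Q(0)`. -/
lemma numeric_bound {R φ : ℝ} (hR : 0.83 ≤ R) (hR' : R ≤ 0.8715) (hφ : 0 < φ)
    (hz : 0.3799 ≤ φ ^ 2 - R ^ 2) :
    0.4662 ≤ exp (-(R + (1 - 0.6 / R) / 2)) * φ * (1 / 2 + R * 0.8906) := by
  have hR0 : 0 < R := by linarith
  have he : 0.36787 ≤ exp (-1) := by
    rw [exp_neg, ← one_div, le_div_iff₀ (exp_pos 1)]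
    have := exp_one_lt_d9
    linarith
  have key : ∀ b E₀ φ₀ : ℝ, b ≤ R → 0 ≤ b → (R + (1 - 0.6 / R) / 2) ≤ E₀ → E₀ ≤ 2 → φ₀ ≤ φ → 0 ≤ φ₀ →
      0.36787 * (2 - E₀) * φ₀ * (1 / 2 + b * 0.8906)
        ≤ exp (-(R + (1 - 0.6 / R) / 2)) * φ * (1 / 2 + R * 0.8906) := by
    intro b E₀ φ₀ hb hb0 hE hE2 hφ0 hφ00
    have h1 : 0.36787 * (2 - E₀) ≤ exp (-(R + (1 - 0.6 / R) / 2)) := by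
      calc 0.36787 * (2 - E₀) ≤ exp (-1) * exp (1 - E₀) := by
            refine mul_le_mul he ?_ (by linarith) (exp_pos _).le
            have := add_one_le_exp (1 - E₀)
            linarith
        _ = exp (-E₀) := by rw [← exp_add]; ring_nf
        _ ≤ _ := exp_le_exp.2 (by linarith)
    have h2 : 0 ≤ 2 - E₀ := by linarith
    gcongr
  rcases le_total R 0.85 with h | h
  · have hi : 0.70588 ≤ 0.6 / R := by rw [le_div_iff₀ hR0]; nlinarith
    refine le_trans ?_ (key 0.83 0.9971 1.0338 hR (by norm_num) (by linarith) (by norm_num)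
      (by nlinarith) (by norm_num))
    norm_num
  · have hi : 0.68846 ≤ 0.6 / R := by rw [le_div_iff₀ hR0]; nlinarith
    refine le_trans ?_ (key 0.85 1.0273 1.0499 h (by norm_num) (by linarith) (by norm_num)
      (by nlinarith) (by norm_num))
    norm_num

/-- The loss of `v₁` in `λ` is compensated by the gain of `v₂` in `τ`. -/
lemma tau_bound {R τ : ℝ} (hR : 0.83 ≤ R) (hR' : R ≤ 0.8715) (h0 : 0 ≤ τ) (h1 : τ ≤ 1) :
    1 ≤ (1 - (2 * τ - τ ^ 2) * (0.9052 * R ^ 2 / 2))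
      * exp (τ * (R - (1 - 0.6 / R) / 2)) := by
  have hR0 : 0 < R := by linarith
  have hi1 : 0.688 ≤ 0.6 / R := by rw [le_div_iff₀ hR0]; nlinarith
  have hi2 : 0.6 / R ≤ 0.723 := by rw [div_le_iff₀ hR0]; nlinarith
  obtain ⟨L, hL⟩ : ∃ L, L = R - (1 - 0.6 / R) / 2 := ⟨_, rfl⟩
  rw [← hL]
  have hL1 : L ≤ 1 := by linarith
  have hLc : 0.9052 * R ^ 2 ≤ L := by nlinarith
  have hL0 : 0 ≤ L := by nlinarith
  have he : 1 + τ * L + (τ * L) ^ 2 / 2 ≤ exp (τ * L) :=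
    quadratic_le_exp_of_nonneg (mul_nonneg h0 hL0)
  have hlam : 0 ≤ 2 * τ - τ ^ 2 := by nlinarith
  have h2 : 1 - τ * L + τ ^ 2 * L / 2 ≤ 1 - (2 * τ - τ ^ 2) * (0.9052 * R ^ 2 / 2) := by
    have := mul_le_mul_of_nonneg_left hLc hlam
    linarith
  have h3 : 0 ≤ 1 - τ * L + τ ^ 2 * L / 2 := by
    have : τ * L ≤ 1 := mul_le_one₀ h1 hL0 hL1
    nlinarith [mul_nonneg (sq_nonneg τ) hL0]
  calc (1 : ℝ) ≤ (1 - τ * L + τ ^ 2 * L / 2) * (1 + τ * L + (τ * L) ^ 2 / 2) := by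
        have e : (1 - τ * L + τ ^ 2 * L / 2) * (1 + τ * L + (τ * L) ^ 2 / 2) - 1
            = τ ^ 2 * L * (1 - L) / 2 + τ ^ 3 * L ^ 2 * (1 - L) / 2 + τ ^ 4 * L ^ 3 / 4 := by ring
        have hL' : 0 ≤ 1 - L := by linarith
        have : 0 ≤ τ ^ 2 * L * (1 - L) / 2 + τ ^ 3 * L ^ 2 * (1 - L) / 2 + τ ^ 4 * L ^ 3 / 4 := by
          positivity
        linarith
    _ ≤ _ := mul_le_mul h2 he (by positivity) (h3.trans h2)

/-- With `v = y / Q` and `J = r² (y Q' - y' Q)` for each solution, the Wronskian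
`r² (y₁ y₂' - y₂ y₁')` is `-v₁ J₂ + v₂ J₁`; it is constant in `r` and evaluated at `R`. -/
lemma wronskian_bound (h : GS Q Qd) {lam τ : ℝ} (hτ0 : 0 < τ) (hτ1 : τ ≤ 1)
    (hlam : lam = 2 * τ - τ ^ 2) {y₁ yd₁ y₂ yd₂ : ℝ → ℝ} (e₁ : ES Q lam y₁ yd₁)
    (hb : ∃ C : ℝ, ∀ r ∈ Ioc (0 : ℝ) 1, |y₁ r| ≤ C)
    (hlim₁ : Tendsto y₁ (nhdsWithin 0 (Ioi 0)) (nhds 1)) (e₂ : ES Q lam y₂ yd₂)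
    (hlim₂ : Tendsto (fun r => r * exp ((1 - τ) * r) * y₂ r) atTop (nhds 1)) :
    17 / 1000 * lam ≤ y₁ (5 / 2) * yd₂ (5 / 2) - y₂ (5 / 2) * yd₁ (5 / 2) := by
  obtain ⟨a, p, ho⟩ := exists_origin h
  obtain ⟨R, hR0, hRY, hY, hA, hB, hz1, -, hR, hR'⟩ := exists_R h ho
  have hl : 0 < lam := by rw [hlam]; nlinarith
  have hl1 : lam ≤ 1 := by rw [hlam]; nlinarith [sq_nonneg (1 - τ)]
  have ha0 := ho.a_pos
  have hQ := h.pos R hR0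
  obtain ⟨h1, h2⟩ := y₁_bounds h ho hl hl1 e₁ hb hlim₁ hR0 (by linarith) hY hA hB
  have h3 := y₂_lower h hR hR' hRY hτ0.le hτ1 hlam e₂ hlim₂
  have h4 := y₂_flux h hR hR' hRY hl e₂ (fun r hr => by
    have h5 := (exp_pos _).trans_le (h3 r hr)
    exact (pos_of_mul_pos_right h5 (by linarith)).le)
  have h5 := h3 R le_rfl
  have ht := tau_bound hR hR' hτ0.le hτ1
  rw [← hlam] at ht
  have hn := numeric_bound (φ := R * Q R) hR hR' (mul_pos hR0 hQ) (by linarith)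
  have hψ : 0.8906 ≤ pev SA (yv Q Qd R) := by rw [hRY]; norm_num [pev, SA]
  have ha := a_le h ho
  -- `r² (y₁ y₂' - y₂ y₁')` is constant
  have hwd : ∀ r, 0 < r → HasDerivAt (fun r => y₁ r * (r ^ 2 * yd₂ r) - y₂ r * (r ^ 2 * yd₁ r)) 0 r :=
    fun r hr => (((e₁.d1 r hr).mul (e₂.flux hr)).sub ((e₂.d1 r hr).mul (e₁.flux hr))).congr_deriv
      (by ring)
  have hconst := mono_of_deriv (show R ≤ 5 / 2 by linarith)
    (fun x hx => hwd x (hR0.trans_le hx.1)) (fun x hx => le_rfl)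
  have ee : lU Q τ R - (1 + τ) * (log (R * Q R) + R + (1 - gv Q Qd R) / 2)
      = τ * (R - (1 - 0.6 / R) / 2) + -(R + (1 - 0.6 / R) / 2) := by
    rw [gv_R hRY]; unfold lU; ring
  rw [ee, exp_add] at h5
  set K := exp (τ * (R - (1 - 0.6 / R) / 2))
  set N := exp (-(R + (1 - 0.6 / R) / 2))
  have hN : 0 < N := exp_pos _
  have hK : 0 < K := exp_pos _
  set c := 1 - lam * (0.9052 * R ^ 2 / 2)
  have hc : 0 < c := by
    by_contra hcon
    push Not at hcon
    have := mul_nonpos_of_nonpos_of_nonneg hcon hK.le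
    linarith
  obtain ⟨v₁, hv₁⟩ : ∃ v, v = y₁ R / Q R := ⟨_, rfl⟩
  obtain ⟨v₂, hv₂⟩ : ∃ v, v = y₂ R / Q R := ⟨_, rfl⟩
  obtain ⟨φ, hφ⟩ : ∃ v, v = R * Q R := ⟨_, rfl⟩
  have hφ0 : 0 < φ := by rw [hφ]; positivity
  have h6 : R * y₂ R = φ * v₂ := by rw [hφ, hv₂]; field_simp
  rw [h6] at h5
  rw [← hv₁] at h1 h2
  rw [← hv₂] at h4
  rw [← hφ] at h2 h4 hn
  have hv₁0 : 0 < v₁ := (div_pos hc ha0).trans_le h1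
  have hv₂0 : 0 < v₂ := pos_of_mul_pos_right ((mul_pos hK hN).trans_le h5) hφ0.le
  have hw : y₁ R * (R ^ 2 * yd₂ R) - y₂ R * (R ^ 2 * yd₁ R)
      = v₁ * -(R ^ 2 * (y₂ R * Qd R - yd₂ R * Q R))
        + v₂ * (R ^ 2 * (y₁ R * Qd R - yd₁ R * Q R)) := by
    rw [hv₁, hv₂]
    field_simp
    ring
  have h7 : lam * v₁ * (φ * v₂) * (φ * (1 / 2 + R * 0.8906))
      ≤ y₁ R * (R ^ 2 * yd₂ R) - y₂ R * (R ^ 2 * yd₁ R) := by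
    rw [hw]
    have g1 := mul_le_mul_of_nonneg_left h4 hv₁0.le
    have g2 := mul_le_mul_of_nonneg_left h2 hv₂0.le
    have g3 : v₂ * (lam * v₁ * (R * φ ^ 2 * 0.8906))
        ≤ v₂ * (lam * v₁ * (R * φ ^ 2 * pev SA (yv Q Qd R))) := by gcongr
    linarith
  have h8 : lam * (c / a) * (K * N) * (φ * (1 / 2 + R * 0.8906))
      ≤ lam * v₁ * (φ * v₂) * (φ * (1 / 2 + R * 0.8906)) := by gcongr
  have h9 : lam / a * 0.4662 ≤ lam * (c / a) * (K * N) * (φ * (1 / 2 + R * 0.8906)) := by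
    have g1 : (1 : ℝ) * 0.4662 ≤ (c * K) * (N * φ * (1 / 2 + R * 0.8906)) :=
      mul_le_mul ht hn (by norm_num) (by positivity)
    have g2 := mul_le_mul_of_nonneg_left g1 (show 0 ≤ lam / a by positivity)
    calc lam / a * 0.4662 = lam / a * (1 * 0.4662) := by ring
      _ ≤ _ := g2
      _ = _ := by ring
  have h10 : lam * 0.10625 ≤ lam / a * 0.4662 := by
    rw [div_mul_eq_mul_div, le_div_iff₀ ha0]
    nlinarith
  linarith

lemma hasDerivAt_of_contDiffOn {f : ℝ → ℝ} (hf : ContDiffOn ℝ 2 f (Ioi 0)) {r : ℝ} (hr : 0 < r) :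
    HasDerivAt f (deriv f r) r ∧ HasDerivAt (deriv f) (deriv (deriv f) r) r := by
  have h2 : ContDiffOn ℝ 1 (deriv f) (Ioi 0) :=
    ((contDiffOn_succ_iff_deriv_of_isOpen (n := 1) isOpen_Ioi).1 (by simpa [one_add_one_eq_two] using hf)).2.2
  exact ⟨((hf.differentiableOn (by norm_num)).differentiableAt (Ioi_mem_nhds hr)).hasDerivAt,
    ((h2.differentiableOn (by norm_num)).differentiableAt (Ioi_mem_nhds hr)).hasDerivAt⟩

end LMinus

theorem L_minus_wronskian_lower_bound
    (Q : ℝ → ℝ)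
    (hQreg : ContDiffOn ℝ 2 Q (Set.Ioi 0))
    (hQpos : ∀ r > (0:ℝ), 0 < Q r)
    (hQode : ∀ r > (0:ℝ), -(deriv (deriv Q) r) - (2 / r) * deriv Q r + Q r - (Q r) ^ 3 = 0)
    (hQbdd : ∃ C : ℝ, ∀ r ∈ Set.Ioc (0:ℝ) 1, |Q r| ≤ C)
    (hQlim : Filter.Tendsto Q Filter.atTop (nhds 0))
    (lam : ℝ) (hlam : lam ∈ Set.Ioc (0:ℝ) 1)
    (σ : ℝ) (hσ : σ = Real.sqrt (1 - lam))
    (y₁ y₂ : ℝ → ℝ)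
    (hy₁reg : ContDiffOn ℝ 2 y₁ (Set.Ioi 0))
    (hy₁ode : ∀ r > (0:ℝ),
      -(deriv (deriv y₁) r) - (2 / r) * deriv y₁ r + (1 - lam - (Q r) ^ 2) * y₁ r = 0)
    (hy₁bdd : ∃ C : ℝ, ∀ r ∈ Set.Ioc (0:ℝ) 1, |y₁ r| ≤ C)
    (hy₁lim : Filter.Tendsto y₁ (nhdsWithin 0 (Set.Ioi 0)) (nhds 1))
    (hy₂reg : ContDiffOn ℝ 2 y₂ (Set.Ioi 0))
    (hy₂ode : ∀ r > (0:ℝ),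
      -(deriv (deriv y₂) r) - (2 / r) * deriv y₂ r + (1 - lam - (Q r) ^ 2) * y₂ r = 0)
    (hy₂lim : Filter.Tendsto (fun r => r * Real.exp (σ * r) * y₂ r) Filter.atTop (nhds 1)) :
    (17 / 1000) * lam ≤ |y₁ (5/2) * deriv y₂ (5/2) - y₂ (5/2) * deriv y₁ (5/2)| := by
  have hGS : LMinus.GS Q (deriv Q) :=
    { pos := hQpos
      d1 := fun r hr => (LMinus.hasDerivAt_of_contDiffOn hQreg hr).1
      d2 := fun r hr => (LMinus.hasDerivAt_of_contDiffOn hQreg hr).2.congr_deriv (by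
        linarith [hQode r hr])
      bdd := hQbdd
      lim := hQlim }
  have hES : ∀ y : ℝ → ℝ, ContDiffOn ℝ 2 y (Ioi 0) → (∀ r > (0:ℝ),
      -(deriv (deriv y) r) - (2 / r) * deriv y r + (1 - lam - (Q r) ^ 2) * y r = 0) →
      LMinus.ES Q lam y (deriv y) := fun y hy hode =>
    { d1 := fun r hr => (LMinus.hasDerivAt_of_contDiffOn hy hr).1
      d2 := fun r hr => (LMinus.hasDerivAt_of_contDiffOn hy hr).2.congr_deriv (by
        linarith [hode r hr]) }
  have hσ0 : 0 ≤ σ := hσ ▸ Real.sqrt_nonneg _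
  have hσ2 : σ ^ 2 = 1 - lam := by rw [hσ, Real.sq_sqrt (by linarith [hlam.2])]
  have hσ1 : σ < 1 := by nlinarith [hlam.1]
  refine (LMinus.wronskian_bound hGS (τ := 1 - σ) (by linarith) (by linarith)
    (by linear_combination hσ2) (hES y₁ hy₁reg hy₁ode) hy₁bdd hy₁lim (hES y₂ hy₂reg hy₂ode)
    ?_).trans (le_abs_self _)
  simpa only [sub_sub_cancel] using hy₂lim
end
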